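/- Let Ω ⊂ ℝ^d be compact, 0 < α < 1, and let ℱ(ρ,q) = ∫₀¹ F(ρ_t, q_t) dt be the branched transport functional on the class 𝒟 of pairs (ρ,q) with ρ ∈ C([0,1]; 𝒫(Ω)), q ∈ L¹([0,1]; ℳ(Ω;ℝ^d)) satisfying the continuity equation ∂_t ρ + div_x q = 0 with no-flux boundary conditions. If (ρⁿ,qⁿ) is a sequence in 𝒟 with ℱ(ρⁿ,qⁿ) ≤ C for a constant C, then, up to a time reparametrization of each pair, the sequence (ρⁿ,qⁿ) is τ-compact, i.e. it admits a subsequence converging weak* as measures on [0,1]×Ω to some (ρ,q) ∈ 𝒟 with sup{ F(ρⁿ_t, qⁿ_t) : n ∈ ℕ, t ∈ [0,1] } < +∞. -/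

import Mathlib

/-!
If `q = v ρ`, the integrand is `F(ρ,q) = ∫ |v| ρ({x})^(α-1) dρ` (`Ga_eq_vCost`, `Fc_eq_vCost`). Hence
it is positively homogeneous of degree one in `q`, and it dominates the mass `∫ |v| dρ` of the flux.
By homogeneity a time change `φ` replaces `F(ρ_t,q_t)` by `φ'(t) F(ρ_{φ(t)},q_{φ(t)})`, so slowing the
clock down where `F` is large makes the integrand bounded. Boundedness of the flux then gives
compactness.

**The time change.** The bound is wanted at every `t`, with `φ` differentiable everywhere, although
`F` is controlled only off a null set of times and the primitive of an integrable function is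
differentiable only almost everywhere. So `φ` is the inverse of a multiple of
`H(s) = s + ∫₀ˢ f + ∑ⱼ ∫₀ˢ wⱼ`, where `f` is a majorant of `F(ρ_t,q_t)` and the continuous weights `wⱼ`
are such that `∑ⱼ wⱼ` diverges on a null set containing all the bad times. Where the series diverges
`H` has infinite slope and `φ' = 0`; where it converges, `H' = 1 + f + ∑ⱼ wⱼ ≥ f`, so `φ' f ∘ φ` is at
most `H(1) ≤ ∫ f + 2`. Differentiability at the points of convergence needs the means of `wⱼ` over
segments ending at `s` to be at most `wⱼ(s)` plus a summable error. Averaging `N` iterates of the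
one-dimensional maximal operator gives the error `1/N` (`exists_weight`, `exists_weights`,
`exists_time_change`). The continuity equation survives the change of variables (`VCont.reparam`), and
`exists_reparam` collects the result.

**Compactness.** Tested against a `C¹` function of `x`, a curve with flux of mass at most `M` is
Lipschitz in time with a constant depending only on `M` and the function (`BCurve.lipschitz`), so Ascoli's
theorem yields a limit curve `ρ` (`ascoli`). The positive and negative parts of the components of the
fluxes are kernels of mass at most `M`; stored as Markov kernels on a doubled space they define
probability measures on a compact set with fixed time marginal. A weak limit has the same time
marginal, hence disintegrates into a kernel (`kernel_compact`). The continuity equation is linear and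
passes to the limit (`exists_limit`).
-/

open MeasureTheory Set Filter
open scoped NNReal ENNReal Classical

/-- Euclidean space `ℝ^d`. -/
abbrev Euc (d : ℕ) := EuclideanSpace ℝ (Fin d)

/-- Integral of a function against a signed measure, via the Jordan decomposition. -/
noncomputable def sInt {E : Type*} [MeasurableSpace E] (f : E → ℝ) (s : SignedMeasure E) :
    ℝ :=
  ∫ x, f x ∂s.toJordanDecomposition.posPart -
    ∫ x, f x ∂s.toJordanDecomposition.negPart

/-- The concentration functional `G_α(λ) = ∑ᵢ |λᵢ|^α` if `λ = ∑ᵢ λᵢ δ_{xᵢ}` is purely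
atomic, and `+∞` otherwise. -/
noncomputable def Ga {E : Type*} [MeasurableSpace E] (α : ℝ) (μ : Measure E) : ℝ≥0∞ :=
  if ∃ s : Set E, s.Countable ∧ μ sᶜ = 0 then
    ∑' x : {x : E // μ {x} ≠ 0}, μ {x.1} ^ α
  else ⊤

/-- The branched-transport integrand `F(ρ,q) = G_α(|v|^{1/α}·ρ)` if `q = v·ρ` is
absolutely continuous with respect to `ρ` with (vector) density `v`, and `+∞` otherwise
(the infimum over an empty family being `+∞`; the density is `ρ`-a.e. unique, so all
representatives give the same value). -/
noncomputable def Fc {d : ℕ} (α : ℝ) (ρ : Measure (Euc d))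
    (q : Fin d → SignedMeasure (Euc d)) : ℝ≥0∞ :=
  ⨅ v ∈ {v : Euc d → Euc d |
      (∀ i, Integrable (fun x => v x i) ρ) ∧
      ∀ i, ∀ s : Set (Euc d), MeasurableSet s → q i s = ∫ x in s, v x i ∂ρ},
    Ga α (ρ.withDensity fun x => ENNReal.ofReal (‖v x‖ ^ (1 / α)))

/-- Total variation of the `ℝ^m`-valued measure `σ` (given through its `m` signed-measure
components): the supremum over finite measurable partitions of the sums of the Euclidean
norms of the values of `σ`. -/
noncomputable def tvVec {m : ℕ} {E : Type*} [MeasurableSpace E]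
    (σ : Fin m → SignedMeasure E) : ℝ≥0∞ :=
  ⨆ (n : ℕ) (A : Fin n → Set E) (_ : ∀ k, MeasurableSet (A k))
    (_ : Pairwise (Function.onFun Disjoint A)),
    ∑ k, ENNReal.ofReal (Real.sqrt (∑ i, σ i (A k) ^ 2))

/-- The continuity equation `∂ₜρ + div_x q = 0` on `[0,1] × Ω` with no-flux boundary
conditions, in the sense of distributions: for every `C¹` test function `φ(t,x)` vanishing
at `t = 0` and `t = 1`, `∫₀¹ [∫ ∂ₜφ dρₜ + ∫ D_xφ · dqₜ] dt = 0`. -/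
noncomputable def ContEq {d : ℕ} (ρ : ℝ → Measure (Euc d))
    (q : ℝ → Fin d → SignedMeasure (Euc d)) : Prop :=
  ∀ φ : ℝ × Euc d → ℝ, ContDiff ℝ 1 φ → (∀ x, φ (0, x) = 0) → (∀ x, φ (1, x) = 0) →
    (∫ t in (0:ℝ)..1,
      ((∫ x, fderiv ℝ φ (t, x) ((1 : ℝ), (0 : Euc d)) ∂(ρ t)) +
        ∑ i, sInt (fun x => fderiv ℝ φ (t, x) ((0 : ℝ), EuclideanSpace.single i 1))
          (q t i))) = 0

/-- The class `𝒟`: pairs `(ρ, q)` with `ρ ∈ C([0,1]; 𝒫(Ω))` (probability measures on `Ω`,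
weakly* continuous in time) and `q ∈ L¹([0,1]; ℳ(Ω; ℝ^d))`, satisfying the continuity
equation with no-flux boundary conditions. -/
def MemD {d : ℕ} (Ω : Set (Euc d)) (ρ : ℝ → Measure (Euc d))
    (q : ℝ → Fin d → SignedMeasure (Euc d)) : Prop :=
  (∀ t ∈ Icc (0:ℝ) 1, IsProbabilityMeasure (ρ t) ∧ ρ t Ωᶜ = 0) ∧
  (∀ f : Euc d → ℝ, Continuous f →
    ContinuousOn (fun t => ∫ x, f x ∂(ρ t)) (Icc 0 1)) ∧
  (∀ t ∈ Icc (0:ℝ) 1, ∀ i,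
    (q t i).toJordanDecomposition.posPart Ωᶜ = 0 ∧
    (q t i).toJordanDecomposition.negPart Ωᶜ = 0) ∧
  (∀ i, ∀ s : Set (Euc d), MeasurableSet s → Measurable fun t => q t i s) ∧
  (∫⁻ t in Icc (0:ℝ) 1, tvVec (q t)) < ⊤ ∧
  ContEq ρ q

/-- The branched transport functional `ℱ(ρ,q) = ∫₀¹ F(ρₜ,qₜ) dt`. -/
noncomputable def BigF {d : ℕ} (α : ℝ) (ρ : ℝ → Measure (Euc d))
    (q : ℝ → Fin d → SignedMeasure (Euc d)) : ℝ≥0∞ :=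
  ∫⁻ t in Icc (0:ℝ) 1, Fc α (ρ t) (q t)

/-- `τ`-convergence of a sequence `(ρⁿ,qⁿ)` to `(ρ,q)`: weak* convergence of the pairs as
measures on `[0,1] × Ω`, together with `sup { F(ρⁿₜ,qⁿₜ) : n ∈ ℕ, t ∈ [0,1] } < +∞`. -/
def TauConv {d : ℕ} (α : ℝ) (ρn : ℕ → ℝ → Measure (Euc d))
    (qn : ℕ → ℝ → Fin d → SignedMeasure (Euc d))
    (ρ : ℝ → Measure (Euc d)) (q : ℝ → Fin d → SignedMeasure (Euc d)) : Prop :=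
  (∀ φ : ℝ × Euc d → ℝ, Continuous φ →
    Tendsto (fun n => ∫ t in (0:ℝ)..1, ∫ x, φ (t, x) ∂(ρn n t)) atTop
      (nhds (∫ t in (0:ℝ)..1, ∫ x, φ (t, x) ∂(ρ t)))) ∧
  (∀ i : Fin d, ∀ φ : ℝ × Euc d → ℝ, Continuous φ →
    Tendsto (fun n => ∫ t in (0:ℝ)..1, sInt (fun x => φ (t, x)) (qn n t i)) atTop
      (nhds (∫ t in (0:ℝ)..1, sInt (fun x => φ (t, x)) (q t i)))) ∧
  ∃ M : ℝ≥0∞, M < ⊤ ∧ ∀ n, ∀ t ∈ Icc (0:ℝ) 1, Fc α (ρn n t) (qn n t) ≤ M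

open scoped Topology

/-! ### Maximal averages on the line -/

/-- The mean of `u` over the segment between `s` and `y`; it is `u s` when `y = s`, which makes it
jointly continuous in `s` and `y` for continuous `u`. -/
noncomputable def avgQ (u : ℝ → ℝ) (s y : ℝ) : ℝ := ∫ θ in (0:ℝ)..1, u (s + (y - s) * θ)

/-- The maximal function of `u` at `s`: the supremum of the means of `u` over the segments joining
`s` to a point of `[0,1]`. -/
noncomputable def maxF (u : ℝ → ℝ) (s : ℝ) : ℝ := sSup (avgQ u s '' Icc 0 1)

lemma continuous_avgQ {u : ℝ → ℝ} (hu : Continuous u) :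
    Continuous (Function.uncurry (avgQ u)) := by
  have : Continuous (fun p : ℝ × ℝ => ∫ θ in (0:ℝ)..1, u (p.1 + (p.2 - p.1) * θ)) := by
    apply intervalIntegral.continuous_parametric_intervalIntegral_of_continuous'
    simp only [Function.uncurry_def]
    fun_prop
  exact this

lemma mul_avgQ (u : ℝ → ℝ) (s y : ℝ) : (y - s) * avgQ u s y = ∫ r in s..y, u r := by
  unfold avgQ
  rw [intervalIntegral.mul_integral_comp_add_mul]
  simp

lemma avgQ_self (u : ℝ → ℝ) (s : ℝ) : avgQ u s s = u s := by
  simp [avgQ]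

lemma avgQ_nonneg {u : ℝ → ℝ} (h0 : ∀ x, 0 ≤ u x) (s y : ℝ) : 0 ≤ avgQ u s y :=
  intervalIntegral.integral_nonneg (by norm_num) fun _ _ => h0 _

lemma avgQ_le_one {u : ℝ → ℝ} (hu : Continuous u) (h1 : ∀ x, u x ≤ 1) (s y : ℝ) :
    avgQ u s y ≤ 1 := by
  have : avgQ u s y ≤ ∫ θ in (0:ℝ)..1, (1:ℝ) := by
    apply intervalIntegral.integral_mono_on (by norm_num)
    · exact (Continuous.intervalIntegrable (by fun_prop) _ _)
    · simp
    · intro x _; exact h1 _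
  simpa using this

lemma continuous_maxF {u : ℝ → ℝ} (hu : Continuous u) : Continuous (maxF u) :=
  isCompact_Icc.continuous_sSup (continuous_avgQ hu)

lemma bddAbove_avgQ {u : ℝ → ℝ} (hu : Continuous u) (h1 : ∀ x, u x ≤ 1) (s : ℝ) :
    BddAbove (avgQ u s '' Icc 0 1) := by
  refine ⟨1, ?_⟩
  rintro _ ⟨y, _, rfl⟩
  exact avgQ_le_one hu h1 s y

lemma avgQ_le_maxF {u : ℝ → ℝ} (hu : Continuous u) (h1 : ∀ x, u x ≤ 1) (s : ℝ) {y : ℝ}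
    (hy : y ∈ Icc (0:ℝ) 1) : avgQ u s y ≤ maxF u s :=
  le_csSup (bddAbove_avgQ hu h1 s) ⟨y, hy, rfl⟩

lemma le_maxF {u : ℝ → ℝ} (hu : Continuous u) (h1 : ∀ x, u x ≤ 1) {s : ℝ}
    (hs : s ∈ Icc (0:ℝ) 1) : u s ≤ maxF u s := by
  simpa [avgQ_self] using avgQ_le_maxF hu h1 s hs

lemma maxF_nonneg {u : ℝ → ℝ} (hu : Continuous u) (h0 : ∀ x, 0 ≤ u x) (h1 : ∀ x, u x ≤ 1)
    (s : ℝ) : 0 ≤ maxF u s :=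
  (avgQ_nonneg h0 s 0).trans (avgQ_le_maxF hu h1 s (by simp))

lemma maxF_le_one {u : ℝ → ℝ} (hu : Continuous u) (h1 : ∀ x, u x ≤ 1) (s : ℝ) :
    maxF u s ≤ 1 := by
  apply csSup_le ((nonempty_Icc.2 zero_le_one).image _)
  rintro _ ⟨y, _, rfl⟩
  exact avgQ_le_one hu h1 s y

/-- The weak-type `(1,1)` estimate for the maximal function, by Vitali covering. -/
lemma weak_type {u : ℝ → ℝ} (hu : Continuous u) (h0 : ∀ x, 0 ≤ u x)
    {l : ℝ} (hl : 0 < l) :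
    volume.real {s ∈ Icc (0:ℝ) 1 | l < maxF u s} ≤ 5 / l * ∫ r in (0:ℝ)..1, u r := by
  set E := {s ∈ Icc (0:ℝ) 1 | l < maxF u s} with hE
  -- by continuity of the means the segment may be taken nondegenerate, as Vitali covering requires
  have key : ∀ s ∈ E, ∃ y ∈ Icc (0:ℝ) 1, y ≠ s ∧ l < avgQ u s y := by
    rintro s ⟨hs, hls⟩
    obtain ⟨_, ⟨y, hy, rfl⟩, hy2⟩ := exists_lt_of_lt_csSup ((nonempty_Icc.2 zero_le_one).image _) hls
    by_cases hys : y = s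
    · subst hys
      have hc : Continuous (fun z => avgQ u y z) :=
        (continuous_avgQ hu).comp (Continuous.prodMk_right y)
      have ho : IsOpen {z | l < avgQ u y z} := isOpen_lt continuous_const hc
      have hmem : {z | l < avgQ u y z} ∈ 𝓝 y := ho.mem_nhds hy2
      have hne : (𝓝[Icc (0:ℝ) 1 \ {y}] y).NeBot := by
        rcases eq_or_lt_of_le hs.1 with h | h
        · have : (𝓝[Ioc y 1] y).NeBot := by
            rw [nhdsWithin_Ioc_eq_nhdsGT (by linarith)]; infer_instance
          exact this.mono (nhdsWithin_mono _ fun z hz => ⟨⟨by linarith [hz.1], hz.2⟩, ne_of_gt hz.1⟩)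
        · have : (𝓝[Ico 0 y] y).NeBot := by
            rw [nhdsWithin_Ico_eq_nhdsLT h]; infer_instance
          exact this.mono (nhdsWithin_mono _ fun z hz => ⟨⟨hz.1, by linarith [hz.2, hs.2]⟩, ne_of_lt hz.2⟩)
      obtain ⟨z, hz1, hz2⟩ := hne.nonempty_of_mem
        (inter_mem (mem_nhdsWithin_of_mem_nhds hmem) self_mem_nhdsWithin)
      exact ⟨z, hz2.1, hz2.2, hz1⟩
    · exact ⟨y, hy, hys, hy2⟩
  choose! Y hY hYs hYl using key
  set c : ℝ → ℝ := fun s => (s + Y s) / 2 with hc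
  set R : ℝ → ℝ := fun s => |Y s - s| / 2 with hR
  have hball : ∀ s, Metric.closedBall (c s) (R s) = uIcc s (Y s) := by
    intro s
    rw [Real.closedBall_eq_Icc, uIcc]
    rcases le_total s (Y s) with h | h
    · simp only [hc, hR, abs_of_nonneg (sub_nonneg.2 h), inf_eq_left.2 h, sup_eq_right.2 h]
      congr 1 <;> ring
    · simp only [hc, hR, abs_of_nonpos (sub_nonpos.2 h), inf_eq_right.2 h, sup_eq_left.2 h]
      congr 1 <;> ring
  have hRpos : ∀ s ∈ E, 0 < R s := fun s hs => by
    have := abs_pos.2 (sub_ne_zero.2 (hYs s hs)); simp only [hR]; linarith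
  have hRle : ∀ s ∈ E, R s ≤ 1 := fun s hs => by
    have : |Y s - s| ≤ 1 := by
      rw [abs_le]; constructor <;> linarith [(hY s hs).1, (hY s hs).2, hs.1.1, hs.1.2]
    simp only [hR]; linarith
  obtain ⟨T, hTE, hdisj, hcov⟩ := Vitali.exists_disjoint_subfamily_covering_enlargement_closedBall
    E c R 1 hRle 5 (by norm_num)
  have hTc : T.Countable := by
    apply hdisj.countable_of_nonempty_interior
    intro s hs
    rw [interior_closedBall _ (hRpos s (hTE hs)).ne']
    exact Metric.nonempty_ball.2 (hRpos s (hTE hs))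
  have hsub : E ⊆ ⋃ s ∈ T, Metric.closedBall (c s) (5 * R s) := by
    intro s hs
    obtain ⟨b, hb, hb2⟩ := hcov s hs
    refine mem_biUnion hb (hb2 ?_)
    rw [hball]; exact left_mem_uIcc
  have hseg : ∀ s ∈ E, ENNReal.ofReal (l * (2 * R s)) ≤
      ∫⁻ r in Metric.closedBall (c s) (R s), ENNReal.ofReal (u r) := by
    intro s hs
    have hi : IntegrableOn u (uIcc s (Y s)) := hu.continuousOn.integrableOn_compact isCompact_uIcc
    rw [hball, ← ofReal_integral_eq_lintegral_ofReal hi (ae_of_all _ h0)]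
    apply ENNReal.ofReal_le_ofReal
    have h2 := mul_avgQ u s (Y s)
    have h3 := hYl s hs
    rw [uIcc, integral_Icc_eq_integral_Ioc]
    rcases le_total s (Y s) with h | h
    · rw [inf_eq_left.2 h, sup_eq_right.2 h, ← intervalIntegral.integral_of_le h, ← h2]
      simp only [hR, abs_of_nonneg (sub_nonneg.2 h)]
      nlinarith
    · rw [inf_eq_right.2 h, sup_eq_left.2 h, ← intervalIntegral.integral_of_le h,
        intervalIntegral.integral_symm, ← h2]
      simp only [hR, abs_of_nonpos (sub_nonpos.2 h)]
      nlinarith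
  have hcalc : volume E ≤ ENNReal.ofReal (5 / l) * ∫⁻ r in Icc (0:ℝ) 1, ENNReal.ofReal (u r) := by
    calc volume E ≤ volume (⋃ s ∈ T, Metric.closedBall (c s) (5 * R s)) := measure_mono hsub
      _ ≤ ∑' s : T, volume (Metric.closedBall (c s) (5 * R s)) := measure_biUnion_le _ hTc _
      _ ≤ ∑' s : T, ENNReal.ofReal (5 / l) *
            ∫⁻ r in Metric.closedBall (c s) (R s), ENNReal.ofReal (u r) := by
          refine ENNReal.tsum_le_tsum fun s => ?_
          rw [Real.volume_closedBall]
          refine le_trans (le_of_eq ?_) (mul_le_mul_right (hseg s (hTE s.2)) _)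
          rw [← ENNReal.ofReal_mul (by positivity)]
          congr 1; field_simp
      _ = ENNReal.ofReal (5 / l) *
            ∫⁻ r in ⋃ s ∈ T, Metric.closedBall (c s) (R s), ENNReal.ofReal (u r) := by
          rw [ENNReal.tsum_mul_left, lintegral_biUnion hTc (fun s _ => Metric.isClosed_closedBall.measurableSet) hdisj]
      _ ≤ _ := by
          gcongr
          refine iUnion₂_subset fun s hs => ?_
          rw [hball]
          exact uIcc_subset_Icc (hTE hs).1 (hY s (hTE hs))
  have hi : IntegrableOn u (Icc 0 1) := hu.continuousOn.integrableOn_compact isCompact_Icc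
  rw [← ofReal_integral_eq_lintegral_ofReal hi (ae_of_all _ h0), ← ENNReal.ofReal_mul (by positivity),
    integral_Icc_eq_integral_Ioc, ← intervalIntegral.integral_of_le zero_le_one] at hcalc
  exact ENNReal.toReal_le_of_le_ofReal
    (mul_nonneg (by positivity) (intervalIntegral.integral_nonneg zero_le_one fun _ _ => h0 _)) hcalc

/-- Since the maximal function is at most `1`, the weak-type estimate bounds its integral. -/
lemma integral_maxF_le {u : ℝ → ℝ} (hu : Continuous u) (h0 : ∀ x, 0 ≤ u x) (h1 : ∀ x, u x ≤ 1)
    {l : ℝ} (hl : 0 < l) :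
    ∫ r in (0:ℝ)..1, maxF u r ≤ l + 5 / l * ∫ r in (0:ℝ)..1, u r := by
  refine le_trans ?_ (add_le_add le_rfl (weak_type hu h0 hl))
  set E := {s ∈ Icc (0:ℝ) 1 | l < maxF u s} with hE
  have hcm := continuous_maxF hu
  have hEf : volume (E ∩ Icc 0 1) < ∞ :=
    (measure_mono inter_subset_right).trans_lt (by simp)
  have hEm : MeasurableSet E := measurableSet_Icc.inter (measurableSet_lt measurable_const hcm.measurable)
  rw [intervalIntegral.integral_of_le zero_le_one, ← integral_Icc_eq_integral_Ioc]
  have : ∫ r in Icc (0:ℝ) 1, maxF u r ≤ ∫ r in Icc (0:ℝ) 1, (l + E.indicator (fun _ => (1:ℝ)) r) := by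
    apply setIntegral_mono_on
    · exact hcm.continuousOn.integrableOn_compact isCompact_Icc
    · apply Integrable.add (by simp)
      exact (integrable_indicator_iff hEm).2 (by simpa [hEm] using hEf)
    · exact measurableSet_Icc
    · intro x hx
      by_cases h : x ∈ E
      · simp only [indicator_of_mem h]; linarith [maxF_le_one hu h1 x]
      · simp only [indicator_of_notMem h]
        have : ¬ l < maxF u x := fun h' => h ⟨hx, h'⟩
        linarith
  refine this.trans (le_of_eq ?_)
  rw [integral_add (by simp) ((integrable_indicator_iff hEm).2 (by simpa [hEm] using hEf))]
  rw [integral_indicator hEm]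
  have : E ∩ Icc 0 1 = E := inter_eq_left.2 fun x hx => hx.1
  simp [Measure.real, Measure.restrict_apply hEm, this]

/-- For given `ε` and `N`, the first `N` iterates of the maximal operator have integral at most
`ε` as soon as the initial function has small integral. -/
lemma iterate_small (N : ℕ) {ε : ℝ} (hε : 0 < ε) : ∃ δ > 0, ∀ u : ℝ → ℝ, Continuous u →
    (∀ x, 0 ≤ u x) → (∀ x, u x ≤ 1) → ∫ r in (0:ℝ)..1, u r ≤ δ →
    ∀ m ≤ N, ∫ r in (0:ℝ)..1, maxF^[m] u r ≤ ε := by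
  induction N with
  | zero =>
    refine ⟨ε, hε, fun u _ _ _ h m hm => ?_⟩
    obtain rfl : m = 0 := by omega
    simpa using h
  | succ N ih =>
    obtain ⟨δ, hδ, h⟩ := ih
    refine ⟨min ε (δ ^ 2 / 20), by positivity, fun u hu h0 h1 hi m hm => ?_⟩
    rcases m with _ | m
    · simpa using hi.trans (min_le_left _ _)
    · rw [Function.iterate_succ_apply]
      refine h _ (continuous_maxF hu) (maxF_nonneg hu h0 h1) (maxF_le_one hu h1) ?_ m (by omega)
      refine (integral_maxF_le hu h0 h1 (half_pos hδ)).trans ?_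
      have h2 : 5 / (δ / 2) * ∫ r in (0:ℝ)..1, u r ≤ 5 / (δ / 2) * (δ ^ 2 / 20) :=
        mul_le_mul_of_nonneg_left (hi.trans (min_le_right _ _)) (by positivity)
      have h3 : 5 / (δ / 2) * (δ ^ 2 / 20) = δ / 2 := by field_simp; norm_num
      linarith

lemma iterate_props {u : ℝ → ℝ} (hu : Continuous u) (h0 : ∀ x, 0 ≤ u x) (h1 : ∀ x, u x ≤ 1)
    (m : ℕ) : Continuous (maxF^[m] u) ∧ (∀ x, 0 ≤ maxF^[m] u x) ∧ (∀ x, maxF^[m] u x ≤ 1) ∧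
      ∀ x ∈ Icc (0:ℝ) 1, u x ≤ maxF^[m] u x := by
  induction m with
  | zero => exact ⟨hu, h0, h1, fun _ _ => le_rfl⟩
  | succ m ih =>
    obtain ⟨a, b, c, e⟩ := ih
    rw [Function.iterate_succ_apply']
    exact ⟨continuous_maxF a, maxF_nonneg a b c, maxF_le_one a c,
      fun x hx => (e x hx).trans (le_maxF a c hx)⟩

lemma avgQ_sum {ι : Type*} (t : Finset ι) (F : ι → ℝ → ℝ) (hF : ∀ i, Continuous (F i)) (s y : ℝ) :
    avgQ (fun x => ∑ i ∈ t, F i x) s y = ∑ i ∈ t, avgQ (F i) s y := by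
  unfold avgQ
  rw [intervalIntegral.integral_finsetSum]
  intro i _
  exact Continuous.intervalIntegrable ((hF i).comp (by fun_prop)) _ _

/-- Averaging the first `N` iterates of the maximal operator gives a function which controls its
own averages up to the additive error `1 / N`. -/
lemma exists_weight (N : ℕ) (hN : 0 < N) {ε : ℝ} (hε : 0 < ε) : ∃ δ > 0, ∀ u : ℝ → ℝ,
    Continuous u → (∀ x, 0 ≤ u x) → (∀ x, u x ≤ 1) → ∫ r in (0:ℝ)..1, u r ≤ δ →
    ∃ w : ℝ → ℝ, Continuous w ∧ (∀ x, 0 ≤ w x) ∧ (∀ x ∈ Icc (0:ℝ) 1, u x ≤ w x) ∧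
      ∫ r in (0:ℝ)..1, w r ≤ ε ∧
      ∀ s ∈ Icc (0:ℝ) 1, ∀ y ∈ Icc (0:ℝ) 1, avgQ w s y ≤ w s + 1 / N := by
  obtain ⟨δ, hδ, H⟩ := iterate_small N hε
  refine ⟨δ, hδ, fun u hu h0 h1 hi => ?_⟩
  have P := iterate_props hu h0 h1
  have hN' : (0:ℝ) < N := by exact_mod_cast hN
  refine ⟨fun x => (∑ m ∈ Finset.range N, maxF^[m] u x) / N, ?_, ?_, ?_, ?_, ?_⟩
  · exact (continuous_finsetSum _ fun m _ => (P m).1).div_const _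
  · intro x; exact div_nonneg (Finset.sum_nonneg fun m _ => (P m).2.1 x) hN'.le
  · intro x hx
    rw [le_div_iff₀ hN']
    calc u x * N = ∑ m ∈ Finset.range N, u x := by simp [mul_comm]
      _ ≤ _ := Finset.sum_le_sum fun m _ => (P m).2.2.2 x hx
  · rw [intervalIntegral.integral_div, div_le_iff₀ hN', intervalIntegral.integral_finsetSum
      (fun m _ => (P m).1.intervalIntegrable _ _)]
    calc _ ≤ ∑ m ∈ Finset.range N, ε :=
          Finset.sum_le_sum fun m hm => H u hu h0 h1 hi m (Finset.mem_range.1 hm).le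
      _ = ε * N := by simp [mul_comm]
  · intro s hs y hy
    have e1 : avgQ (fun x => (∑ m ∈ Finset.range N, maxF^[m] u x) / N) s y =
        (∑ m ∈ Finset.range N, avgQ (maxF^[m] u) s y) / N := by
      rw [← avgQ_sum _ _ (fun m => (P m).1)]
      simp [avgQ, intervalIntegral.integral_div]
    rw [e1, ← add_div]
    apply div_le_div_of_nonneg_right _ hN'.le
    calc ∑ m ∈ Finset.range N, avgQ (maxF^[m] u) s y
        ≤ ∑ m ∈ Finset.range N, maxF^[m+1] u s := by
          refine Finset.sum_le_sum fun m _ => ?_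
          rw [Function.iterate_succ_apply']
          exact avgQ_le_maxF (P m).1 (P m).2.2.1 s hy
      -- shifting the index by one costs only `maxF^[N] u s - u s ≤ 1`
      _ = ∑ m ∈ Finset.range N, maxF^[m] u s + maxF^[N] u s - u s := by
          have := Finset.sum_range_succ' (fun m => maxF^[m] u s) N
          rw [Finset.sum_range_succ] at this
          simp only [Function.iterate_zero, id] at this
          linarith
      _ ≤ _ := by linarith [(P N).2.2.1 s, h0 s]

/-! ### Weights with a prescribed null set of divergence -/

/-- An increasing sequence of continuous functions with bounded integrals which tends to infinity
on a given null set. -/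
lemma exists_blowup {B : Set ℝ} (hB : volume B = 0) : ∃ D : ℕ → ℝ → ℝ, (∀ n, Continuous (D n)) ∧
    (∀ x, Monotone fun n => D n x) ∧ (∀ n x, 0 ≤ D n x) ∧ (∀ n, ∫ r in (0:ℝ)..1, D n r ≤ 2) ∧
    ∀ x ∈ B, Tendsto (fun n => D n x) atTop atTop := by
  have hV : ∀ k : ℕ, ∃ V ⊇ B, IsOpen V ∧ volume V < ENNReal.ofReal ((1/2) ^ k) := by
    intro k
    apply B.exists_isOpen_lt_of_lt
    rw [hB]; simp
  choose V hVB hVo hVv using hV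
  have hne : ∀ k, (V k)ᶜ.Nonempty := by
    intro k
    rw [nonempty_compl]
    rintro h
    have := hVv k
    rw [h] at this
    simp at this
  set u : ℕ → ℕ → ℝ → ℝ := fun k n x => min 1 (n * Metric.infDist x (V k)ᶜ) with hu
  have hu0 : ∀ k n x, 0 ≤ u k n x := fun k n x => le_min zero_le_one (by positivity [Metric.infDist_nonneg (x := x) (s := (V k)ᶜ)])
  have huc : ∀ k n, Continuous (u k n) := fun k n => by
    have := Metric.continuous_infDist_pt (V k)ᶜ
    simp only [hu]; fun_prop
  have hum : ∀ k x, Monotone fun n => u k n x := fun k x n m h => by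
    apply min_le_min le_rfl
    exact mul_le_mul_of_nonneg_right (by exact_mod_cast h) Metric.infDist_nonneg
  refine ⟨fun n x => ∑ k ∈ Finset.range n, u k n x, ?_, ?_, ?_, ?_, ?_⟩
  · intro n; exact continuous_finsetSum _ fun k _ => huc k n
  · intro x n m h
    calc ∑ k ∈ Finset.range n, u k n x ≤ ∑ k ∈ Finset.range n, u k m x :=
          Finset.sum_le_sum fun k _ => hum k x h
      _ ≤ _ := Finset.sum_le_sum_of_subset_of_nonneg (Finset.range_mono h) fun _ _ _ => hu0 _ _ _
  · intro n x; exact Finset.sum_nonneg fun _ _ => hu0 _ _ _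
  · intro n
    rw [intervalIntegral.integral_finsetSum fun k _ => (huc k n).intervalIntegrable _ _]
    have hk : ∀ k, ∫ r in (0:ℝ)..1, u k n r ≤ (1/2)^k := by
      intro k
      rw [intervalIntegral.integral_of_le zero_le_one]
      calc ∫ r in Ioc (0:ℝ) 1, u k n r ≤ ∫ r in Ioc (0:ℝ) 1, (V k).indicator (fun _ => (1:ℝ)) r := by
            apply integral_mono_of_nonneg (ae_of_all _ (hu0 k n))
            · exact (integrable_indicator_iff (hVo k).measurableSet).2
                ((integrableOn_const (by
                  rw [Measure.restrict_apply (hVo k).measurableSet]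
                  exact ((measure_mono inter_subset_right).trans_lt (by simp)).ne)))
            · refine ae_of_all _ fun x => ?_
              by_cases h : x ∈ V k
              · simp [h, hu]
              · have : Metric.infDist x (V k)ᶜ = 0 := Metric.infDist_zero_of_mem h
                simp [h, hu, this]
        _ = volume.real (V k ∩ Ioc 0 1) := by
            rw [integral_indicator (hVo k).measurableSet]
            simp [Measure.real, Measure.restrict_apply (hVo k).measurableSet]
        _ ≤ _ := by
            apply ENNReal.toReal_le_of_le_ofReal (by positivity)
            exact (measure_mono inter_subset_left).trans (hVv k).le
    refine (Finset.sum_le_sum fun k _ => hk k).trans ?_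
    exact (summable_geometric_two.sum_le_tsum _ (fun _ _ => by positivity)).trans tsum_geometric_two.le
  · intro x hx
    rw [tendsto_atTop_atTop]
    intro b
    obtain ⟨K, hK⟩ := exists_nat_ge b
    have hlim : ∀ k, ∃ N : ℕ, ∀ n ≥ N, u k n x = 1 := by
      intro k
      have hpos : 0 < Metric.infDist x (V k)ᶜ :=
        ((hVo k).isClosed_compl.notMem_iff_infDist_pos (hne k)).1 (by simpa using hVB k hx)
      obtain ⟨N, hN⟩ := exists_nat_ge (1 / Metric.infDist x (V k)ᶜ)
      refine ⟨N, fun n hn => ?_⟩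
      apply min_eq_left
      rw [div_le_iff₀ hpos] at hN
      exact hN.trans (mul_le_mul_of_nonneg_right (by exact_mod_cast hn) hpos.le)
    choose N hN using hlim
    refine ⟨K + ∑ k ∈ Finset.range K, N k, fun n hn => hK.trans ?_⟩
    calc (K:ℝ) = ∑ k ∈ Finset.range K, (1:ℝ) := by simp
      _ = ∑ k ∈ Finset.range K, u k n x := by
          refine Finset.sum_congr rfl fun k hk => (hN k n ?_).symm
          have := Finset.single_le_sum (f := N) (fun _ _ => Nat.zero_le _) hk
          omega
      _ ≤ _ := Finset.sum_le_sum_of_subset_of_nonneg (Finset.range_mono (by omega))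
          fun _ _ _ => hu0 _ _ _

/-- A sequence of continuous bumps with prescribed small integrals which fails to be summable on a
given null set. -/
lemma exists_bumps {B : Set ℝ} (hB : volume B = 0) (δ : ℕ → ℝ) (hδ : ∀ j, 0 < δ j) :
    ∃ e : ℕ → ℝ → ℝ, (∀ j, Continuous (e j)) ∧ (∀ j x, 0 ≤ e j x) ∧ (∀ j x, e j x ≤ 1) ∧
    (∀ j, ∫ r in (0:ℝ)..1, e j r ≤ δ j) ∧ ∀ x ∈ B, ¬ Summable fun j => e j x := by
  obtain ⟨D, hDc, hDm, hD0, hDi, hDB⟩ := exists_blowup hB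
  set I : ℕ → ℝ := fun n => ∫ r in (0:ℝ)..1, D n r with hI
  have hIm : Monotone I := fun n m h => intervalIntegral.integral_mono_on zero_le_one
    ((hDc n).intervalIntegrable _ _) ((hDc m).intervalIntegrable _ _) fun x _ => hDm x h
  have hIt : Tendsto I atTop (𝓝 (⨆ n, I n)) :=
    tendsto_atTop_ciSup hIm ⟨2, by rintro _ ⟨n, rfl⟩; exact hDi n⟩
  have hIle : ∀ n, I n ≤ ⨆ n, I n := fun n => hIm.ge_of_tendsto hIt n
  have hex : ∀ j, ∃ N, ∀ n ≥ N, (⨆ n, I n) - δ j < I n := fun j =>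
    eventually_atTop.1 (hIt.eventually_const_lt (by linarith [hδ j]))
  choose N hN using hex
  obtain ⟨n, hn, hnN⟩ : ∃ n : ℕ → ℕ, StrictMono n ∧ ∀ j, N j ≤ n j := by
    refine ⟨fun j => j + ∑ i ∈ Finset.range (j+1), N i, strictMono_nat_of_lt_succ fun j => ?_,
      fun j => ?_⟩
    · simp only [Finset.sum_range_succ]; omega
    · simp only [Finset.sum_range_succ]; omega
  have hstep : ∀ j x, 0 ≤ D (n (j+1)) x - D (n j) x := fun j x =>
    sub_nonneg.2 (hDm x (hn.monotone (Nat.le_succ j)))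
  have hcont : ∀ j, Continuous fun x => D (n (j+1)) x - D (n j) x := fun j =>
    (hDc _).sub (hDc _)
  refine ⟨fun j x => min 1 (D (n (j+1)) x - D (n j) x), ?_, ?_, ?_, ?_, ?_⟩
  · intro j; exact continuous_const.min (hcont j)
  · intro j x; exact le_min zero_le_one (hstep j x)
  · intro j x; exact min_le_left _ _
  · intro j
    calc ∫ r in (0:ℝ)..1, min 1 (D (n (j+1)) r - D (n j) r)
        ≤ ∫ r in (0:ℝ)..1, (D (n (j+1)) r - D (n j) r) :=
          intervalIntegral.integral_mono_on zero_le_one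
            ((continuous_const.min (hcont j)).intervalIntegrable _ _)
            ((hcont j).intervalIntegrable _ _) fun x _ => min_le_right _ _
      _ = I (n (j+1)) - I (n j) :=
          intervalIntegral.integral_sub ((hDc _).intervalIntegrable _ _)
            ((hDc _).intervalIntegrable _ _)
      _ ≤ δ j := by linarith [hIle (n (j+1)), hN j (n j) (hnN j)]
  · intro x hx hs
    have hev : ∀ᶠ j in atTop, min 1 (D (n (j+1)) x - D (n j) x) = D (n (j+1)) x - D (n j) x := by
      filter_upwards [hs.tendsto_atTop_zero.eventually_lt_const zero_lt_one] with j hj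
      rcases min_lt_iff.1 hj with h | h
      · exact absurd h (lt_irrefl _)
      · exact min_eq_right h.le
    have hs2 : Summable fun j => D (n (j+1)) x - D (n j) x :=
      hs.congr_atTop hev
    have hs3 := hs2.hasSum.tendsto_sum_nat
    simp only [Finset.sum_range_sub (fun j => D (n j) x)] at hs3
    have h4 : Tendsto (fun j => D (n j) x - D (n 0) x) atTop atTop :=
      tendsto_atTop_add_const_right _ _ ((hDB x hx).comp hn.tendsto_atTop)
    exact not_tendsto_nhds_of_tendsto_atTop h4 _ hs3

/-- Continuous weights with summable integrals, not summable at any point of `B`, whose mean over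
any segment with endpoint `s` is at most their value at `s` up to a summable error. The last property
is what lets the series of means be dominated wherever the series of values converges. -/
lemma exists_weights {B : Set ℝ} (hB : volume B = 0) :
    ∃ w : ℕ → ℝ → ℝ, (∀ j, Continuous (w j)) ∧ (∀ j x, 0 ≤ w j x) ∧
    (∀ j, ∫ r in (0:ℝ)..1, w j r ≤ (1/2) ^ j / 2) ∧
    (∀ j, ∀ s ∈ Icc (0:ℝ) 1, ∀ y ∈ Icc (0:ℝ) 1, avgQ (w j) s y ≤ w j s + (1/2) ^ j) ∧
    ∀ x ∈ B ∩ Icc 0 1, ¬ Summable fun j => w j x := by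
  have h := fun j : ℕ => exists_weight (2 ^ j) (by positivity) (ε := (1/2) ^ j / 2) (by positivity)
  choose δ hδ H using h
  obtain ⟨e, ec, e0, e1, ei, eB⟩ := exists_bumps hB δ hδ
  choose w wc w0 we wi wq using fun j => H j (e j) (ec j) (e0 j) (e1 j) (ei j)
  refine ⟨w, wc, w0, wi, fun j s hs y hy => (wq j s hs y hy).trans (by simp), fun x hx hs => ?_⟩
  exact eB x hx.1 (hs.of_nonneg_of_le (fun j => e0 j x) fun j => we j x hx.2)

/-! ### The time change -/

/-- Inversion of an increasing function `H` of slope at least one which has derivative `E` on `G` and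
infinite derivative off `G`. As `0, 1 ∉ G`, the inverse has zero derivative at the endpoints, so its
constant extension beyond `[0,1]` is differentiable at the endpoints as well. -/
lemma exists_inverse (H E : ℝ → ℝ) (G : Set ℝ) (hH0 : H 0 = 0) (hc : ContinuousOn H (Icc 0 1))
    (hm : ∀ s ∈ Icc (0:ℝ) 1, ∀ s' ∈ Icc (0:ℝ) 1, s ≤ s' → s' - s ≤ H s' - H s)
    (h0 : (0:ℝ) ∉ G) (h1 : (1:ℝ) ∉ G)
    (hE : ∀ s ∈ G ∩ Icc 0 1, E s ≠ 0 ∧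
      Tendsto (slope H s) (𝓝[Icc 0 1 \ {s}] s) (𝓝 (E s)))
    (hB : ∀ s ∈ Icc (0:ℝ) 1, s ∉ G → Tendsto (slope H s) (𝓝[Icc 0 1 \ {s}] s) atTop) :
    ∃ φ : ℝ → ℝ, Continuous φ ∧ Monotone φ ∧ φ 0 = 0 ∧ φ 1 = 1 ∧ (∀ t, φ t ∈ Icc (0:ℝ) 1) ∧
      (∀ t ∈ Icc (0:ℝ) 1, H (φ t) / H 1 = t) ∧ (∀ s ∈ Icc (0:ℝ) 1, φ (H s / H 1) = s) ∧
      ∀ t ∈ Icc (0:ℝ) 1, HasDerivAt φ (if φ t ∈ G then H 1 / E (φ t) else 0) t := by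
  have z : (0:ℝ) ∈ Icc (0:ℝ) 1 := by simp
  have o : (1:ℝ) ∈ Icc (0:ℝ) 1 := by simp
  set L := H 1 with hL
  have hL1 : 1 ≤ L := by have := hm 0 z 1 o zero_le_one; linarith
  have hLp : 0 < L := by linarith
  have hex : ∀ t ∈ Icc (0:ℝ) 1, ∃ s ∈ Icc (0:ℝ) 1, H s / L = t := by
    have hcc : ContinuousOn (fun s => H s / L) (Icc 0 1) := hc.div_const _
    have := intermediate_value_Icc zero_le_one hcc
    rw [hH0, zero_div, div_self hLp.ne'] at this
    exact fun t ht => this ht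
  have hlt : ∀ s ∈ Icc (0:ℝ) 1, ∀ s' ∈ Icc (0:ℝ) 1, H s ≤ H s' → s ≤ s' := by
    intro s hs s' hs' h
    by_contra! hlt
    have := hm s' hs' s hs hlt.le
    linarith
  choose! g hg hgH using hex
  have hgm : ∀ t ∈ Icc (0:ℝ) 1, ∀ t' ∈ Icc (0:ℝ) 1, t ≤ t' → g t ≤ g t' := by
    intro t ht t' ht' h
    apply hlt _ (hg t ht) _ (hg t' ht')
    rw [← hgH t ht, ← hgH t' ht'] at h
    exact (div_le_div_iff_of_pos_right hLp).1 h
  have hgL : ∀ t ∈ Icc (0:ℝ) 1, ∀ t' ∈ Icc (0:ℝ) 1, t ≤ t' → g t' - g t ≤ L * (t' - t) := by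
    intro t ht t' ht' h
    have h1 := hm _ (hg t ht) _ (hg t' ht') (hgm t ht t' ht' h)
    have e1 := hgH t ht
    have e2 := hgH t' ht'
    rw [div_eq_iff hLp.ne'] at e1 e2
    rw [e1, e2] at h1
    linarith
  set φ : ℝ → ℝ := fun t => g (projIcc 0 1 zero_le_one t) with hφ
  have hφg : ∀ t ∈ Icc (0:ℝ) 1, φ t = g t := fun t ht => by simp [hφ, projIcc_of_mem _ ht]
  have hmem : ∀ t, φ t ∈ Icc (0:ℝ) 1 := fun t => hg _ (projIcc 0 1 zero_le_one t).2
  have hmono : Monotone φ := fun t t' h =>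
    hgm _ (projIcc 0 1 zero_le_one t).2 _ (projIcc 0 1 zero_le_one t').2 (monotone_projIcc _ h)
  have hcont : Continuous φ := by
    have hgc : ContinuousOn g (Icc 0 1) := by
      have : LipschitzOnWith (Real.toNNReal L) g (Icc 0 1) := by
        apply LipschitzOnWith.of_le_add_mul
        intro x hx y hy
        rw [Real.coe_toNNReal _ hLp.le, Real.dist_eq]
        rcases le_total x y with h | h
        · have := hgm x hx y hy h
          have : 0 ≤ L * |x - y| := by positivity
          linarith
        · have := hgL y hy x hx h
          rw [abs_of_nonneg (sub_nonneg.2 h)]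
          linarith
      exact this.continuousOn
    exact (continuousOn_iff_continuous_domRestrict.1 hgc).comp continuous_projIcc
  have hHφ : ∀ t ∈ Icc (0:ℝ) 1, H (φ t) / L = t := fun t ht => by rw [hφg t ht]; exact hgH t ht
  have hHmem : ∀ s ∈ Icc (0:ℝ) 1, H s / L ∈ Icc (0:ℝ) 1 := by
    intro s hs
    have a := hm 0 z s hs hs.1
    have b := hm s hs 1 o hs.2
    constructor
    · apply div_nonneg _ hLp.le; linarith [hs.1]
    · rw [div_le_one hLp]; linarith [hs.2]
  have hφH : ∀ s ∈ Icc (0:ℝ) 1, φ (H s / L) = s := by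
    intro s hs
    have := hHφ _ (hHmem s hs)
    rw [div_left_inj' hLp.ne'] at this
    exact le_antisymm (hlt _ (hmem _) _ hs this.le) (hlt _ hs _ (hmem _) this.ge)
  have hφ0 : φ 0 = 0 := by have := hφH 0 z; rwa [hH0, zero_div] at this
  have hφ1 : φ 1 = 1 := by have := hφH 1 o; rwa [← hL, div_self hLp.ne'] at this
  refine ⟨φ, hcont, hmono, hφ0, hφ1, hmem, hHφ, hφH, ?_⟩
  have hwithin : ∀ t ∈ Icc (0:ℝ) 1,
      HasDerivWithinAt φ (if φ t ∈ G then L / E (φ t) else 0) (Icc 0 1) t := by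
    intro t ht
    rw [hasDerivWithinAt_iff_tendsto_slope]
    have hinj : ∀ t' ∈ Icc (0:ℝ) 1, t' ≠ t → φ t' ≠ φ t := by
      intro t' ht' hne h
      apply hne
      rw [← hHφ t ht, ← hHφ t' ht', h]
    have hto : Tendsto φ (𝓝[Icc 0 1 \ {t}] t) (𝓝[Icc 0 1 \ {φ t}] (φ t)) := by
      apply tendsto_nhdsWithin_of_tendsto_nhds_of_eventually_within
      · exact hcont.continuousAt.continuousWithinAt
      · filter_upwards [self_mem_nhdsWithin] with t' ht'
        exact ⟨hmem _, hinj t' ht'.1 ht'.2⟩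
    have heq : (fun t' => L * (slope H (φ t) (φ t'))⁻¹) =ᶠ[𝓝[Icc 0 1 \ {t}] t] slope φ t := by
      filter_upwards [self_mem_nhdsWithin] with t' ht'
      have e1 := hHφ t ht
      have e2 := hHφ t' ht'.1
      rw [div_eq_iff hLp.ne'] at e1 e2
      rw [slope_def_field, slope_def_field, e1, e2, inv_div, ← sub_mul]
      have : t' - t ≠ 0 := sub_ne_zero.2 ht'.2
      field_simp
    refine Tendsto.congr' heq ?_
    split_ifs with hG
    · obtain ⟨hE0, hEt⟩ := hE _ ⟨hG, hmem t⟩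
      rw [div_eq_mul_inv]
      exact ((hEt.comp hto).inv₀ hE0).const_mul L
    · have := ((hB _ (hmem t) hG).comp hto).inv_tendsto_atTop.const_mul L
      rwa [mul_zero] at this
  intro t ht
  rcases eq_or_lt_of_le ht.1 with h | h
  · subst h
    have a := hwithin 0 z
    rw [hφ0, if_neg h0] at a ⊢
    have b : HasDerivWithinAt φ 0 (Iic 0) 0 := by
      refine (hasDerivWithinAt_const (0:ℝ) (Iic 0) (0:ℝ)).congr_of_mem ?_ (by simp)
      intro x hx
      rw [← hφ0]; simp only [hφ]; rw [projIcc_of_le_left _ hx, projIcc_of_le_left _ le_rfl]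
    have := b.union a
    refine this.hasDerivAt ?_
    filter_upwards [Iio_mem_nhds (zero_lt_one (α := ℝ))] with x hx
    rcases le_total x 0 with h | h
    · exact Or.inl h
    · exact Or.inr ⟨h, le_of_lt hx⟩
  rcases eq_or_lt_of_le ht.2 with h' | h'
  · subst h'
    have a := hwithin 1 o
    rw [hφ1, if_neg h1] at a ⊢
    have b : HasDerivWithinAt φ 0 (Ici 1) 1 := by
      refine (hasDerivWithinAt_const (1:ℝ) (Ici 1) (1:ℝ)).congr_of_mem ?_ (by simp)
      intro x hx
      rw [← hφ1]; simp only [hφ]; rw [projIcc_of_right_le _ hx, projIcc_of_right_le _ le_rfl]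
    have := b.union a
    refine this.hasDerivAt ?_
    filter_upwards [Ioi_mem_nhds (zero_lt_one (α := ℝ))] with x hx
    rcases le_total 1 x with h | h
    · exact Or.inl h
    · exact Or.inr ⟨le_of_lt hx, h⟩
  · exact (hwithin t ht).hasDerivAt (Icc_mem_nhds h h')

/-- The time change: a monotone everywhere differentiable `φ` slowing down the clock in such a way
that `φ' · (f ∘ φ)` is bounded everywhere, and `φ' = 0` where `φ` runs through the null set `B`.
The function `η s = ∫ r in 0..s, e r` is the inverse of `φ`. -/
lemma exists_time_change (f : ℝ → ℝ) (hf : IntegrableOn f (Icc 0 1)) (hf0 : ∀ s, 0 ≤ f s)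
    {B : Set ℝ} (hB : volume B = 0) :
    ∃ φ e : ℝ → ℝ, Continuous φ ∧ Monotone φ ∧ φ 0 = 0 ∧ φ 1 = 1 ∧ (∀ t, φ t ∈ Icc (0:ℝ) 1) ∧
      IntegrableOn e (Icc 0 1) ∧ (∫ r in (0:ℝ)..1, e r = 1) ∧
      (∀ t ∈ Icc (0:ℝ) 1, ∫ r in (0:ℝ)..φ t, e r = t) ∧
      (∀ s ∈ Icc (0:ℝ) 1, φ (∫ r in (0:ℝ)..s, e r) = s) ∧
      (∀ s ∈ Icc (0:ℝ) 1, ∫ r in (0:ℝ)..s, e r ∈ Icc (0:ℝ) 1) ∧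
      (∀ t ∈ Icc (0:ℝ) 1, HasDerivAt φ (deriv φ t) t ∧ 0 ≤ deriv φ t ∧
        (φ t ∈ B → deriv φ t = 0) ∧
        deriv φ t * f (φ t) ≤ (∫ r in Icc (0:ℝ) 1, f r) + 2 ∧
        (deriv φ t = 0 ∨ deriv φ t * e (φ t) = 1)) := by
  have hfi : IntervalIntegrable f volume 0 1 :=
    (intervalIntegrable_iff_integrableOn_Icc_of_le zero_le_one).2 hf
  set F : ℝ → ℝ := fun s => ∫ r in (0:ℝ)..s, f r with hF
  -- the times at which the slope of `H` below must be infinite: the given null set, the endpoints,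
  -- and the points where the primitive of `f` is not differentiable with derivative `f`
  set N0 : Set ℝ := B ∪ {0, 1} ∪ {s | ¬ (s ∈ uIcc (0:ℝ) 1 → ∀ c ∈ uIcc (0:ℝ) 1,
    HasDerivAt (fun x => ∫ t in c..x, f t) (f s) s)} with hN0
  have hN0v : volume N0 = 0 := by
    refine measure_union_null (measure_union_null hB ?_) ?_
    · exact (Set.toFinite ({0, 1} : Set ℝ)).measure_zero _
    · exact ae_iff.1 hfi.ae_hasDerivAt_integral
  obtain ⟨w, wc, w0, wi, wq, wB⟩ := exists_weights hN0v
  have wint : ∀ j a b, IntervalIntegrable (w j) volume a b := fun j a b => (wc j).intervalIntegrable _ _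
  set W : ℕ → ℝ → ℝ := fun j s => ∫ r in (0:ℝ)..s, w j r with hW
  have hgeo : Summable fun j : ℕ => ((1:ℝ)/2)^j / 2 := summable_geometric_two.div_const 2
  have hWn : ∀ j, ∀ s ∈ Icc (0:ℝ) 1, 0 ≤ W j s := fun j s hs =>
    intervalIntegral.integral_nonneg hs.1 fun _ _ => w0 j _
  have hWle : ∀ j, ∀ s ∈ Icc (0:ℝ) 1, W j s ≤ (1/2)^j/2 := fun j s hs => by
    refine le_trans ?_ (wi j)
    have : W j s + ∫ r in s..1, w j r = ∫ r in (0:ℝ)..1, w j r :=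
      intervalIntegral.integral_add_adjacent_intervals (wint _ _ _) (wint _ _ _)
    have h2 : 0 ≤ ∫ r in s..1, w j r := intervalIntegral.integral_nonneg hs.2 fun _ _ => w0 j _
    linarith
  have hWs : ∀ s ∈ Icc (0:ℝ) 1, Summable fun j => W j s := fun s hs =>
    hgeo.of_nonneg_of_le (fun j => hWn j s hs) (fun j => hWle j s hs)
  -- `φ` is the inverse of `H / H 1`, and `E` is the derivative of `H` on the set `G`
  set H : ℝ → ℝ := fun s => s + F s + ∑' j, W j s with hH
  set E : ℝ → ℝ := fun s => 1 + f s + ∑' j, w j s with hE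
  set G : Set ℝ := {s | Summable fun j => w j s} with hG
  have hfint : ∀ s ∈ Icc (0:ℝ) 1, ∀ s' ∈ Icc (0:ℝ) 1, IntervalIntegrable f volume s s' :=
    fun s hs s' hs' => hfi.mono_set (uIcc_subset_uIcc (by simpa using hs) (by simpa using hs'))
  have z : (0:ℝ) ∈ Icc (0:ℝ) 1 := by simp
  have o : (1:ℝ) ∈ Icc (0:ℝ) 1 := by simp
  have hWd : ∀ j s s', W j s' - W j s = ∫ r in s..s', w j r := fun j s s' =>
    intervalIntegral.integral_interval_sub_left (wint _ _ _) (wint _ _ _)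
  have hFd : ∀ s ∈ Icc (0:ℝ) 1, ∀ s' ∈ Icc (0:ℝ) 1, F s' - F s = ∫ r in s..s', f r :=
    fun s hs s' hs' => intervalIntegral.integral_interval_sub_left (hfint _ z _ hs') (hfint _ z _ hs)
  have hHd : ∀ s ∈ Icc (0:ℝ) 1, ∀ s' ∈ Icc (0:ℝ) 1,
      H s' - H s = (s' - s) + (F s' - F s) + ∑' j, (W j s' - W j s) := fun s hs s' hs' => by
    rw [(hWs s' hs').tsum_sub (hWs s hs)]; simp only [hH]; ring
  have hslope : ∀ s ∈ Icc (0:ℝ) 1, ∀ s' ∈ Icc (0:ℝ) 1, s' ≠ s →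
      (Summable fun j => avgQ (w j) s s') ∧
      slope H s s' = 1 + slope F s s' + ∑' j, avgQ (w j) s s' := by
    intro s hs s' hs' hne
    have hne' : s' - s ≠ 0 := sub_ne_zero.2 hne
    have e : ∀ j, avgQ (w j) s s' = (W j s' - W j s) / (s' - s) := fun j => by
      rw [hWd, ← mul_avgQ]; field_simp
    refine ⟨?_, ?_⟩
    · simp only [e]; exact ((hWs s' hs').sub (hWs s hs)).div_const _
    · simp only [e]
      rw [tsum_div_const, slope_def_field, slope_def_field, hHd s hs s' hs']
      field_simp
  have hbad : ∀ s ∈ Icc (0:ℝ) 1, s ∉ G → Tendsto (slope H s) (𝓝[Icc 0 1 \ {s}] s) atTop := by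
    intro s hs hsG
    rw [tendsto_atTop]
    intro b
    have hex : ∃ J, b < ∑ j ∈ Finset.range J, w j s := by
      by_contra! hcon
      exact hsG (summable_of_sum_range_le (fun j => w0 j s) hcon)
    obtain ⟨J, hJ⟩ := hex
    have hc : Continuous fun y => ∑ j ∈ Finset.range J, avgQ (w j) s y :=
      continuous_finsetSum _ fun j _ => (continuous_avgQ (wc j)).comp (Continuous.prodMk_right s)
    have hev : ∀ᶠ y in 𝓝[Icc 0 1 \ {s}] s, b < ∑ j ∈ Finset.range J, avgQ (w j) s y := by
      apply hc.continuousAt.continuousWithinAt.eventually_const_lt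
      simpa [avgQ_self] using hJ
    filter_upwards [hev, self_mem_nhdsWithin] with y hy hy2
    obtain ⟨hsm, hsl⟩ := hslope s hs y hy2.1 hy2.2
    rw [hsl]
    have h1 := hsm.sum_le_tsum (Finset.range J) fun j _ => avgQ_nonneg (w0 j) s y
    have h2 : 0 ≤ slope F s y := by
      rw [slope_def_field, hFd s hs y hy2.1]
      rcases le_total s y with h | h
      · exact div_nonneg (intervalIntegral.integral_nonneg h fun _ _ => hf0 _) (by linarith)
      · rw [intervalIntegral.integral_symm]
        exact div_nonneg_of_nonpos
          (neg_nonpos.2 (intervalIntegral.integral_nonneg h fun _ _ => hf0 _)) (by linarith)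
    linarith
  have hgood : ∀ s ∈ G ∩ Icc 0 1, Tendsto (slope H s) (𝓝[Icc 0 1 \ {s}] s) (𝓝 (E s)) := by
    rintro s ⟨hsG, hs⟩
    have hsN : s ∉ N0 := fun h => wB s ⟨h, hs⟩ hsG
    have hFs : HasDerivAt F (f s) s := by
      by_contra hcon
      exact hsN (Or.inr fun h => hcon (h (by simpa using hs) 0 (by simp)))
    have h1 : Tendsto (slope F s) (𝓝[Icc 0 1 \ {s}] s) (𝓝 (f s)) :=
      hasDerivWithinAt_iff_tendsto_slope.1 hFs.hasDerivWithinAt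
    have h2 : Tendsto (fun y => ∑' j, avgQ (w j) s y) (𝓝[Icc 0 1 \ {s}] s) (𝓝 (∑' j, w j s)) := by
      apply tendsto_tsum_of_dominated_convergence (bound := fun j => w j s + (1/2)^j)
      · exact Summable.add hsG summable_geometric_two
      · intro j
        have hc : Continuous fun y => avgQ (w j) s y :=
          (continuous_avgQ (wc j)).comp (Continuous.prodMk_right s)
        have := hc.tendsto s
        rw [avgQ_self] at this
        exact this.mono_left nhdsWithin_le_nhds
      · filter_upwards [self_mem_nhdsWithin] with y hy j
        rw [Real.norm_of_nonneg (avgQ_nonneg (w0 j) s y)]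
        exact wq j s hs y hy.1
    have h3 := (h1.const_add 1).add h2
    refine h3.congr' ?_
    filter_upwards [self_mem_nhdsWithin] with y hy
    exact (hslope s hs y hy.1 hy.2).2.symm
  have hwt : ∀ s, 0 ≤ ∑' j, w j s := fun s => tsum_nonneg fun j => w0 j s
  have hE1 : ∀ s, 1 ≤ E s := fun s => by
    simp only [hE]; linarith [hf0 s, hwt s]
  have hsw : ∀ s ∈ Icc (0:ℝ) 1, HasSum (fun j => W j s) (∫ r in (0:ℝ)..s, ∑' j, w j r) := by
    intro s hs
    simp only [hW, intervalIntegral.integral_of_le hs.1]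
    apply hasSum_integral_of_summable_integral_norm
    · intro j; exact (wint j 0 s).1
    · have := hWs s hs
      simp only [hW, intervalIntegral.integral_of_le hs.1] at this
      simpa only [Real.norm_of_nonneg (w0 _ _)] using this
  have hwint : IntegrableOn (fun r => ∑' j, w j r) (Icc 0 1) := by
    rw [integrableOn_Icc_iff_integrableOn_Ioc]
    refine ⟨?_, ?_⟩
    · exact (Measurable.tsum fun j => (wc j).measurable).aestronglyMeasurable
    · have hle : ∀ r, ‖∑' j, w j r‖ₑ ≤ ∑' j, ‖w j r‖ₑ := fun r => by
        by_cases hs : Summable fun j => w j r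
        · rw [Real.enorm_of_nonneg (hwt r), ENNReal.ofReal_tsum_of_nonneg (fun j => w0 j r) hs]
          exact le_of_eq (tsum_congr fun j => (Real.enorm_of_nonneg (w0 j r)).symm)
        · rw [tsum_eq_zero_of_not_summable hs]; simp
      refine (lintegral_mono hle).trans_lt ?_
      rw [lintegral_tsum fun j => (wc j).measurable.enorm.aemeasurable]
      have : ∀ j, ∫⁻ r in Ioc (0:ℝ) 1, ‖w j r‖ₑ = ENNReal.ofReal (W j 1) := fun j => by
        simp only [hW]
        rw [intervalIntegral.integral_of_le zero_le_one,
          ofReal_integral_eq_lintegral_ofReal (wint j 0 1).1 (ae_of_all _ (w0 j))]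
        exact lintegral_congr fun r => Real.enorm_of_nonneg (w0 j r)
      simp only [this]
      rw [← ENNReal.ofReal_tsum_of_nonneg (fun j => hWn j 1 o) (hWs 1 o)]
      exact ENNReal.ofReal_lt_top
  have hHE : ∀ s ∈ Icc (0:ℝ) 1, H s = ∫ r in (0:ℝ)..s, E r := by
    intro s hs
    have i2 : IntervalIntegrable (fun r => ∑' j, w j r) volume 0 s :=
      ((intervalIntegrable_iff_integrableOn_Icc_of_le zero_le_one).2 hwint).mono_set
        (uIcc_subset_uIcc (by simp) (by simpa using hs))
    simp only [hH, hE]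
    rw [intervalIntegral.integral_add (intervalIntegrable_const.add (hfint 0 z s hs)) i2,
      intervalIntegral.integral_add (by simp) (hfint 0 z s hs), (hsw s hs).tsum_eq]
    simp [hF]
  have hEint : IntegrableOn E (Icc 0 1) := by
    show Integrable (fun s => 1 + f s + ∑' j, w j s) (volume.restrict (Icc 0 1))
    exact Integrable.add (Integrable.add (integrable_const 1) hf) hwint
  have hH0 : H 0 = 0 := by rw [hHE 0 z]; simp
  have hcont : ContinuousOn H (Icc 0 1) := by
    have := intervalIntegral.continuousOn_primitive_interval (μ := volume) (f := E) (a := 0) (b := 1)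
      (by simpa using hEint)
    rw [uIcc_of_le zero_le_one] at this
    exact this.congr hHE
  have hm : ∀ s ∈ Icc (0:ℝ) 1, ∀ s' ∈ Icc (0:ℝ) 1, s ≤ s' → s' - s ≤ H s' - H s := by
    intro s hs s' hs' h
    rw [hHd s hs s' hs', hFd s hs s' hs']
    have h1 : 0 ≤ ∫ r in s..s', f r := intervalIntegral.integral_nonneg h fun _ _ => hf0 _
    have h2 : 0 ≤ ∑' j, (W j s' - W j s) := tsum_nonneg fun j => by
      rw [hWd]; exact intervalIntegral.integral_nonneg h fun _ _ => w0 j _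
    linarith
  obtain ⟨φ, φc, φm, φ0, φ1, φI, φH, φH', φd⟩ := exists_inverse H E G hH0 hcont hm
    (wB 0 ⟨Or.inl (Or.inr (by simp)), z⟩) (wB 1 ⟨Or.inl (Or.inr (by simp)), o⟩)
    (fun s hs => ⟨by linarith [hE1 s], hgood s hs⟩) hbad
  have hL1 : 1 ≤ H 1 := by have := hm 0 z 1 o zero_le_one; linarith
  have hL2 : H 1 ≤ (∫ r in Icc (0:ℝ) 1, f r) + 2 := by
    have h1 : ∑' j, W j 1 ≤ ∑' j : ℕ, ((1:ℝ)/2)^j/2 :=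
      (hWs 1 o).tsum_le_tsum (fun j => hWle j 1 o) hgeo
    rw [tsum_div_const, tsum_geometric_two] at h1
    simp only [hH, hF]
    rw [intervalIntegral.integral_of_le zero_le_one, integral_Icc_eq_integral_Ioc]
    linarith
  have hη : ∀ s ∈ Icc (0:ℝ) 1, ∫ r in (0:ℝ)..s, E r / H 1 = H s / H 1 := fun s hs => by
    rw [intervalIntegral.integral_div, hHE s hs]
  have hLp : 0 < H 1 := by linarith
  refine ⟨φ, fun s => E s / H 1, φc, φm, φ0, φ1, φI, hEint.div_const _, ?_, ?_, ?_, ?_, ?_⟩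
  · rw [hη 1 o, div_self hLp.ne']
  · intro t ht; rw [hη _ (φI t)]; exact φH t ht
  · intro s hs; rw [hη s hs]; exact φH' s hs
  · intro s hs
    rw [hη s hs]
    have a := hm 0 z s hs hs.1
    have b := hm s hs 1 o hs.2
    constructor
    · apply div_nonneg _ hLp.le; linarith [hs.1]
    · rw [div_le_one hLp]; linarith [hs.2]
  · intro t ht
    have hd := φd t ht
    have hEp : 0 < E (φ t) := by linarith [hE1 (φ t)]
    rw [hd.deriv]
    refine ⟨hd, ?_, ?_, ?_, ?_⟩
    · split_ifs
      · positivity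
      · exact le_rfl
    · intro hb
      rw [if_neg]
      exact wB _ ⟨Or.inl (Or.inl hb), φI t⟩
    · split_ifs
      · rw [div_mul_eq_mul_div, div_le_iff₀ hEp]
        have : f (φ t) ≤ E (φ t) := by simp only [hE]; linarith [hwt (φ t)]
        exact mul_le_mul hL2 this (hf0 _) (by linarith)
      · rw [zero_mul]; linarith
    · split_ifs
      · right; field_simp
      · left; rfl

/-! ### Measurability in time of Jordan decompositions, densities and atoms -/

lemma abs_apply_le_totalVariation {E : Type*} [MeasurableSpace E] (q : SignedMeasure E) {s : Set E}
    (hs : MeasurableSet s) : |q s| ≤ q.totalVariation.real s := by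
  have h := q.apply_eq_posPart_real_sub_negPart_real hs
  rw [h, SignedMeasure.totalVariation, measureReal_add_apply]
  rw [abs_le]
  constructor <;> linarith [measureReal_nonneg (μ := q.toJordanDecomposition.posPart) (s := s),
    measureReal_nonneg (μ := q.toJordanDecomposition.negPart) (s := s)]

/-- The positive part is a supremum over a countable algebra of sets, which makes it a
measurable function of any parameter on which the signed measure depends measurably. -/
lemma posPart_eq_iSup {E : Type*} [m : MeasurableSpace E] {A : Set (Set E)}
    (hA : IsSetAlgebra A) (hgen : m = MeasurableSpace.generateFrom A) (q : SignedMeasure E)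
    {s : Set E} (hs : MeasurableSet s) :
    q.toJordanDecomposition.posPart s = ⨆ a ∈ A, ENNReal.ofReal (q (a ∩ s)) := by
  have hAm : ∀ a ∈ A, MeasurableSet a := fun a ha => hgen ▸
    MeasurableSpace.measurableSet_generateFrom ha
  apply le_antisymm
  · obtain ⟨P, hP, hP1, hP2, e1, e2⟩ := q.toJordanDecomposition_spec
    have h1 : q.toJordanDecomposition.posPart s = ENNReal.ofReal (q (P ∩ s)) := by
      rw [← SignedMeasure.toMeasureOfZeroLE_real_apply q hP1 hP hs, ← e1]
      simp [Measure.real]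
    rw [h1]
    refine ENNReal.le_of_forall_pos_le_add fun ε hε _ => ?_
    obtain ⟨a, ha, hae⟩ := exists_measure_symmDiff_lt_of_generateFrom_isSetRing
      (μ := q.totalVariation) (C := A) hA.isSetRing
      ⟨{univ}, countable_singleton _, by simpa using hA.univ_mem, by simp⟩ hgen hP
      (ε := ε) (by exact_mod_cast hε)
    refine le_trans ?_ (add_le_add_left (le_biSup (fun a => ENNReal.ofReal (q (a ∩ s))) ha) _)
    have am := hAm a ha
    have d1 : q (P ∩ s) = q ((P ∩ a) ∩ s) + q ((P \ a) ∩ s) := by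
      rw [← VectorMeasure.of_union _ ((hP.inter am).inter hs) ((hP.diff am).inter hs),
        ← union_inter_distrib_right, inter_union_sdiff]
      exact (disjoint_sdiff_inter.symm).mono inter_subset_left inter_subset_left
    have d2 : q (a ∩ s) = q ((P ∩ a) ∩ s) + q ((a \ P) ∩ s) := by
      rw [← VectorMeasure.of_union _ ((hP.inter am).inter hs) ((am.diff hP).inter hs),
        ← union_inter_distrib_right, inter_comm P, inter_union_sdiff]
      rw [inter_comm P]
      exact (disjoint_sdiff_inter.symm).mono inter_subset_left inter_subset_left
    have b1 := abs_apply_le_totalVariation q ((hP.diff am).inter hs)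
    have b2 := abs_apply_le_totalVariation q ((am.diff hP).inter hs)
    have b3 : q.totalVariation.real ((P \ a) ∩ s) + q.totalVariation.real ((a \ P) ∩ s) ≤ ε := by
      have hd : Disjoint ((P \ a) ∩ s) ((a \ P) ∩ s) := by
        rw [Set.disjoint_left]; rintro x ⟨⟨h1, h2⟩, _⟩ ⟨⟨h3, _⟩, _⟩; exact h2 h3
      rw [← measureReal_union hd ((am.diff hP).inter hs)]
      have : q.totalVariation ((P \ a) ∩ s ∪ (a \ P) ∩ s) ≤ ε := by
        refine le_trans (measure_mono ?_) hae.le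
        rintro x (⟨h, _⟩ | ⟨h, _⟩)
        · exact Or.inr h
        · exact Or.inl h
      exact ENNReal.toReal_le_coe_of_le_coe this
    have : q (P ∩ s) ≤ q (a ∩ s) + ε := by
      have := abs_le.1 b1; have := abs_le.1 b2; linarith
    calc ENNReal.ofReal (q (P ∩ s)) ≤ ENNReal.ofReal (q (a ∩ s) + ε) := ENNReal.ofReal_le_ofReal this
      _ ≤ _ := ENNReal.ofReal_add_le.trans (by simp)
  · refine iSup₂_le fun a ha => ?_
    have am := hAm a ha
    rw [q.apply_eq_posPart_real_sub_negPart_real (am.inter hs)]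
    refine le_trans (ENNReal.ofReal_le_ofReal (sub_le_self _ measureReal_nonneg)) ?_
    rw [Measure.real, ENNReal.ofReal_toReal (measure_ne_top _ _)]
    exact measure_mono inter_subset_right

lemma measurable_jordanPos {E T : Type*} [m : MeasurableSpace E] [MeasurableSpace T]
    [MeasurableSpace.CountablyGenerated E] {q : T → SignedMeasure E}
    (hq : ∀ s, MeasurableSet s → Measurable fun t => q t s) :
    Measurable fun t => (q t).toJordanDecomposition.posPart := by
  obtain ⟨b, hb, hbg⟩ := MeasurableSpace.CountablyGenerated.isCountablyGenerated (α := E)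
  have hg : m = MeasurableSpace.generateFrom (generateSetAlgebra b) := by
    rw [generateFrom_generateSetAlgebra_eq, hbg]
  have hc := countable_generateSetAlgebra hb
  refine Measure.measurable_of_measurable_coe _ fun s hs => ?_
  simp_rw [posPart_eq_iSup isSetAlgebra_generateSetAlgebra hg _ hs]
  refine Measurable.biSup _ hc fun a ha => (hq _ ?_).ennreal_ofReal
  refine MeasurableSet.inter ?_ hs
  rw [hg]; exact MeasurableSpace.measurableSet_generateFrom ha

lemma measurable_jordanNeg {E T : Type*} [m : MeasurableSpace E] [MeasurableSpace T]
    [MeasurableSpace.CountablyGenerated E] {q : T → SignedMeasure E}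
    (hq : ∀ s, MeasurableSet s → Measurable fun t => q t s) :
    Measurable fun t => (q t).toJordanDecomposition.negPart := by
  have := measurable_jordanPos (q := fun t => - q t) fun s hs => (hq s hs).neg
  simpa [SignedMeasure.toJordanDecomposition_neg] using this

/-- Jointly measurable Radon–Nikodym densities for measurable families of finite measures. -/
lemma exists_density {E : Type*} [MeasurableSpace E] [MeasurableSpace.CountablyGenerated E]
    {κ η : ℝ → Measure E} (hκ : Measurable κ) (hη : Measurable η) [∀ t, IsFiniteMeasure (κ t)]
    [∀ t, IsProbabilityMeasure (η t)] :
    MeasurableSet {t | κ t ≪ η t} ∧ ∃ h : ℝ → E → ℝ, Measurable (Function.uncurry h) ∧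
      (∀ t x, 0 ≤ h t x) ∧
      ∀ t, κ t ≪ η t → κ t = (η t).withDensity fun x => ENNReal.ofReal (h t x) := by
  have hu : Measurable fun t => κ t univ := (Measure.measurable_coe MeasurableSet.univ).comp hκ
  let K : ProbabilityTheory.Kernel ℝ E := ⟨fun t => (1 + κ t univ)⁻¹ • κ t, by
    refine Measure.measurable_of_measurable_coe _ fun s hs => ?_
    simp only [Measure.smul_apply, smul_eq_mul]
    exact ((measurable_const.add hu).inv).mul ((Measure.measurable_coe hs).comp hκ)⟩
  let R : ProbabilityTheory.Kernel ℝ E := ⟨η, hη⟩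
  have hKa : ∀ t, K t = (1 + κ t univ)⁻¹ • κ t := fun t => rfl
  have hRa : ∀ t, R t = η t := fun t => rfl
  have : ProbabilityTheory.IsFiniteKernel K := ⟨1, by simp, fun t => by
    rw [hKa, Measure.smul_apply, smul_eq_mul, mul_comm, ← div_eq_mul_inv]
    exact ENNReal.div_le_of_le_mul (by rw [one_mul]; exact le_add_self)⟩
  have : ProbabilityTheory.IsFiniteKernel R := ⟨1, by simp, fun t => by rw [hRa]; simp⟩
  have h0 : ∀ t, (1 + κ t univ) ≠ 0 := fun t => by simp
  have h1 : ∀ t, (1 + κ t univ) ≠ ⊤ := fun t => by simp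
  have hKκ : ∀ t, κ t = (1 + κ t univ) • K t := fun t => by
    rw [hKa, smul_smul, ENNReal.mul_inv_cancel (h0 t) (h1 t), one_smul]
  have hac : ∀ t, κ t ≪ η t ↔ K t ≪ R t := fun t => by
    rw [hRa]; constructor
    · intro h; rw [hKa]; exact Measure.AbsolutelyContinuous.smul_left h _
    · intro h; rw [hKκ]; exact Measure.AbsolutelyContinuous.smul_left h _
  refine ⟨?_, fun t x => ((1 + κ t univ) * K.rnDeriv R t x).toReal, ?_, fun t x => ENNReal.toReal_nonneg, ?_⟩
  · simp_rw [hac]; exact ProbabilityTheory.Kernel.measurableSet_absolutelyContinuous K R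
  · exact (((measurable_const.add hu).comp measurable_fst).mul
      (ProbabilityTheory.Kernel.measurable_rnDeriv K R)).ennreal_toReal
  · intro t ht
    have hr := ProbabilityTheory.Kernel.withDensity_rnDeriv_eq ((hac t).1 ht)
    rw [ProbabilityTheory.Kernel.withDensity_apply _ (ProbabilityTheory.Kernel.measurable_rnDeriv K R)] at hr
    have e1 : κ t = (η t).withDensity fun x => (1 + κ t univ) * K.rnDeriv R t x := by
      have hm := ProbabilityTheory.Kernel.measurable_rnDeriv_right K R t
      conv_lhs => rw [hKκ t, ← hr, ← withDensity_smul _ hm]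
      rfl
    have e2 := e1
    refine e1.trans (withDensity_congr_ae ?_)
    have hm : Measurable fun x => (1 + κ t univ) * K.rnDeriv R t x :=
      (ProbabilityTheory.Kernel.measurable_rnDeriv_right K R t).const_mul _
    have : ∫⁻ x, (1 + κ t univ) * K.rnDeriv R t x ∂(η t) ≠ ⊤ := by
      rw [← setLIntegral_univ, ← withDensity_apply _ MeasurableSet.univ, ← e2]
      exact measure_ne_top _ _
    filter_upwards [ae_lt_top hm this] with x hx
    rw [ENNReal.ofReal_toReal hx.ne]

/-- Weak continuity in time implies measurability in time. -/
lemma measurable_of_weak {E : Type*} [MetricSpace E] [MeasurableSpace E] [BorelSpace E]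
    {η : ℝ → Measure E} [∀ t, IsProbabilityMeasure (η t)]
    (h : ∀ f : E → ℝ, Continuous f → Continuous fun t => ∫ x, f x ∂(η t)) : Measurable η := by
  refine Measurable.measure_of_isPiSystem_of_isProbabilityMeasure (S := {s | IsClosed s})
    (by rw [BorelSpace.measurable_eq (α := E), borel_eq_generateFrom_isClosed]) isPiSystem_isClosed ?_
  intro F hF
  obtain ⟨δ, -, δ0, δl⟩ := exists_seq_strictAnti_tendsto (0:ℝ)
  refine measurable_of_tendsto_metrizable (f := fun n t =>
    lintegral (η t) fun ω => (thickenedIndicator (δ0 n) F ω : ℝ≥0∞)) (fun n => ?_)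
    (tendsto_pi_nhds.2 fun t => tendsto_lintegral_thickenedIndicator_of_isClosed (η t) hF δ0 δl)
  have : (fun t => lintegral (η t) fun ω => (thickenedIndicator (δ0 n) F ω : ℝ≥0∞)) =
      fun t => ENNReal.ofReal (∫ x, (thickenedIndicator (δ0 n) F x : ℝ) ∂(η t)) := by
    funext t
    rw [lintegral_coe_eq_integral]
    exact integrable_thickenedIndicator F (δ0 n)
  rw [this]
  exact (h _ (by fun_prop)).measurable.ennreal_ofReal

/-- The mass of the atom at `x` depends jointly measurably on time and `x`. -/
lemma measurable_atom {E : Type*} [MetricSpace E] [SecondCountableTopology E] [MeasurableSpace E]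
    [BorelSpace E] {η : ℝ → Measure E} [∀ t, IsProbabilityMeasure (η t)] (h : Measurable η) :
    Measurable fun p : ℝ × E => η p.1 {p.2} := by
  let R : ProbabilityTheory.Kernel (ℝ × E) E := ⟨fun p => η p.1, h.comp measurable_fst⟩
  have : ProbabilityTheory.IsFiniteKernel R := ⟨1, by simp, fun t => by
    show η t.1 univ ≤ 1; simp⟩
  have hD : MeasurableSet {p : (ℝ × E) × E | p.1.2 = p.2} :=
    measurableSet_eq_fun measurable_fst.snd measurable_snd
  have := ProbabilityTheory.Kernel.measurable_kernel_prodMk_left (κ := R) hD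
  convert this using 2 with p
  show _ = η p.1 _
  congr 1
  ext x; simp [eq_comm]

/-! ### The cost as an integral of the velocity -/

/-- The cost of the velocity field `v` transporting `μ`: `∫ |v| μ({x})^(α-1) dμ`, with the
convention that points which are not atoms have infinite weight. -/
noncomputable def vCost {d : ℕ} (α : ℝ) (μ : Measure (Euc d)) (v : Euc d → Euc d) : ℝ≥0∞ :=
  ∫⁻ x, ‖v x‖ₑ * μ {x} ^ (α - 1) ∂μ

lemma countable_atoms {E : Type*} [MeasurableSpace E] [MeasurableSingletonClass E] (μ : Measure E) [IsFiniteMeasure μ] :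
    {x | μ {x} ≠ 0}.Countable := by
  simpa [pos_iff_ne_zero] using
    Measure.countable_meas_pos_of_disjoint_iUnion (μ := μ) (As := fun x : E => ({x} : Set E))
      (fun x => measurableSet_singleton x) (fun x y h => by simpa using h)

/-- `G_α(|v|^{1/α} μ)` is the cost of `v`: on the atoms `(|v|^{1/α} μ{x})^α = |v| μ{x}^{α-1} μ{x}`,
and both sides are infinite as soon as `v` does not vanish on the diffuse part. -/
lemma Ga_eq_vCost {d : ℕ} {α : ℝ} (hα : 0 < α) (hα' : α < 1) (μ : Measure (Euc d))
    [IsProbabilityMeasure μ] {v : Euc d → Euc d} (hv : Measurable v) :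
    Ga α (μ.withDensity fun x => ENNReal.ofReal (‖v x‖ ^ (1 / α))) = vCost α μ v := by
  set g : Euc d → ℝ≥0∞ := fun x => ENNReal.ofReal (‖v x‖ ^ (1 / α)) with hg
  have gm : Measurable g := (hv.norm.pow_const _).ennreal_ofReal
  have gz : ∀ x, g x = 0 ↔ v x = 0 := fun x => by
    simp only [hg, ENNReal.ofReal_eq_zero]
    constructor
    · intro h
      by_contra hne
      have : 0 < ‖v x‖ ^ (1 / α) := Real.rpow_pos_of_pos (norm_pos_iff.2 hne) _
      linarith
    · intro h; rw [h, norm_zero, Real.zero_rpow (by positivity)]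
  have ga : ∀ x, g x ^ α = ‖v x‖ₑ := fun x => by
    simp only [hg]
    rw [ENNReal.ofReal_rpow_of_nonneg (by positivity) hα.le, ← Real.rpow_mul (norm_nonneg _),
      one_div_mul_cancel hα.ne', Real.rpow_one, ofReal_norm]
  set A : Set (Euc d) := {x | μ {x} ≠ 0} with hA
  have Ac : A.Countable := countable_atoms μ
  have Am : MeasurableSet A := Ac.measurableSet
  set l := μ.withDensity g with hl
  have lx : ∀ x, l {x} = g x * μ {x} := fun x => by
    rw [hl, withDensity_apply _ (measurableSet_singleton x), lintegral_singleton]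
  have l0 : l Aᶜ = 0 ↔ ∀ᵐ x ∂(μ.restrict Aᶜ), v x = 0 := by
    rw [hl, withDensity_apply _ Am.compl, lintegral_eq_zero_iff gm]
    exact eventually_congr (ae_of_all _ fun x => gz x)
  have key : (∃ s : Set (Euc d), s.Countable ∧ l sᶜ = 0) ↔ l Aᶜ = 0 := by
    constructor
    · rintro ⟨s, hs, h⟩
      have : Aᶜ ⊆ sᶜ ∪ ⋃ x ∈ s ∩ Aᶜ, {x} := by
        intro x hx
        by_cases hxs : x ∈ s
        · right; simp only [mem_iUnion]; exact ⟨x, ⟨hxs, hx⟩, rfl⟩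
        · exact Or.inl hxs
      refine measure_mono_null this (measure_union_null h ?_)
      rw [measure_biUnion_null_iff (hs.mono inter_subset_left)]
      rintro x ⟨_, hx⟩
      rw [lx, not_not.1 hx, mul_zero]
    · intro h; exact ⟨A, Ac, h⟩
  unfold Ga vCost
  split_ifs with h
  · rw [key, l0] at h
    rw [← lintegral_add_compl _ Am]
    have z : ∫⁻ x in Aᶜ, ‖v x‖ₑ * μ {x} ^ (α - 1) ∂μ = 0 := by
      rw [lintegral_congr_ae (g := fun _ => 0)]
      · simp
      · filter_upwards [h] with x hx; simp [hx]
    rw [z, add_zero, lintegral_countable _ Ac]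
    have e1 : ∑' x : {x // l {x} ≠ 0}, l {x.1} ^ α = ∑' x : A, l {x.1} ^ α := by
      rw [show ∑' x : {x // l {x} ≠ 0}, l {x.1} ^ α = _ from
        tsum_subtype {x | l {x} ≠ 0} (fun x => l {x} ^ α), tsum_subtype A (fun x => l {x} ^ α)]
      refine tsum_congr fun x => ?_
      by_cases h1 : l {x} = 0
      · simp [indicator, h1, hα]
      · have : x ∈ A := fun h2 => h1 (by rw [lx, h2, mul_zero])
        rw [indicator_of_mem (show x ∈ {x | l {x} ≠ 0} from h1), indicator_of_mem this]
    rw [e1]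
    refine tsum_congr fun x => ?_
    have hx : μ {x.1} ≠ 0 := x.2
    rw [lx, ENNReal.mul_rpow_of_nonneg _ _ hα.le, ga, mul_assoc]
    congr 1
    have := ENNReal.rpow_add (α - 1) 1 hx (measure_ne_top μ _)
    rw [sub_add_cancel, ENNReal.rpow_one] at this
    exact this
  · rw [key, l0] at h
    by_contra hne
    apply h
    have am : AEMeasurable (fun x => ‖v x‖ₑ * μ {x} ^ (α - 1)) (μ.restrict Aᶜ) := by
      refine AEMeasurable.congr (f := fun x => ‖v x‖ₑ * ⊤) (hv.enorm.mul_const _).aemeasurable ?_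
      filter_upwards [ae_restrict_mem Am.compl] with x hx
      rw [not_not.1 hx, ENNReal.zero_rpow_of_neg (by linarith)]
    have fin : ∫⁻ x in Aᶜ, ‖v x‖ₑ * μ {x} ^ (α - 1) ∂μ ≠ ⊤ :=
      ne_top_of_le_ne_top (Ne.symm hne) (setLIntegral_le_lintegral _ _)
    filter_upwards [ae_lt_top' am fin, ae_restrict_mem Am.compl] with x hx hxA
    rw [not_not.1 hxA, ENNReal.zero_rpow_of_neg (by linarith)] at hx
    by_contra hv0
    rw [ENNReal.mul_top (by simpa using hv0)] at hx
    exact lt_irrefl _ hx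

/-- `q = v ρ`: the vector measure `q` has the integrable density `v` with respect to `ρ`. -/
def IsRep {d : ℕ} (ρ : Measure (Euc d)) (q : Fin d → SignedMeasure (Euc d))
    (v : Euc d → Euc d) : Prop :=
  (∀ i, Integrable (fun x => v x i) ρ) ∧
    ∀ i, ∀ s : Set (Euc d), MeasurableSet s → q i s = ∫ x in s, v x i ∂ρ

/-- The density is unique up to a `ρ`-null set, so any measurable one computes `F(ρ,q)`. -/
lemma Fc_eq_vCost {d : ℕ} {α : ℝ} (hα : 0 < α) (hα' : α < 1) {ρ : Measure (Euc d)}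
    [IsProbabilityMeasure ρ] {q : Fin d → SignedMeasure (Euc d)} {v : Euc d → Euc d}
    (hv : Measurable v) (h : IsRep ρ q v) : Fc α ρ q = vCost α ρ v := by
  rw [← Ga_eq_vCost hα hα' ρ hv]
  refine le_antisymm (iInf₂_le v h) (le_iInf₂ fun w hw => le_of_eq ?_)
  congr 1
  refine withDensity_congr_ae ?_
  have : ∀ i, ∀ᵐ x ∂ρ, v x i = w x i := fun i =>
    Integrable.ae_eq_of_forall_setIntegral_eq _ _ (h.1 i) (hw.1 i) fun s hs _ => by
      rw [← h.2 i s hs, hw.2 i s hs]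
  filter_upwards [ae_all_iff.2 this] with x hx
  have : v x = w x := by ext i; exact hx i
  rw [this]

lemma ac_of_Fc_lt_top {d : ℕ} {α : ℝ} {ρ : Measure (Euc d)}
    {q : Fin d → SignedMeasure (Euc d)} (h : Fc α ρ q ≠ ⊤) (i : Fin d) :
    (q i).toJordanDecomposition.posPart ≪ ρ ∧ (q i).toJordanDecomposition.negPart ≪ ρ := by
  have : ∃ v, IsRep ρ q v := by
    by_contra hne
    push Not at hne
    exact h (iInf₂_eq_top.2 fun v hv => absurd hv (hne v))
  obtain ⟨v, -, hv⟩ := this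
  rw [← SignedMeasure.totalVariation_absolutelyContinuous_iff]
  refine Measure.AbsolutelyContinuous.mk fun s hs hs0 => ?_
  obtain ⟨P, hP, hP1, hP2, e1, e2⟩ := (q i).toJordanDecomposition_spec
  have z : ∀ P, MeasurableSet P → q i (P ∩ s) = 0 := fun P hP => by
    rw [hv i _ (hP.inter hs)]
    exact setIntegral_measure_zero _ (measure_mono_null inter_subset_right hs0)
  have h1 : (q i).toJordanDecomposition.posPart.real s = 0 := by
    rw [e1, SignedMeasure.toMeasureOfZeroLE_real_apply _ hP1 hP hs, z P hP]
  have h2 : (q i).toJordanDecomposition.negPart.real s = 0 := by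
    rw [e2, SignedMeasure.toMeasureOfLEZero_real_apply _ hP2 hP.compl hs, z _ hP.compl, neg_zero]
  rw [measureReal_eq_zero_iff] at h1 h2
  rw [SignedMeasure.totalVariation, Measure.add_apply, h1, h2, add_zero]

/-- The cost bounds the mass of the flux, atoms of a probability measure having weight at most `1`. -/
lemma lintegral_le_vCost {d : ℕ} {α : ℝ} (hα' : α < 1) (μ : Measure (Euc d))
    [IsProbabilityMeasure μ] (v : Euc d → Euc d) : ∫⁻ x, ‖v x‖ₑ ∂μ ≤ vCost α μ v := by
  refine lintegral_mono fun x => ?_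
  calc ‖v x‖ₑ = ‖v x‖ₑ * 1 := (mul_one _).symm
    _ ≤ _ := by
      gcongr
      rw [← neg_sub, ENNReal.rpow_neg, ENNReal.one_le_inv]
      exact ENNReal.rpow_le_one prob_le_one (by linarith)

lemma IsRep.smul {d : ℕ} {ρ : Measure (Euc d)} {q : Fin d → SignedMeasure (Euc d)}
    {v : Euc d → Euc d} (h : IsRep ρ q v) (c : ℝ) :
    IsRep ρ (fun i => c • q i) (fun x => c • v x) := by
  refine ⟨fun i => ?_, fun i s hs => ?_⟩
  · simpa using (h.1 i).const_mul c
  · simp [h.2 i s hs, integral_const_mul]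

lemma vCost_smul {d : ℕ} (α : ℝ) (μ : Measure (Euc d)) (v : Euc d → Euc d) {c : ℝ} (hc : 0 ≤ c) :
    vCost α μ (fun x => c • v x) = ENNReal.ofReal c * vCost α μ v := by
  unfold vCost
  rw [← lintegral_const_mul' _ _ ENNReal.ofReal_ne_top]
  refine lintegral_congr fun x => ?_
  rw [enorm_smul, Real.enorm_of_nonneg hc, mul_assoc]

/-- A measurable choice of velocities for a pair of finite energy, together with a measurable
integrable majorant of the energy, off a null set of times. -/
lemma exists_pair_data {d : ℕ} {α : ℝ} (hα : 0 < α) (hα' : α < 1) {Ω : Set (Euc d)}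
    {C : ℝ≥0∞} (hC : C < ⊤) {ρ : ℝ → Measure (Euc d)} {q : ℝ → Fin d → SignedMeasure (Euc d)}
    (h : MemD Ω ρ q) (hb : BigF α ρ q ≤ C) :
    ∃ (η : ℝ → Measure (Euc d)) (v : ℝ → Euc d → Euc d) (B : Set ℝ) (f : ℝ → ℝ),
      Measurable η ∧ (∀ t, IsProbabilityMeasure (η t)) ∧ (∀ t, η t Ωᶜ = 0) ∧
      (∀ t ∈ Icc (0:ℝ) 1, η t = ρ t) ∧ Measurable (Function.uncurry v) ∧ volume B = 0 ∧ (∀ t, 0 ≤ f t) ∧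
      IntegrableOn f (Icc 0 1) ∧ (∫ t in Icc (0:ℝ) 1, f t) ≤ C.toReal ∧
      ∀ t ∈ Icc (0:ℝ) 1, t ∉ B → IsRep (ρ t) (q t) (v t) ∧
        vCost α (ρ t) (v t) ≤ ENNReal.ofReal (f t) := by
  obtain ⟨h1, h2, -, h4, -, -⟩ := h
  set p : ℝ → ℝ := fun t => (projIcc (0:ℝ) 1 zero_le_one t : ℝ) with hp
  have pc : Continuous p := continuous_subtype_val.comp continuous_projIcc
  have pI : ∀ t, p t ∈ Icc (0:ℝ) 1 := fun t => (projIcc (0:ℝ) 1 zero_le_one t).2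
  have pe : ∀ t ∈ Icc (0:ℝ) 1, p t = t := fun t ht => by simp [hp, projIcc_of_mem _ ht]
  set η : ℝ → Measure (Euc d) := fun t => ρ (p t) with hη
  have ηp : ∀ t, IsProbabilityMeasure (η t) := fun t => (h1 _ (pI t)).1
  have ηm : Measurable η := measurable_of_weak fun f hf => (h2 f hf).comp_continuous pc pI
  have qm : ∀ i s, MeasurableSet s → Measurable fun t => q (p t) i s :=
    fun i s hs => (h4 i s hs).comp pc.measurable
  choose mP hP hPm hP0 hPd using fun i => exists_density (measurable_jordanPos (qm i)) ηm
  choose mN hN hNm hN0 hNd using fun i => exists_density (measurable_jordanNeg (qm i)) ηm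
  set AC : Set ℝ := ⋂ i, ({t | (q (p t) i).toJordanDecomposition.posPart ≪ η t} ∩
    {t | (q (p t) i).toJordanDecomposition.negPart ≪ η t}) with hAC
  have ACm : MeasurableSet AC := MeasurableSet.iInter fun i => (mP i).inter (mN i)
  set v : ℝ → Euc d → Euc d := fun t x => WithLp.toLp 2 fun i => hP i t x - hN i t x with hv
  have vm : Measurable (Function.uncurry v) := by
    refine (PiLp.continuous_toLp 2 _).measurable.comp (measurable_pi_lambda _ fun i => ?_)
    exact (hPm i).sub (hNm i)
  have aux : ∀ t (κ : Measure (Euc d)) (g : Euc d → ℝ), IsFiniteMeasure κ → Measurable g →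
      (∀ x, 0 ≤ g x) → κ = (η t).withDensity (fun x => ENNReal.ofReal (g x)) →
      Integrable g (η t) ∧ ∀ s, MeasurableSet s → κ.real s = ∫ x in s, g x ∂(η t) := by
    intro t κ g hκ gm g0 e
    refine ⟨⟨gm.aestronglyMeasurable, ?_⟩, fun s hs => ?_⟩
    · rw [hasFiniteIntegral_iff_ofReal (ae_of_all _ g0), ← setLIntegral_univ,
        ← withDensity_apply _ MeasurableSet.univ, ← e]
      exact measure_lt_top _ _
    · rw [integral_eq_lintegral_of_nonneg_ae (ae_of_all _ g0) gm.aestronglyMeasurable, Measure.real,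
        e, withDensity_apply _ hs]
  have rep : ∀ t ∈ AC, IsRep (η t) (q (p t)) (v t) := by
    intro t ht
    have ht' := mem_iInter.1 ht
    have a := fun i => aux t _ _ inferInstance ((hPm i).of_uncurry_left (x := t)) (hP0 i t) (hPd i t (ht' i).1)
    have b := fun i => aux t _ _ inferInstance ((hNm i).of_uncurry_left (x := t)) (hN0 i t) (hNd i t (ht' i).2)
    refine ⟨fun i => (a i).1.sub (b i).1, fun i s hs => ?_⟩
    rw [SignedMeasure.apply_eq_posPart_real_sub_negPart_real _ hs, (a i).2 s hs, (b i).2 s hs,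
      ← integral_sub (a i).1.integrableOn (b i).1.integrableOn]
  set G : ℝ → ℝ≥0∞ := fun t => if t ∈ AC then vCost α (η t) (v t) else ⊤ with hG
  have Gm : Measurable G := by
    refine Measurable.ite ACm ?_ measurable_const
    let R : ProbabilityTheory.Kernel ℝ (Euc d) := ⟨η, ηm⟩
    have : ProbabilityTheory.IsFiniteKernel R := ⟨1, by simp, fun t => by
      show η t univ ≤ 1; simp⟩
    have m : Measurable fun z : ℝ × Euc d => ‖Function.uncurry v z‖ₑ * η z.1 {z.2} ^ (α - 1) :=
      vm.enorm.mul ((measurable_atom ηm).pow_const _)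
    exact Measurable.lintegral_kernel_prod_right' (κ := R) m
  have GF : ∀ t ∈ Icc (0:ℝ) 1, G t = Fc α (ρ t) (q t) := by
    intro t ht
    have e : η t = ρ t := by simp only [hη]; rw [pe t ht]
    have := ηp t
    simp only [hG]
    split_ifs with hA
    · rw [← Fc_eq_vCost hα hα' vm.of_uncurry_left (rep t hA), e, pe t ht]
    · by_contra hne
      apply hA
      refine mem_iInter.2 fun i => ?_
      have := ac_of_Fc_lt_top (Ne.symm hne) i
      simp only [mem_inter_iff, mem_ofPred_eq]
      rw [e, pe t ht]
      exact this
  have hI : ∫⁻ t in Icc (0:ℝ) 1, G t ≤ C := by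
    rw [setLIntegral_congr_fun measurableSet_Icc GF]; exact hb
  have fin : ∀ᵐ t ∂(volume.restrict (Icc (0:ℝ) 1)), G t < ⊤ :=
    ae_lt_top Gm (hI.trans_lt hC).ne
  refine ⟨η, v, Icc 0 1 ∩ {t | G t = ⊤}, fun t => (G t).toReal, ηm, ηp,
    fun t => (h1 _ (pI t)).2, fun t ht => by
    simp only [hη]; rw [pe t ht], vm, ?_, fun t => ENNReal.toReal_nonneg, ?_, ?_, ?_⟩
  · rw [ae_restrict_iff' measurableSet_Icc, ae_iff] at fin
    convert fin using 2
    ext t; simp [and_assoc]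
  · exact integrable_toReal_of_lintegral_ne_top Gm.aemeasurable (hI.trans_lt hC).ne
  · rw [integral_toReal Gm.aemeasurable fin]
    exact ENNReal.toReal_mono hC.ne hI
  · intro t ht hB
    have hB' : G t ≠ ⊤ := fun e => hB ⟨ht, e⟩
    have hA : t ∈ AC := by by_contra hA; exact hB' (by simp [hG, hA])
    have e : η t = ρ t := by simp only [hη]; rw [pe t ht]
    have r := rep t hA
    rw [e, pe t ht] at r
    refine ⟨r, ?_⟩
    rw [ENNReal.ofReal_toReal hB']
    simp [hG, hA, e]

/-! ### Integrals against signed measures -/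

/-- Minimality of the Jordan decomposition among differences of finite measures. -/
lemma jordan_le {E : Type*} [MeasurableSpace E] {q : SignedMeasure E} {μ₁ μ₂ : Measure E}
    [IsFiniteMeasure μ₁] [IsFiniteMeasure μ₂]
    (h : ∀ s, MeasurableSet s → q s = μ₁.real s - μ₂.real s) :
    q.toJordanDecomposition.posPart ≤ μ₁ ∧ q.toJordanDecomposition.negPart ≤ μ₂ := by
  obtain ⟨P, hP, hP1, hP2, e1, e2⟩ := q.toJordanDecomposition_spec
  constructor
  · refine Measure.le_intro fun s hs _ => ?_
    rw [← ENNReal.toReal_le_toReal (measure_ne_top _ _) (measure_ne_top _ _)]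
    change q.toJordanDecomposition.posPart.real s ≤ μ₁.real s
    rw [e1, SignedMeasure.toMeasureOfZeroLE_real_apply _ hP1 hP hs, h _ (hP.inter hs)]
    have : μ₁.real (P ∩ s) ≤ μ₁.real s := measureReal_mono inter_subset_right
    linarith [measureReal_nonneg (μ := μ₂) (s := P ∩ s)]
  · refine Measure.le_intro fun s hs _ => ?_
    rw [← ENNReal.toReal_le_toReal (measure_ne_top _ _) (measure_ne_top _ _)]
    change q.toJordanDecomposition.negPart.real s ≤ μ₂.real s
    rw [e2, SignedMeasure.toMeasureOfLEZero_real_apply _ hP2 hP.compl hs, h _ (hP.compl.inter hs)]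
    have : μ₂.real (Pᶜ ∩ s) ≤ μ₂.real s := measureReal_mono inter_subset_right
    linarith [measureReal_nonneg (μ := μ₁) (s := Pᶜ ∩ s)]

/-- Any representation of a signed measure as a difference of two finite measures may replace
the Jordan decomposition in `sInt`. -/
lemma sInt_eq_sub {E : Type*} [MeasurableSpace E] {q : SignedMeasure E} {μ₁ μ₂ : Measure E}
    [IsFiniteMeasure μ₁] [IsFiniteMeasure μ₂]
    (h : ∀ s, MeasurableSet s → q s = μ₁.real s - μ₂.real s) {g : E → ℝ}
    (h1 : Integrable g μ₁) (h2 : Integrable g μ₂) :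
    sInt g q = ∫ x, g x ∂μ₁ - ∫ x, g x ∂μ₂ := by
  obtain ⟨l1, l2⟩ := jordan_le h
  have e : q.toJordanDecomposition.posPart + μ₂ = μ₁ + q.toJordanDecomposition.negPart := by
    ext s hs
    rw [← ENNReal.toReal_eq_toReal_iff' (measure_ne_top _ _) (measure_ne_top _ _)]
    change (q.toJordanDecomposition.posPart + μ₂).real s =
      (μ₁ + q.toJordanDecomposition.negPart).real s
    rw [measureReal_add_apply, measureReal_add_apply]
    have a := h s hs
    rw [q.apply_eq_posPart_real_sub_negPart_real hs] at a
    linarith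
  have i1 := h1.mono_measure l1
  have i2 := h2.mono_measure l2
  have : ∫ x, g x ∂(q.toJordanDecomposition.posPart + μ₂) =
      ∫ x, g x ∂(μ₁ + q.toJordanDecomposition.negPart) := by rw [e]
  rw [integral_add_measure i1 h2, integral_add_measure h1 i2] at this
  unfold sInt
  linarith

lemma sInt_eq_integral {E : Type*} [MeasurableSpace E] {q : SignedMeasure E} {ρ : Measure E}
    {h g : E → ℝ} (hm : Measurable h) (hi : Integrable h ρ)
    (hq : ∀ s, MeasurableSet s → q s = ∫ x in s, h x ∂ρ)
    (hgh : Integrable (fun x => h x * g x) ρ) :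
    sInt g q = ∫ x, h x * g x ∂ρ := by
  set μ₁ := ρ.withDensity fun x => ENNReal.ofReal (h x) with hμ1
  set μ₂ := ρ.withDensity fun x => ENNReal.ofReal (-h x) with hμ2
  have : IsFiniteMeasure μ₁ := isFiniteMeasure_withDensity_ofReal hi.2
  have : IsFiniteMeasure μ₂ := isFiniteMeasure_withDensity_ofReal hi.neg.2
  have dec : ∀ s, MeasurableSet s → q s = μ₁.real s - μ₂.real s := fun s hs => by
    rw [hq s hs, integral_eq_lintegral_pos_part_sub_lintegral_neg_part hi.integrableOn]
    simp only [Measure.real, hμ1, hμ2, withDensity_apply _ hs]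
  have p1 : ∀ x, (ENNReal.ofReal (h x)).toReal • g x = {x | 0 < h x}.indicator (fun x => h x * g x) x := by
    intro x
    rw [ENNReal.toReal_ofReal', smul_eq_mul]
    by_cases hx : 0 < h x
    · rw [indicator_of_mem (show x ∈ {x | 0 < h x} from hx), max_eq_left hx.le]
    · rw [indicator_of_notMem (show x ∉ {x | 0 < h x} from hx), max_eq_right (not_lt.1 hx), zero_mul]
  have p2 : ∀ x, (ENNReal.ofReal (-h x)).toReal • g x = -({x | h x < 0}.indicator (fun x => h x * g x) x) := by
    intro x
    rw [ENNReal.toReal_ofReal', smul_eq_mul]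
    by_cases hx : h x < 0
    · rw [indicator_of_mem (show x ∈ {x | h x < 0} from hx), max_eq_left (by linarith), neg_mul]
    · rw [indicator_of_notMem (show x ∉ {x | h x < 0} from hx), max_eq_right (by linarith), zero_mul,
        neg_zero]
  have hm' : Measurable fun x => ENNReal.ofReal (-h x) := hm.neg.ennreal_ofReal
  have i1 : Integrable (fun x => (ENNReal.ofReal (h x)).toReal • g x) ρ := by
    simp_rw [p1]; exact hgh.indicator (measurableSet_lt measurable_const hm)
  have i2 : Integrable (fun x => (ENNReal.ofReal (-h x)).toReal • g x) ρ := by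
    simp_rw [p2]; exact (hgh.indicator (measurableSet_lt hm measurable_const)).neg
  rw [sInt_eq_sub dec
    ((integrable_withDensity_iff_integrable_smul' hm.ennreal_ofReal (by simp)).2 i1)
    ((integrable_withDensity_iff_integrable_smul' hm' (by simp)).2 i2),
    integral_withDensity_eq_integral_toReal_smul hm.ennreal_ofReal (by simp),
    integral_withDensity_eq_integral_toReal_smul hm' (by simp),
    ← integral_sub i1 i2]
  refine integral_congr_ae (ae_of_all _ fun x => ?_)
  simp only [p1, p2, indicator, mem_ofPred_eq]
  rcases lt_trichotomy (h x) 0 with hx | hx | hx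
  · simp [hx, not_lt.2 hx.le]
  · simp [hx]
  · simp [hx, not_lt.2 hx.le]

/-! ### Velocity form of the continuity equation -/

/-- A measurable curve of probability measures on `Ω` with a measurable velocity field whose
`L¹` norm at almost every time `t` is bounded by the integrable function `f`. -/
structure VPair {d : ℕ} (Ω : Set (Euc d)) (η : ℝ → Measure (Euc d)) (v : ℝ → Euc d → Euc d)
    (f : ℝ → ℝ) : Prop where
  meas : Measurable η
  prob : ∀ t, IsProbabilityMeasure (η t)
  supp : ∀ t, η t Ωᶜ = 0
  vmeas : Measurable (Function.uncurry v)
  nonneg : ∀ t, 0 ≤ f t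
  fint : IntegrableOn f (Icc 0 1)
  bound : ∀ᵐ t ∂(volume.restrict (Icc (0:ℝ) 1)), ∫⁻ x, ‖v t x‖ₑ ∂(η t) ≤ ENNReal.ofReal (f t)

/-- The continuity equation for the flux `v ρ`, with both terms gathered. -/
def VCont {d : ℕ} (η : ℝ → Measure (Euc d)) (v : ℝ → Euc d → Euc d) : Prop :=
  ∀ φ : ℝ × Euc d → ℝ, ContDiff ℝ 1 φ → (∀ x, φ (0, x) = 0) → (∀ x, φ (1, x) = 0) →
    ∫ t in Icc (0:ℝ) 1, ∫ x, fderiv ℝ φ (t, x) (1, v t x) ∂(η t) = 0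

lemma sm_integral {d : ℕ} {η : ℝ → Measure (Euc d)} (hη : Measurable η)
    [∀ t, IsProbabilityMeasure (η t)] {F : ℝ × Euc d → ℝ} (hF : Measurable F) :
    StronglyMeasurable fun s => ∫ x, F (s, x) ∂(η s) := by
  let R : ProbabilityTheory.Kernel ℝ (Euc d) := ⟨η, hη⟩
  have : ProbabilityTheory.IsFiniteKernel R := ⟨1, by simp, fun t => by
    show η t univ ≤ 1; simp⟩
  exact hF.stronglyMeasurable.integral_kernel_prod_right' (κ := R)

lemma VPair.integrable_norm {d : ℕ} {Ω : Set (Euc d)} {η : ℝ → Measure (Euc d)}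
    {v : ℝ → Euc d → Euc d} {f : ℝ → ℝ} (h : VPair Ω η v f) {t : ℝ}
    (ht : ∫⁻ x, ‖v t x‖ₑ ∂(η t) ≤ ENNReal.ofReal (f t)) :
    Integrable (v t) (η t) ∧ ∫ x, ‖v t x‖ ∂(η t) ≤ f t := by
  have hm : Measurable (v t) := h.vmeas.of_uncurry_left
  refine ⟨⟨hm.aestronglyMeasurable, ht.trans_lt ENNReal.ofReal_lt_top⟩, ?_⟩
  rw [integral_norm_eq_lintegral_enorm hm.aestronglyMeasurable]
  exact ENNReal.toReal_le_of_le_ofReal (h.nonneg t) ht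

/-- Bound for the space integral of a linear functional of `(c, v)`. -/
lemma VPair.integral_le {d : ℕ} {Ω : Set (Euc d)} {η : ℝ → Measure (Euc d)}
    {v : ℝ → Euc d → Euc d} {f : ℝ → ℝ} (h : VPair Ω η v f) {t : ℝ}
    (ht : ∫⁻ x, ‖v t x‖ₑ ∂(η t) ≤ ENNReal.ofReal (f t))
    {A : Euc d → (ℝ × Euc d →L[ℝ] ℝ)} (hA : Measurable A) {K : ℝ}
    (hK : ∀ x ∈ Ω, ‖A x‖ ≤ K) (c : ℝ) :
    Integrable (fun x => A x (c, v t x)) (η t) ∧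
      |∫ x, A x (c, v t x) ∂(η t)| ≤ K * (|c| + f t) := by
  have := h.prob t
  obtain ⟨i1, i2⟩ := h.integrable_norm ht
  have hm : Measurable (v t) := h.vmeas.of_uncurry_left
  have hae : ∀ᵐ x ∂(η t), x ∈ Ω := by rw [ae_iff]; exact h.supp t
  have K0 : 0 ≤ K := by
    obtain ⟨x, hx⟩ := hae.exists
    exact (norm_nonneg _).trans (hK x hx)
  have hb : ∀ᵐ x ∂(η t), ‖A x (c, v t x)‖ ≤ K * (|c| + ‖v t x‖) := by
    filter_upwards [hae] with x hx
    refine (ContinuousLinearMap.le_opNorm _ _).trans ?_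
    refine mul_le_mul (hK x hx) ?_ (norm_nonneg _) K0
    rw [Prod.norm_def]
    exact max_le (by simp) (by simp)
  have ib : Integrable (fun x => K * (|c| + ‖v t x‖)) (η t) :=
    ((integrable_const _).add i1.norm).const_mul _
  have ii : Integrable (fun x => A x (c, v t x)) (η t) := by
    refine ib.mono' ?_ hb
    have : Continuous fun z : (ℝ × Euc d →L[ℝ] ℝ) × (ℝ × Euc d) => z.1 z.2 := by fun_prop
    exact (this.measurable.comp (hA.prodMk (measurable_const.prodMk hm))).aestronglyMeasurable
  refine ⟨ii, ?_⟩
  rw [← Real.norm_eq_abs]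
  refine (norm_integral_le_of_norm_le ib hb).trans ?_
  rw [integral_const_mul, integral_add (integrable_const _) i1.norm]
  refine mul_le_mul_of_nonneg_left ?_ K0
  simp only [integral_const, probReal_univ, smul_eq_mul, one_mul]
  linarith

lemma fderiv_bound {d : ℕ} {φ : ℝ × Euc d → ℝ} (hφ : ContDiff ℝ 1 φ) {S : Set (ℝ × Euc d)}
    (hS : IsCompact S) : ∃ K : ℝ, 0 ≤ K ∧ ∀ z ∈ S, ‖fderiv ℝ φ z‖ ≤ K := by
  have hc : Continuous fun z : ℝ × Euc d => fderiv ℝ φ z := hφ.continuous_fderiv one_ne_zero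
  obtain ⟨K, hK⟩ := (hS.image hc).isBounded.exists_norm_le
  exact ⟨max K 0, le_max_right _ _, fun z hz => (hK _ ⟨z, hz, rfl⟩).trans (le_max_left _ _)⟩

lemma VCont_of_ContEq {d : ℕ} {Ω : Set (Euc d)} (hΩ : IsCompact Ω)
    {ρ η : ℝ → Measure (Euc d)} {q : ℝ → Fin d → SignedMeasure (Euc d)}
    {v : ℝ → Euc d → Euc d} {f : ℝ → ℝ} (h : VPair Ω η v f)
    (hρ : ∀ t ∈ Icc (0:ℝ) 1, η t = ρ t)
    (hr : ∀ᵐ t ∂(volume.restrict (Icc (0:ℝ) 1)), IsRep (ρ t) (q t) (v t))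
    (hc : ContEq ρ q) : VCont η v := by
  intro φ hφ h0 h1
  refine Eq.trans ?_ (hc φ hφ h0 h1)
  rw [intervalIntegral.integral_of_le zero_le_one, ← integral_Icc_eq_integral_Ioc]
  refine integral_congr_ae ?_
  filter_upwards [hr, h.bound, ae_restrict_mem measurableSet_Icc] with t rt bt ht
  have := h.prob t
  rw [← hρ t ht] at rt ⊢
  have hS : IsCompact (Icc (0:ℝ) 1 ×ˢ Ω) := isCompact_Icc.prod hΩ
  obtain ⟨K, K0, hK⟩ := fderiv_bound hφ hS
  have dc : Continuous fun z : ℝ × Euc d => fderiv ℝ φ z := hφ.continuous_fderiv one_ne_zero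
  have Am : Measurable fun x => fderiv ℝ φ (t, x) := (dc.comp (by fun_prop)).measurable
  have vm : Measurable (v t) := h.vmeas.of_uncurry_left
  obtain ⟨i1, -⟩ := h.integrable_norm bt
  have hae : ∀ᵐ x ∂(η t), x ∈ Ω := by rw [ae_iff]; exact h.supp t
  have gi : ∀ i, Continuous fun x : Euc d => fderiv ℝ φ (t, x) ((0 : ℝ), EuclideanSpace.single i (1:ℝ)) :=
    fun i => by fun_prop
  have vi : ∀ i, Integrable (fun x : Euc d => v t x i * fderiv ℝ φ (t, x) ((0 : ℝ), EuclideanSpace.single i (1:ℝ))) (η t) := by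
    intro i
    refine (rt.1 i).mul_bdd (c := K) (gi i).measurable.aestronglyMeasurable ?_
    filter_upwards [hae] with x hx
    refine (ContinuousLinearMap.le_opNorm _ _).trans ?_
    have : ‖((0:ℝ), (EuclideanSpace.single i (1:ℝ) : Euc d))‖ ≤ 1 := by simp [Prod.norm_def]
    calc _ ≤ K * 1 := mul_le_mul (hK _ ⟨ht, hx⟩) this (norm_nonneg _) K0
      _ = K := mul_one K
  have ti : Integrable (fun x => fderiv ℝ φ (t, x) ((1 : ℝ), (0 : Euc d))) (η t) := by
    refine Integrable.of_bound (C := K) (by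
      have : Continuous fun x => fderiv ℝ φ (t, x) ((1 : ℝ), (0 : Euc d)) := by fun_prop
      exact this.measurable.aestronglyMeasurable) ?_
    filter_upwards [hae] with x hx
    refine (ContinuousLinearMap.le_opNorm _ _).trans ?_
    have : ‖((1:ℝ), (0 : Euc d))‖ ≤ 1 := by simp [Prod.norm_def]
    calc _ ≤ K * 1 := mul_le_mul (hK _ ⟨ht, hx⟩) this (norm_nonneg _) K0
      _ = K := mul_one K
  have e : ∀ i, sInt (fun x => fderiv ℝ φ (t, x) ((0 : ℝ), EuclideanSpace.single i 1)) (q t i) =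
      ∫ x, v t x i * fderiv ℝ φ (t, x) ((0 : ℝ), EuclideanSpace.single i 1) ∂(η t) := fun i =>
    sInt_eq_integral (by fun_prop) (rt.1 i) (rt.2 i) (vi i)
  simp_rw [e]
  rw [← integral_finsetSum _ fun i _ => vi i, ← integral_add ti (integrable_finsetSum _ fun i _ => vi i)]
  refine integral_congr_ae (ae_of_all _ fun x => ?_)
  have hv : ((1:ℝ), v t x) = ((1:ℝ), (0:Euc d)) + ∑ i, v t x i • ((0:ℝ), (EuclideanSpace.single i (1:ℝ) : Euc d)) := by
    have : v t x = ∑ i, v t x i • (EuclideanSpace.single i (1:ℝ) : Euc d) := by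
      ext j
      simp [Finset.sum_apply, Pi.single_apply]
    refine Prod.ext ?_ ?_
    · simp [Prod.fst_sum]
    · simpa [Prod.snd_sum] using this
  simp only
  rw [hv, map_add, map_sum]
  simp only [map_smul, smul_eq_mul]

/-! ### Time changes preserve the continuity equation -/

lemma abs_primitive_sub_le {e g : ℝ → ℝ} (he : IntegrableOn e (Icc 0 1))
    (hg : IntegrableOn g (Icc 0 1)) {s : ℝ} (hs : s ∈ Icc (0:ℝ) 1) :
    |(∫ r in (0:ℝ)..s, g r) - ∫ r in (0:ℝ)..s, e r| ≤ ∫ r in Icc (0:ℝ) 1, ‖e r - g r‖ := by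
  have sub : Ioc 0 s ⊆ Icc (0:ℝ) 1 := fun x hx => ⟨hx.1.le, hx.2.trans hs.2⟩
  rw [intervalIntegral.integral_of_le hs.1, intervalIntegral.integral_of_le hs.1,
    ← integral_sub (hg.mono_set sub) (he.mono_set sub), ← Real.norm_eq_abs]
  refine (norm_integral_le_integral_norm _).trans ?_
  simp_rw [norm_sub_rev (g _)]
  exact setIntegral_mono_set (he.sub hg).norm (ae_of_all _ fun _ => norm_nonneg _)
    (Eventually.of_forall sub)

/-- The continuity equation may be tested with `Φ(T(s), x)` when `T` is a primitive of an
integrable function `e` with total integral one: `T` is approximated by `C¹` functions with the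
same boundary values. -/
lemma VCont.test_primitive {d : ℕ} {Ω : Set (Euc d)} (hΩ : IsCompact Ω) {η : ℝ → Measure (Euc d)}
    {v : ℝ → Euc d → Euc d} {f : ℝ → ℝ} (h : VPair Ω η v f) (hc : VCont η v) {e : ℝ → ℝ}
    (he : IntegrableOn e (Icc 0 1)) (he1 : ∫ r in (0:ℝ)..1, e r = 1)
    (hT : ∀ s ∈ Icc (0:ℝ) 1, ∫ r in (0:ℝ)..s, e r ∈ Icc (0:ℝ) 1)
    {Φ : ℝ × Euc d → ℝ} (hΦ : ContDiff ℝ 1 Φ) (h0 : ∀ x, Φ (0, x) = 0) (h1 : ∀ x, Φ (1, x) = 0) :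
    ∫ s in Icc (0:ℝ) 1, ∫ x, fderiv ℝ Φ (∫ r in (0:ℝ)..s, e r, x) (e s, v s x) ∂(η s) = 0 := by
  set T : ℝ → ℝ := fun s => ∫ r in (0:ℝ)..s, e r with hTd
  set D : ℝ → ℝ := fun s => ∫ x, fderiv ℝ Φ (T s, x) (e s, v s x) ∂(η s) with hD
  change ∫ s in Icc (0:ℝ) 1, D s = 0
  by_cases Di : IntegrableOn D (Icc 0 1)
  swap
  · exact integral_undef Di
  have hS : IsCompact (Icc (-1:ℝ) 2 ×ˢ Ω) := isCompact_Icc.prod hΩ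
  obtain ⟨K, K0, hK⟩ := fderiv_bound hΦ hS
  have Pc : Continuous fun z : ℝ × Euc d => fderiv ℝ Φ z := hΦ.continuous_fderiv one_ne_zero
  have uc := Metric.uniformContinuousOn_iff.1
    (hS.uniformContinuousOn_of_continuous Pc.continuousOn)
  have key : ∀ ε > 0, |∫ s in Icc (0:ℝ) 1, D s| ≤
      ε * ((∫ s in Icc (0:ℝ) 1, (|e s| + f s)) + K) := by
    intro ε hε
    obtain ⟨δ, hδ, huc⟩ := uc ε hε
    set δ' : ℝ := min (min (δ / 2) ε) 1 with hδ'
    have δ'0 : 0 < δ' := lt_min (lt_min (by linarith) hε) one_pos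
    obtain ⟨g0, hg0, ig0⟩ := Integrable.exists_boundedContinuous_integral_sub_le he
      (half_pos δ'0)
    set c : ℝ := 1 - ∫ r in Icc (0:ℝ) 1, g0 r with hcd
    have he1' : ∫ r in Icc (0:ℝ) 1, e r = 1 := by
      rw [integral_Icc_eq_integral_Ioc, ← intervalIntegral.integral_of_le zero_le_one, he1]
    have cb : |c| ≤ δ' / 2 := by
      have : c = ∫ r in Icc (0:ℝ) 1, (e r - g0 r) := by rw [integral_sub he ig0, he1']
      rw [this, ← Real.norm_eq_abs]
      exact (norm_integral_le_integral_norm _).trans hg0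
    set g : ℝ → ℝ := fun r => g0 r + c with hg
    have gc : Continuous g := g0.continuous.add continuous_const
    have ig : IntegrableOn g (Icc 0 1) := gc.integrableOn_Icc
    have ieg0 : IntegrableOn (fun r => ‖e r - g0 r‖) (Icc 0 1) := (he.sub ig0).norm
    have ieg : IntegrableOn (fun r => ‖e r - g r‖) (Icc 0 1) := (he.sub ig).norm
    have iK : IntegrableOn (fun _ : ℝ => |c|) (Icc (0:ℝ) 1) := by simp
    have hgd : ∫ r in Icc (0:ℝ) 1, ‖e r - g r‖ ≤ δ' := by
      calc ∫ r in Icc (0:ℝ) 1, ‖e r - g r‖ ≤ ∫ r in Icc (0:ℝ) 1, (‖e r - g0 r‖ + |c|) := by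
            refine integral_mono (he.sub ig).norm ((he.sub ig0).norm.add iK) fun r => ?_
            simp only [hg]
            rw [← sub_sub, ← Real.norm_eq_abs]
            exact norm_sub_le _ _
        _ = (∫ r in Icc (0:ℝ) 1, ‖e r - g0 r‖) + |c| := by
            rw [integral_add ieg0 iK]; simp
        _ ≤ δ' := by linarith
    have hg1 : ∫ r in (0:ℝ)..1, g r = 1 := by
      rw [intervalIntegral.integral_of_le zero_le_one, ← integral_Icc_eq_integral_Ioc]
      simp only [hg]
      rw [integral_add ig0 (by simp)]
      simp [hcd]
    set G : ℝ → ℝ := fun s => ∫ r in (0:ℝ)..s, g r with hG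
    have Gd : ∀ s, HasDerivAt G (g s) s := fun s =>
      (Continuous.integral_hasStrictDerivAt gc 0 s).hasDerivAt
    have GC : ContDiff ℝ 1 G := by
      rw [contDiff_one_iff_deriv]
      refine ⟨fun s => (Gd s).differentiableAt, ?_⟩
      have : deriv G = g := funext fun s => (Gd s).deriv
      rwa [this]
    have GT : ∀ s ∈ Icc (0:ℝ) 1, |G s - T s| ≤ δ' := fun s hs =>
      (abs_primitive_sub_le he ig hs).trans hgd
    have Gr : ∀ s ∈ Icc (0:ℝ) 1, G s ∈ Icc (-1:ℝ) 2 := fun s hs => by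
      have a := abs_le.1 (GT s hs)
      have b := hT s hs
      have : δ' ≤ 1 := min_le_right _ _
      exact ⟨by linarith [b.1], by linarith [b.2]⟩
    have Tr : ∀ s ∈ Icc (0:ℝ) 1, T s ∈ Icc (-1:ℝ) 2 := fun s hs => by
      have b := hT s hs
      exact ⟨by linarith [b.1], by linarith [b.2]⟩
    set Dg : ℝ → ℝ := fun s => ∫ x, fderiv ℝ Φ (G s, x) (g s, v s x) ∂(η s) with hDg
    have Dg0 : ∫ s in Icc (0:ℝ) 1, Dg s = 0 := by
      have hψ : ContDiff ℝ 1 fun z : ℝ × Euc d => Φ (G z.1, z.2) :=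
        hΦ.comp ((GC.comp contDiff_fst).prodMk contDiff_snd)
      refine Eq.trans ?_ (hc _ hψ (fun x => by simp [hG, h0]) (fun x => by simp [hG, hg1, h1]))
      refine integral_congr_ae (ae_of_all _ fun s => ?_)
      refine integral_congr_ae (ae_of_all _ fun x => ?_)
      simp only
      have d1 : HasFDerivAt (fun z : ℝ × Euc d => (G z.1, z.2))
          (((ContinuousLinearMap.toSpanSingleton ℝ (g s)).comp
            (ContinuousLinearMap.fst ℝ ℝ (Euc d))).prod (ContinuousLinearMap.snd ℝ ℝ (Euc d)))
          (s, x) := by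
        have a : HasFDerivAt (fun z : ℝ × Euc d => G z.1) _ (s, x) :=
          HasFDerivAt.comp (g := G) (s, x) (Gd s).hasFDerivAt hasFDerivAt_fst
        have b : HasFDerivAt (fun z : ℝ × Euc d => z.2)
          (ContinuousLinearMap.snd ℝ ℝ (Euc d)) (s, x) := hasFDerivAt_snd
        exact a.prodMk b
      have d2 := ((hΦ.differentiable one_ne_zero (G s, x)).hasFDerivAt).comp (s, x) d1
      have d3 : fderiv ℝ (fun z : ℝ × Euc d => Φ (G z.1, z.2)) (s, x) = _ := d2.fderiv
      rw [d3]
      simp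
    have Dgm : AEStronglyMeasurable Dg (volume.restrict (Icc 0 1)) := by
      have : ∀ t, IsProbabilityMeasure (η t) := h.prob
      refine (sm_integral h.meas (F := fun z => fderiv ℝ Φ (G z.1, z.2) (g z.1, v z.1 z.2))
        ?_).aestronglyMeasurable
      have : Continuous fun z : (ℝ × Euc d →L[ℝ] ℝ) × (ℝ × Euc d) => z.1 z.2 := by fun_prop
      refine this.measurable.comp (Measurable.prodMk ?_ (Measurable.prodMk ?_ h.vmeas))
      · exact (Pc.comp ((GC.continuous.comp continuous_fst).prodMk continuous_snd)).measurable
      · exact (gc.comp continuous_fst).measurable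
    have bd : ∀ᵐ s ∂(volume.restrict (Icc (0:ℝ) 1)),
        ‖D s - Dg s‖ ≤ ε * (|e s| + f s) + K * ‖e s - g s‖ := by
      filter_upwards [h.bound, ae_restrict_mem measurableSet_Icc] with s bs hs
      have := h.prob s
      have am : ∀ r, Measurable fun x : Euc d => fderiv ℝ Φ (r, x) := fun r =>
        (Pc.comp (by fun_prop)).measurable
      have kT : ∀ x ∈ Ω, ‖fderiv ℝ Φ (T s, x)‖ ≤ K := fun x hx => hK _ ⟨Tr s hs, hx⟩
      have kG : ∀ x ∈ Ω, ‖fderiv ℝ Φ (G s, x)‖ ≤ K := fun x hx => hK _ ⟨Gr s hs, hx⟩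
      have kd : ∀ x ∈ Ω, ‖fderiv ℝ Φ (T s, x) - fderiv ℝ Φ (G s, x)‖ ≤ ε := fun x hx => by
        rw [← dist_eq_norm]
        refine (huc _ ⟨Tr s hs, hx⟩ _ ⟨Gr s hs, hx⟩ ?_).le
        have : δ' ≤ δ / 2 := (min_le_left _ _).trans (min_le_left _ _)
        rw [Prod.dist_eq, dist_self, dist_comm, Real.dist_eq]
        exact max_lt (by linarith [GT s hs]) hδ
      obtain ⟨i1, -⟩ := h.integral_le bs (am (T s)) kT (e s)
      obtain ⟨i2, -⟩ := h.integral_le bs (am (G s)) kG (g s)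
      obtain ⟨i3, -⟩ := h.integral_le bs (am (G s)) kG (e s)
      obtain ⟨-, b4⟩ := h.integral_le bs ((am (T s)).sub (am (G s))) kd (e s)
      have hae : ∀ᵐ x ∂(η s), x ∈ Ω := by rw [ae_iff]; exact h.supp s
      have b5 : ‖∫ x, (fderiv ℝ Φ (G s, x) (e s, v s x) - fderiv ℝ Φ (G s, x) (g s, v s x)) ∂(η s)‖
          ≤ K * ‖e s - g s‖ := by
        have := norm_integral_le_of_norm_le_const (μ := η s) (C := K * ‖e s - g s‖)
          (f := fun x => fderiv ℝ Φ (G s, x) (e s, v s x) - fderiv ℝ Φ (G s, x) (g s, v s x)) (by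
            filter_upwards [hae] with x hx
            rw [← map_sub, Prod.mk_sub_mk, sub_self]
            refine (ContinuousLinearMap.le_opNorm _ _).trans ?_
            refine mul_le_mul (kG x hx) ?_ (norm_nonneg _) K0
            simp [Prod.norm_def])
        simpa using this
      have e1 : D s - Dg s = (∫ x, (fderiv ℝ Φ (T s, x) - fderiv ℝ Φ (G s, x)) (e s, v s x) ∂(η s)) +
          ∫ x, (fderiv ℝ Φ (G s, x) (e s, v s x) - fderiv ℝ Φ (G s, x) (g s, v s x)) ∂(η s) := by
        simp only [FunLike.coe_sub, Pi.sub_apply]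
        rw [integral_sub i1 i3, integral_sub i3 i2]
        ring
      rw [e1]
      refine (norm_add_le _ _).trans (add_le_add ?_ b5)
      rw [Real.norm_eq_abs]
      exact b4
    have ie : IntegrableOn (fun s => |e s| + f s) (Icc 0 1) := he.norm.add h.fint
    have ib : IntegrableOn (fun s => ε * (|e s| + f s) + K * ‖e s - g s‖) (Icc 0 1) :=
      (ie.const_mul _).add ((he.sub ig).norm.const_mul _)
    have idd : IntegrableOn (fun s => D s - Dg s) (Icc 0 1) :=
      Integrable.mono' ib (Di.aestronglyMeasurable.sub Dgm) bd
    have iDg : IntegrableOn Dg (Icc 0 1) := by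
      have := Di.sub idd
      refine this.congr (ae_of_all _ fun s => ?_)
      simp
    have : ∫ s in Icc (0:ℝ) 1, D s = ∫ s in Icc (0:ℝ) 1, (D s - Dg s) := by
      rw [integral_sub Di iDg, Dg0, sub_zero]
    rw [this, ← Real.norm_eq_abs]
    refine (norm_integral_le_of_norm_le ib bd).trans ?_
    rw [integral_add (ie.const_mul _) (ieg.const_mul _), integral_const_mul,
      integral_const_mul]
    have : δ' ≤ ε := (min_le_left _ _).trans (min_le_right _ _)
    nlinarith [mul_le_mul_of_nonneg_left (hgd.trans this) K0]
  set L := (∫ s in Icc (0:ℝ) 1, (|e s| + f s)) + K with hL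
  have L0 : 0 ≤ L := by
    have : 0 ≤ ∫ s in Icc (0:ℝ) 1, (|e s| + f s) :=
      integral_nonneg fun s => add_nonneg (abs_nonneg _) (h.nonneg s)
    linarith
  have : |∫ s in Icc (0:ℝ) 1, D s| ≤ 0 := by
    refine le_of_forall_pos_le_add fun ε hε => ?_
    refine (key (ε / (L + 1)) (by positivity)).trans ?_
    rw [zero_add, div_mul_eq_mul_div, div_le_iff₀ (by linarith)]
    nlinarith
  exact abs_nonpos_iff.1 this

/-- The continuity equation is preserved by a time change `φ` inverse to `T s = ∫ r in 0..s, e r`: after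
the change of variables `s = φ t`, the test function becomes `Φ(T(s), x)`. -/
lemma VCont.reparam {d : ℕ} {Ω : Set (Euc d)} (hΩ : IsCompact Ω) {η : ℝ → Measure (Euc d)}
    {v : ℝ → Euc d → Euc d} {f : ℝ → ℝ} (h : VPair Ω η v f) (hc : VCont η v) {φ e : ℝ → ℝ}
    (hr : ∀ t, φ t ∈ Icc (0:ℝ) 1)
    (he : IntegrableOn e (Icc 0 1)) (he1 : ∫ r in (0:ℝ)..1, e r = 1)
    (hT1 : ∀ t ∈ Icc (0:ℝ) 1, ∫ r in (0:ℝ)..φ t, e r = t)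
    (hT2 : ∀ s ∈ Icc (0:ℝ) 1, φ (∫ r in (0:ℝ)..s, e r) = s)
    (hT : ∀ s ∈ Icc (0:ℝ) 1, ∫ r in (0:ℝ)..s, e r ∈ Icc (0:ℝ) 1)
    (hd : ∀ t ∈ Icc (0:ℝ) 1, HasDerivAt φ (deriv φ t) t ∧ 0 ≤ deriv φ t ∧
      (deriv φ t = 0 ∨ deriv φ t * e (φ t) = 1)) :
    VCont (fun t => η (φ t)) (fun t x => deriv φ t • v (φ t) x) := by
  have inj : InjOn φ (Icc 0 1) := fun a ha b hb hab => by
    rw [← hT1 a ha, ← hT1 b hb, hab]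
  have im : φ '' Icc 0 1 = Icc 0 1 := by
    refine Subset.antisymm ?_ fun s hs => ⟨_, hT s hs, hT2 s hs⟩
    rintro _ ⟨t, -, rfl⟩
    exact hr t
  have hd' : ∀ t ∈ Icc (0:ℝ) 1, HasDerivWithinAt φ (deriv φ t) (Icc 0 1) t := fun t ht =>
    (hd t ht).1.hasDerivWithinAt
  have cov : ∀ F : ℝ → ℝ, ∫ s in Icc (0:ℝ) 1, F s = ∫ t in Icc (0:ℝ) 1, deriv φ t * F (φ t) := by
    intro F
    conv_lhs => rw [← im]
    rw [integral_image_eq_integral_abs_deriv_smul measurableSet_Icc hd' inj]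
    refine setIntegral_congr_fun measurableSet_Icc fun t ht => ?_
    simp only [smul_eq_mul]
    rw [abs_of_nonneg (hd t ht).2.1]
  -- this product is `0` or `1` and has integral `∫ e = 1`
  have one : ∀ᵐ t ∂(volume.restrict (Icc (0:ℝ) 1)), deriv φ t * e (φ t) = 1 := by
    have ii : IntegrableOn (fun t => deriv φ t * e (φ t)) (Icc 0 1) := by
      have := (integrableOn_image_iff_integrableOn_abs_deriv_smul measurableSet_Icc hd' inj e).1
        (by rwa [im])
      refine this.congr_fun (fun t ht => ?_) measurableSet_Icc
      simp only [smul_eq_mul]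
      rw [abs_of_nonneg (hd t ht).2.1]
    have i1 : IntegrableOn (fun _ : ℝ => (1:ℝ)) (Icc (0:ℝ) 1) := by simp
    have z : ∫ t in Icc (0:ℝ) 1, (1 - deriv φ t * e (φ t)) = 0 := by
      rw [integral_sub i1 ii, ← cov, integral_Icc_eq_integral_Ioc,
        integral_Icc_eq_integral_Ioc, ← intervalIntegral.integral_of_le zero_le_one,
        ← intervalIntegral.integral_of_le zero_le_one, he1]
      simp
    rw [integral_eq_zero_iff_of_nonneg_ae] at z
    · filter_upwards [z] with t ht
      simp only [Pi.zero_apply] at ht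
      linarith
    · filter_upwards [ae_restrict_mem measurableSet_Icc] with t ht
      simp only [Pi.zero_apply]
      rcases (hd t ht).2.2 with h | h
      · simp [h]
      · simp [h]
    · exact i1.sub ii
  intro Φ hΦ h0 h1
  refine Eq.trans ?_ ((cov _).symm.trans (VCont.test_primitive hΩ h hc he he1 hT hΦ h0 h1))
  refine integral_congr_ae ?_
  filter_upwards [one, ae_restrict_mem measurableSet_Icc] with t h1 ht
  rw [← integral_const_mul]
  refine integral_congr_ae (ae_of_all _ fun x => ?_)
  simp only
  rw [hT1 t ht, ← smul_eq_mul, ← map_smul, Prod.smul_mk, smul_eq_mul, h1]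

/-! ### Bounded-velocity curves and their Lipschitz bounds -/

/-- A weakly continuous curve of probability measures on `Ω` solving the continuity equation,
whose flux has mass at most `M` at every time of `[0,1]`. -/
structure BCurve {d : ℕ} (Ω : Set (Euc d)) (M : ℝ) (μ : ℝ → Measure (Euc d))
    (w : ℝ → Euc d → Euc d) : Prop where
  pair : VPair Ω μ w fun _ => M
  cont : VCont μ w
  weak : ∀ g : Euc d → ℝ, Continuous g → Continuous fun t => ∫ x, g x ∂(μ t)
  bound_all : ∀ t ∈ Icc (0:ℝ) 1, ∫⁻ x, ‖w t x‖ₑ ∂(μ t) ≤ ENNReal.ofReal M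

/-- Every pair of finite energy has a time reparametrization along which the integrand is
bounded by `C + 2`. -/
lemma exists_reparam {d : ℕ} {α : ℝ} (hα : 0 < α) (hα' : α < 1) {Ω : Set (Euc d)}
    (hΩ : IsCompact Ω) {C : ℝ≥0∞} (hC : C < ⊤) {ρ : ℝ → Measure (Euc d)}
    {q : ℝ → Fin d → SignedMeasure (Euc d)} (h : MemD Ω ρ q) (hb : BigF α ρ q ≤ C) :
    ∃ (φ : ℝ → ℝ) (μ : ℝ → Measure (Euc d)) (w : ℝ → Euc d → Euc d),
      Monotone φ ∧ φ 0 = 0 ∧ φ 1 = 1 ∧ (∀ t, φ t ∈ Icc (0:ℝ) 1) ∧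
      (∀ t ∈ Icc (0:ℝ) 1, HasDerivAt φ (deriv φ t) t ∧ 0 ≤ deriv φ t) ∧
      BCurve Ω (C.toReal + 2) μ w ∧ (∀ t, μ t = ρ (φ t)) ∧
      (∀ t ∈ Icc (0:ℝ) 1, IsRep (μ t) (fun i => deriv φ t • q (φ t) i) (w t) ∧
        Fc α (ρ (φ t)) (fun i => deriv φ t • q (φ t) i) ≤ ENNReal.ofReal (C.toReal + 2)) := by
  obtain ⟨η, v, B, f, ηm, ηp, ηs, ηρ, vm, hB, f0, fi, fC, hf⟩ := exists_pair_data hα hα' hC h hb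
  obtain ⟨φ, e, φc, φm, φ0, φ1, φr, ei, e1, eT, eT', eTr, hd⟩ := exists_time_change f fi f0 hB
  have aeB : ∀ᵐ t ∂(volume.restrict (Icc (0:ℝ) 1)), t ∉ B :=
    ae_restrict_of_ae (measure_eq_zero_iff_ae_notMem.1 hB)
  have vp : VPair Ω η v f := by
    refine ⟨ηm, ηp, ηs, vm, f0, fi, ?_⟩
    filter_upwards [aeB, ae_restrict_mem measurableSet_Icc] with t hB ht
    have := ηp t
    rw [ηρ t ht] at this ⊢
    exact (lintegral_le_vCost hα' _ _).trans (hf t ht hB).2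
  have vc : VCont η v := by
    refine VCont_of_ContEq hΩ vp ηρ ?_ h.2.2.2.2.2
    filter_upwards [aeB, ae_restrict_mem measurableSet_Icc] with t hB ht
    exact (hf t ht hB).1
  have rc := VCont.reparam hΩ vp vc φr ei e1 eT eT' eTr
    fun t ht => ⟨(hd t ht).1, (hd t ht).2.1, (hd t ht).2.2.2.2⟩
  have wm : Measurable (Function.uncurry fun t x => deriv φ t • v (φ t) x) :=
    ((measurable_deriv φ).comp measurable_fst).smul
      (vm.comp ((φc.measurable.comp measurable_fst).prodMk measurable_snd))
  have M0 : 0 ≤ C.toReal + 2 := by positivity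
  have main : ∀ t ∈ Icc (0:ℝ) 1,
      IsRep (η (φ t)) (fun i => deriv φ t • q (φ t) i) (fun x => deriv φ t • v (φ t) x) ∧
      vCost α (η (φ t)) (fun x => deriv φ t • v (φ t) x) ≤ ENNReal.ofReal (C.toReal + 2) := by
    intro t ht
    obtain ⟨-, d0, dB, db, -⟩ := hd t ht
    rw [vCost_smul _ _ _ d0]
    by_cases hB : φ t ∈ B
    · rw [dB hB]
      refine ⟨⟨fun i => by simp, fun i s hs => by simp⟩, by simp⟩
    · obtain ⟨r, b⟩ := hf _ (φr t) hB
      rw [← ηρ _ (φr t)] at r b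
      refine ⟨r.smul _, ?_⟩
      calc _ ≤ ENNReal.ofReal (deriv φ t) * ENNReal.ofReal (f (φ t)) := by gcongr
        _ = ENNReal.ofReal (deriv φ t * f (φ t)) := (ENNReal.ofReal_mul d0).symm
        _ ≤ _ := ENNReal.ofReal_le_ofReal (by linarith)
  have ba : ∀ t ∈ Icc (0:ℝ) 1,
      ∫⁻ x, ‖deriv φ t • v (φ t) x‖ₑ ∂(η (φ t)) ≤ ENNReal.ofReal (C.toReal + 2) := fun t ht =>
    have := ηp (φ t)
    (lintegral_le_vCost hα' _ _).trans (main t ht).2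
  refine ⟨φ, fun t => η (φ t), fun t x => deriv φ t • v (φ t) x, φm, φ0, φ1, φr,
    fun t ht => ⟨(hd t ht).1, (hd t ht).2.1⟩, ⟨⟨ηm.comp φc.measurable, fun t => ηp _,
      fun t => ηs _, wm, fun _ => M0, by simp, ?_⟩, rc, fun g hg => ?_, ba⟩,
    fun t => ηρ _ (φr t), fun t ht => ⟨(main t ht).1, ?_⟩⟩
  · filter_upwards [ae_restrict_mem measurableSet_Icc] with t ht using ba t ht
  · have : (fun t => ∫ x, g x ∂(η (φ t))) = fun t => ∫ x, g x ∂(ρ (φ t)) :=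
      funext fun t => by rw [ηρ _ (φr t)]
    rw [this]
    exact (h.2.1 g hg).comp_continuous φc φr
  · have := ηp (φ t)
    rw [← ηρ _ (φr t), Fc_eq_vCost hα hα' (wm.of_uncurry_left (x := t)) (main t ht).1]
    exact (main t ht).2

/-- A probability density concentrated near `s`, together with the properties of its primitive. -/
lemma exists_bump {m : ℝ → ℝ} (hm : Continuous m) {s : ℝ} (hs : s ∈ Ioo (0:ℝ) 1) {ε : ℝ}
    (hε : 0 < ε) : ∃ β : ℝ → ℝ, Continuous β ∧
      |(∫ r in Icc (0:ℝ) 1, β r * m r) - m s| ≤ ε ∧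
      (∫ r in (0:ℝ)..1, β r = 1) ∧
      ∀ r ∈ Icc (0:ℝ) 1, (∫ u in (0:ℝ)..r, β u) ∈ Icc (0:ℝ) 1 ∧
        (r ≤ s - ε → ∫ u in (0:ℝ)..r, β u = 0) ∧ (s + ε ≤ r → ∫ u in (0:ℝ)..r, β u = 1) := by
  obtain ⟨δ0, hδ0, hc⟩ := Metric.continuous_iff.1 hm s ε hε
  set δ := min (min δ0 ε) (min s (1 - s)) with hδ
  have δ0' : 0 < δ := lt_min (lt_min hδ0 hε) (lt_min hs.1 (by linarith [hs.2]))
  have d1 : δ ≤ δ0 := (min_le_left _ _).trans (min_le_left _ _)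
  have d2 : δ ≤ ε := (min_le_left _ _).trans (min_le_right _ _)
  have d3 : δ ≤ s := (min_le_right _ _).trans (min_le_left _ _)
  have d4 : δ ≤ 1 - s := (min_le_right _ _).trans (min_le_right _ _)
  let b : ContDiffBump s := ⟨δ / 2, δ, by linarith, by linarith⟩
  set β : ℝ → ℝ := b.normed volume with hβ
  have βc : Continuous β := b.continuous_normed
  have β0 : ∀ r, 0 ≤ β r := b.nonneg_normed
  have βs : Function.support β = Metric.ball s δ := b.support_normed_eq
  have β1 : ∫ r, β r = 1 := b.integral_normed
  have βi : Integrable β := b.integrable_normed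
  have full : ∀ r, s + δ ≤ r → ∫ u in (0:ℝ)..r, β u = 1 := fun r hr => by
    rw [intervalIntegral.integral_eq_integral_of_support_subset, β1]
    rw [βs, Real.ball_eq_Ioo]
    exact fun x hx => ⟨by linarith [hx.1], by linarith [hx.2]⟩
  refine ⟨β, βc, ?_, full 1 (by linarith), fun r hr => ⟨⟨?_, ?_⟩, fun h => ?_,
    fun h => full r (by linarith)⟩⟩
  · have f1 : ∫ r in Icc (0:ℝ) 1, β r = 1 := by
      rw [integral_Icc_eq_integral_Ioc, ← intervalIntegral.integral_of_le zero_le_one]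
      exact full 1 (by linarith)
    have i1 : IntegrableOn (fun r => β r * m r) (Icc 0 1) := (βc.mul hm).integrableOn_Icc
    have i2 : IntegrableOn (fun r => β r * m s) (Icc 0 1) := (βc.mul continuous_const).integrableOn_Icc
    have e1 : (∫ r in Icc (0:ℝ) 1, β r * m r) - m s = ∫ r in Icc (0:ℝ) 1, (β r * m r - β r * m s) := by
      rw [integral_sub i1 i2, integral_mul_const, f1, one_mul]
    rw [e1, ← Real.norm_eq_abs]
    refine (norm_integral_le_of_norm_le (g := fun r => β r * ε) (βi.integrableOn.mul_const _)
      (ae_of_all _ fun r => ?_)).trans ?_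
    · rw [← mul_sub, norm_mul, Real.norm_of_nonneg (β0 r)]
      by_cases hr : r ∈ Function.support β
      · refine mul_le_mul_of_nonneg_left ?_ (β0 r)
        rw [← dist_eq_norm]
        rw [βs] at hr
        exact (hc r (lt_of_lt_of_le hr d1)).le
      · rw [Function.notMem_support.1 hr]; simp
    · rw [integral_mul_const, f1, one_mul]
  · exact intervalIntegral.integral_nonneg hr.1 fun u _ => β0 u
  · rw [intervalIntegral.integral_of_le hr.1, ← β1]
    exact setIntegral_le_integral βi (ae_of_all _ β0)
  · refine (intervalIntegral.integral_congr (g := fun _ => (0:ℝ)) fun u hu => ?_).trans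
      intervalIntegral.integral_zero
    rw [uIcc_of_le hr.1] at hu
    refine Function.notMem_support.1 fun hu' => ?_
    rw [βs, Real.ball_eq_Ioo] at hu'
    linarith [hu'.1, hu.2]

/-- The Lipschitz bound at interior times: the continuity equation is tested with `g(x) θ(t)`, where
`θ` has derivative a difference of two approximate Dirac masses at `s` and `t`. -/
lemma BCurve.lipschitz_aux {d : ℕ} {Ω : Set (Euc d)} {M : ℝ} {μ : ℝ → Measure (Euc d)}
    {w : ℝ → Euc d → Euc d} (h : BCurve Ω M μ w) {g : Euc d → ℝ} (hg : ContDiff ℝ 1 g) {L : ℝ}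
    (hL0 : 0 ≤ L) (hL : ∀ x ∈ Ω, ‖fderiv ℝ g x‖ ≤ L) (hgb : ∀ t, Integrable g (μ t)) {s t : ℝ}
    (hs : s ∈ Ioo (0:ℝ) 1) (ht : t ∈ Ioo (0:ℝ) 1) (hst : s ≤ t) :
    |(∫ x, g x ∂(μ t)) - ∫ x, g x ∂(μ s)| ≤ L * M * (t - s) := by
  have : ∀ t, IsProbabilityMeasure (μ t) := h.pair.prob
  set m : ℝ → ℝ := fun t => ∫ x, g x ∂(μ t) with hm
  have mc : Continuous m := h.weak g hg.continuous
  have M0 : 0 ≤ M := h.pair.nonneg 0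
  have LM : 0 ≤ L * M := mul_nonneg hL0 M0
  set b : ℝ → ℝ := fun t => ∫ x, fderiv ℝ g x (w t x) ∂(μ t) with hb
  have dg : Continuous fun x : Euc d => fderiv ℝ g x := hg.continuous_fderiv one_ne_zero
  have ap : Continuous fun z : (Euc d →L[ℝ] ℝ) × Euc d => z.1 z.2 := by fun_prop
  have bm : StronglyMeasurable b := sm_integral h.pair.meas
    (F := fun z => fderiv ℝ g z.2 (w z.1 z.2))
    (ap.measurable.comp ((dg.measurable.comp measurable_snd).prodMk h.pair.vmeas))
  have bi : ∀ t ∈ Icc (0:ℝ) 1, Integrable (fun x => fderiv ℝ g x (w t x)) (μ t) ∧ |b t| ≤ L * M := by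
    intro t ht
    have := h.pair.integral_le (h.bound_all t ht)
      (A := fun x => (fderiv ℝ g x).comp (ContinuousLinearMap.snd ℝ ℝ (Euc d)))
      (K := L) (by
        have : Continuous fun x => (fderiv ℝ g x).comp (ContinuousLinearMap.snd ℝ ℝ (Euc d)) :=
          dg.clm_comp continuous_const
        exact this.measurable) (fun x hx => by
        refine (ContinuousLinearMap.opNorm_comp_le _ _).trans ?_
        calc _ ≤ L * 1 := mul_le_mul (hL x hx) (ContinuousLinearMap.norm_snd_le _ _ _)
              (norm_nonneg _) hL0
          _ = L := mul_one L) 0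
    simpa using this
  have key : ∀ ε > 0, |m t - m s| ≤ 2 * ε + L * M * (t - s + 2 * ε) := by
    intro ε hε
    obtain ⟨β, βc, β1, β2, β3⟩ := exists_bump mc hs hε
    obtain ⟨γ, γc, γ1, γ2, γ3⟩ := exists_bump mc ht hε
    set a : ℝ → ℝ := fun r => (∫ u in (0:ℝ)..r, β u) - ∫ u in (0:ℝ)..r, γ u with ha
    have ad : ∀ r, HasDerivAt a (β r - γ r) r := fun r =>
      (βc.integral_hasStrictDerivAt 0 r).hasDerivAt.sub (γc.integral_hasStrictDerivAt 0 r).hasDerivAt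
    have aC : ContDiff ℝ 1 a := by
      rw [contDiff_one_iff_deriv]
      refine ⟨fun s => (ad s).differentiableAt, ?_⟩
      have : deriv a = fun r => β r - γ r := funext fun s => (ad s).deriv
      rw [this]
      exact βc.sub γc
    have z := h.cont (fun z => a z.1 * g z.2)
      ((aC.comp contDiff_fst).mul (hg.comp contDiff_snd)) (fun x => by simp [ha])
      (fun x => by simp [ha, β2, γ2])
    have i1 : IntegrableOn (fun r => (β r - γ r) * m r) (Icc 0 1) :=
      ((βc.sub γc).mul mc).integrableOn_Icc
    have ib : ∀ᵐ r ∂(volume.restrict (Icc (0:ℝ) 1)),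
        ‖a r * b r‖ ≤ (L * M) * (Icc (s - ε) (t + ε)).indicator (fun _ => 1) r := by
      filter_upwards [ae_restrict_mem measurableSet_Icc] with r hr
      obtain ⟨b1, b2, b3⟩ := β3 r hr
      obtain ⟨c1, c2, c3⟩ := γ3 r hr
      rw [norm_mul, mul_comm]
      refine mul_le_mul (bi r hr).2 ?_ (norm_nonneg _) LM
      by_cases hr' : r ∈ Icc (s - ε) (t + ε)
      · rw [indicator_of_mem hr', Real.norm_eq_abs, abs_le]
        simp only [ha]
        exact ⟨by linarith [b1.1, c1.2], by linarith [b1.2, c1.1]⟩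
      · rw [indicator_of_notMem hr']
        rw [mem_Icc, not_and_or, not_le, not_le] at hr'
        simp only [ha]
        rcases hr' with hr' | hr'
        · rw [b2 hr'.le, c2 (by linarith)]; simp
        · rw [b3 (by linarith), c3 hr'.le]; simp
    have iI : IntegrableOn (fun r => (L * M) * (Icc (s - ε) (t + ε)).indicator (fun _ => (1:ℝ)) r)
        (Icc 0 1) :=
      Integrable.const_mul ((integrable_const _).indicator measurableSet_Icc) _
    have i2 : IntegrableOn (fun r => a r * b r) (Icc 0 1) :=
      Integrable.mono' iI (aC.continuous.aestronglyMeasurable.mul bm.aestronglyMeasurable) ib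
    have e1 : ∫ r in Icc (0:ℝ) 1, ((β r - γ r) * m r + a r * b r) = 0 := by
      refine Eq.trans ?_ z
      refine setIntegral_congr_fun measurableSet_Icc fun r hr => ?_
      simp only [hm, hb]
      rw [← integral_const_mul, ← integral_const_mul,
        ← integral_add ((hgb r).const_mul _) ((bi r hr).1.const_mul _)]
      refine integral_congr_ae (ae_of_all _ fun x => ?_)
      have d1 : HasFDerivAt (fun z : ℝ × Euc d => a z.1) _ (r, x) :=
        HasFDerivAt.comp (g := a) (r, x) (ad r).hasFDerivAt hasFDerivAt_fst
      have d2 : HasFDerivAt (fun z : ℝ × Euc d => g z.2) _ (r, x) :=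
        HasFDerivAt.comp (g := g) (r, x) (hg.differentiable one_ne_zero x).hasFDerivAt
          hasFDerivAt_snd
      have d3 : fderiv ℝ (fun z : ℝ × Euc d => a z.1 * g z.2) (r, x) = _ := (d1.mul d2).fderiv
      simp only
      rw [d3]
      simp
      ring
    rw [integral_add i1 i2] at e1
    have e2 : |∫ r in Icc (0:ℝ) 1, a r * b r| ≤ L * M * (t - s + 2 * ε) := by
      rw [← Real.norm_eq_abs]
      refine (norm_integral_le_of_norm_le iI ib).trans ?_
      rw [integral_const_mul]
      refine mul_le_mul_of_nonneg_left ?_ LM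
      calc _ ≤ ∫ r, (Icc (s - ε) (t + ε)).indicator (fun _ => (1:ℝ)) r :=
            setIntegral_le_integral ((integrable_indicator_iff measurableSet_Icc).2 (by simp))
              (ae_of_all _ fun r => indicator_nonneg (fun _ _ => zero_le_one) r)
        _ = t - s + 2 * ε := by
            rw [integral_indicator measurableSet_Icc]
            simp [Measure.real]
            rw [ENNReal.toReal_ofReal (by linarith)]
            ring
    have e3 : ∫ r in Icc (0:ℝ) 1, (β r - γ r) * m r =
        (∫ r in Icc (0:ℝ) 1, β r * m r) - ∫ r in Icc (0:ℝ) 1, γ r * m r := by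
      have j1 : IntegrableOn (fun r => β r * m r) (Icc 0 1) := (βc.mul mc).integrableOn_Icc
      have j2 : IntegrableOn (fun r => γ r * m r) (Icc 0 1) := (γc.mul mc).integrableOn_Icc
      rw [← integral_sub j1 j2]
      simp_rw [sub_mul]
    rw [e3] at e1
    rw [abs_le] at e2 β1 γ1 ⊢
    constructor <;> linarith [e2.1, e2.2, β1.1, β1.2, γ1.1, γ1.2]
  refine le_of_forall_pos_le_add fun ε hε => ?_
  refine (key (ε / (2 * (L * M + 1))) (by positivity)).trans (le_of_eq ?_)
  field_simp
  ring

/-! ### Compactness in space and equicontinuity in time -/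

lemma isCompact_probSet {E : Type*} [MeasurableSpace E] [TopologicalSpace E] [T2Space E]
    [NormalSpace E] [BorelSpace E] {S : Set E} (hS : IsCompact S) :
    IsCompact {ν : ProbabilityMeasure E | (ν : Measure E) Sᶜ = 0} := by
  have := isCompact_setOfPred_probabilityMeasure_mass_eq_compl_isCompact_le (E := E)
    (u := fun _ => 0) (K := fun _ => S) tendsto_const_nhds (fun _ => hS) (Or.inl inferInstance)
  convert this using 1
  ext ν
  rw [mem_ofPred_eq, mem_ofPred_eq, ← ProbabilityMeasure.ennreal_coeFn_eq_coeFn_toMeasure,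
    ENNReal.coe_eq_zero]
  exact ⟨fun h _ => h.le, fun h => le_antisymm (h 0) zero_le⟩

lemma integrable_of_supp {E : Type*} [MeasurableSpace E] [TopologicalSpace E] [BorelSpace E]
    {S : Set E} (hS : IsCompact S) {ν : Measure E} [IsFiniteMeasure ν] (hν : ν Sᶜ = 0)
    {g : E → ℝ} (hg : Continuous g) : Integrable g ν := by
  obtain ⟨K, hK⟩ := (hS.image hg).isBounded.exists_norm_le
  refine Integrable.of_bound hg.measurable.aestronglyMeasurable K ?_
  have hae : ∀ᵐ x ∂ν, x ∈ S := by rw [ae_iff]; exact hν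
  filter_upwards [hae] with x hx using hK _ ⟨x, hx, rfl⟩

/-- Weak convergence of measures carried by a common compact set may be tested against
unbounded continuous functions. -/
lemma tendsto_integral_of_supp {E : Type*} [MeasurableSpace E] [TopologicalSpace E] [BorelSpace E]
    {S : Set E} (hS : IsCompact S) {ι : Type*} {l : Filter ι} {P : ι → ProbabilityMeasure E}
    {Q : ProbabilityMeasure E}
    (hP : ∀ i, (P i : Measure E) Sᶜ = 0) (hQ : (Q : Measure E) Sᶜ = 0)
    (h : Tendsto P l (𝓝 Q)) {g : E → ℝ} (hg : Continuous g) :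
    Tendsto (fun i => ∫ x, g x ∂(P i : Measure E)) l (𝓝 (∫ x, g x ∂(Q : Measure E))) := by
  obtain ⟨K, hK⟩ := (hS.image hg).isBounded.exists_norm_le
  have hc : Continuous fun x => max (-|K|) (min (g x) |K|) := by fun_prop
  let b : BoundedContinuousFunction E ℝ := BoundedContinuousFunction.ofNormedAddCommGroup
    (fun x => max (-|K|) (min (g x) |K|)) hc |K| (fun x => by
      rw [Real.norm_eq_abs, abs_le]
      exact ⟨le_max_left _ _, max_le (by linarith [abs_nonneg K]) (min_le_right _ _)⟩)
  have e : ∀ ν : Measure E, ν Sᶜ = 0 → ∫ x, b x ∂ν = ∫ x, g x ∂ν := by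
    intro ν hν
    have hae : ∀ᵐ x ∂ν, x ∈ S := by rw [ae_iff]; exact hν
    refine integral_congr_ae ?_
    filter_upwards [hae] with x hx
    have := (hK _ ⟨x, hx, rfl⟩).trans (le_abs_self K)
    rw [Real.norm_eq_abs, abs_le] at this
    show max (-|K|) (min (g x) |K|) = g x
    rw [min_eq_left this.2, max_eq_right this.1]
  have := ProbabilityMeasure.tendsto_iff_forall_integral_tendsto.1 h b
  rw [e _ hQ] at this
  exact this.congr fun i => e _ (hP i)

lemma abs_integral_sub_le {E : Type*} [MeasurableSpace E] [TopologicalSpace E] [BorelSpace E]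
    {S : Set E} (hS : IsCompact S) {ν : Measure E} [IsProbabilityMeasure ν] (hν : ν Sᶜ = 0)
    {f g : E → ℝ} (hf : Continuous f) (hg : Continuous g) {ε : ℝ} (h : ∀ x, |f x - g x| ≤ ε) :
    |∫ x, f x ∂ν - ∫ x, g x ∂ν| ≤ ε := by
  rw [← integral_sub (integrable_of_supp hS hν hf) (integrable_of_supp hS hν hg), ← Real.norm_eq_abs]
  refine (norm_integral_le_of_norm_le_const (C := ε) (ae_of_all _ h)).trans ?_
  simp

/-- Ascoli's theorem for curves of probability measures that are equi-Lipschitz when tested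
against each `C¹` function. -/
lemma ascoli {d : ℕ} {Ω : Set (Euc d)} (hΩ : IsCompact Ω)
    (P : ℕ → ℝ → ProbabilityMeasure (Euc d)) (hP : ∀ n t, (P n t : Measure (Euc d)) Ωᶜ = 0)
    (hl : ∀ g : Euc d → ℝ, ContDiff ℝ 1 g → ∃ K : ℝ, 0 ≤ K ∧ ∀ n s t,
      |∫ x, g x ∂(P n t : Measure (Euc d)) - ∫ x, g x ∂(P n s : Measure (Euc d))| ≤ K * |t - s|) :
    ∃ k : ℕ → ℕ, StrictMono k ∧ ∃ R : ℝ → ProbabilityMeasure (Euc d),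
      (∀ t, (R t : Measure (Euc d)) Ωᶜ = 0) ∧
      (∀ g : Euc d → ℝ, Continuous g → ∀ t, Tendsto (fun n => ∫ x, g x ∂(P (k n) t : Measure (Euc d)))
        atTop (𝓝 (∫ x, g x ∂(R t : Measure (Euc d))))) ∧
      ∀ g : Euc d → ℝ, Continuous g → Continuous fun t => ∫ x, g x ∂(R t : Measure (Euc d)) := by
  have hK := isCompact_probSet (E := Euc d) hΩ
  obtain ⟨Q, hQ, k, hk, hkQ⟩ := (isCompact_univ_pi (ι := ℚ) (fun _ => hK)).tendsto_subseq
    (x := fun n (r : ℚ) => P n (r : ℝ)) (fun n r _ => hP n r)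
  have hr : ∀ r : ℚ, Tendsto (fun n => P (k n) (r : ℝ)) atTop (𝓝 (Q r)) := fun r =>
    (tendsto_pi_nhds.1 hkQ) r
  -- a `C¹` approximation together with its modulus of continuity in time
  have app : ∀ g : Euc d → ℝ, Continuous g → ∀ ε > 0, ∃ K : ℝ, 0 ≤ K ∧ ∀ n s t,
      |∫ x, g x ∂(P n t : Measure (Euc d)) - ∫ x, g x ∂(P n s : Measure (Euc d))| ≤
        ε + K * |t - s| := by
    intro g hg ε hε
    obtain ⟨g', hg', ha, -⟩ := hg.exists_contDiff_approx (ε := fun _ => ε / 2) 1 continuous_const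
      (fun _ => by positivity)
    obtain ⟨K, K0, hK⟩ := hl g' hg'
    refine ⟨K, K0, fun n s t => ?_⟩
    have h1 := fun t => abs_le.1 (abs_integral_sub_le hΩ (hP n t) hg'.continuous hg (ε := ε / 2) fun x => (ha x).le)
    have h2 := abs_le.1 (hK n s t)
    rw [abs_le]
    constructor <;> linarith [(h1 s).1, (h1 s).2, (h1 t).1, (h1 t).2, h2.1, h2.2]
  have cau : ∀ g : Euc d → ℝ, Continuous g → ∀ t,
      CauchySeq fun n => ∫ x, g x ∂(P (k n) t : Measure (Euc d)) := by
    intro g hg t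
    rw [Metric.cauchySeq_iff']
    intro ε hε
    obtain ⟨K, K0, hK⟩ := app g hg (ε / 6) (by positivity)
    obtain ⟨r, hr1, hr2⟩ := exists_rat_btwn (show t < t + ε / (6 * (K + 1)) by
      have : 0 < ε / (6 * (K + 1)) := by positivity
      linarith)
    have hKr : K * |t - r| ≤ ε / 6 := by
      have : |t - r| ≤ ε / (6 * (K + 1)) := by rw [abs_le]; constructor <;> linarith
      calc K * |t - r| ≤ (K + 1) * (ε / (6 * (K + 1))) :=
            mul_le_mul (by linarith) this (abs_nonneg _) (by linarith)
        _ = ε / 6 := by field_simp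
    have c := (tendsto_integral_of_supp hΩ (fun n => hP (k n) r) (hQ r (mem_univ _)) (hr r) hg).cauchySeq
    obtain ⟨N, hN⟩ := Metric.cauchySeq_iff'.1 c (ε / 6) (by positivity)
    refine ⟨N, fun n hn => ?_⟩
    have a1 := abs_le.1 (hK (k n) r t)
    have a2 := abs_le.1 (hK (k N) r t)
    have a3 := abs_lt.1 (show |_| < _ from hN n hn)
    rw [Real.dist_eq, abs_lt]
    constructor <;> linarith [a1.1, a1.2, a2.1, a2.2, a3.1, a3.2]
  have lim : ∀ t, ∃ R : ProbabilityMeasure (Euc d), (R : Measure (Euc d)) Ωᶜ = 0 ∧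
      ∀ g : Euc d → ℝ, Continuous g → Tendsto (fun n => ∫ x, g x ∂(P (k n) t : Measure (Euc d)))
        atTop (𝓝 (∫ x, g x ∂(R : Measure (Euc d)))) := by
    intro t
    obtain ⟨R, hR, j, hj, hjR⟩ := hK.tendsto_subseq (x := fun n => P (k n) t) (fun n => hP _ _)
    refine ⟨R, hR, fun g hg => tendsto_nhds_of_cauchySeq_of_subseq (cau g hg t) hj.tendsto_atTop ?_⟩
    exact tendsto_integral_of_supp hΩ (fun n => hP _ _) hR hjR hg
  choose R hR hRt using lim
  refine ⟨k, hk, R, hR, fun g hg t => hRt t g hg, fun g hg => ?_⟩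
  rw [Metric.continuous_iff]
  intro t ε hε
  obtain ⟨K, K0, hK⟩ := app g hg (ε / 2) (by positivity)
  refine ⟨ε / (2 * (K + 1)), by positivity, fun s hs => ?_⟩
  have l := le_of_tendsto (((hRt s g hg).sub (hRt t g hg)).abs) (Eventually.of_forall fun n => hK (k n) t s)
  rw [Real.dist_eq] at hs ⊢
  refine l.trans_lt ?_
  have : K * |s - t| ≤ K * (ε / (2 * (K + 1))) := mul_le_mul_of_nonneg_left hs.le K0
  have : (K + 1) * (ε / (2 * (K + 1))) = ε / 2 := by field_simp
  have : 0 < ε / (2 * (K + 1)) := by positivity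
  linarith

/-- A bounded-velocity curve is Lipschitz on `[0,1]` when tested against `C¹` functions. -/
lemma BCurve.lipschitz {d : ℕ} {Ω : Set (Euc d)} (hΩ : IsCompact Ω) {M : ℝ}
    {μ : ℝ → Measure (Euc d)} {w : ℝ → Euc d → Euc d} (h : BCurve Ω M μ w)
    {g : Euc d → ℝ} (hg : ContDiff ℝ 1 g) {L : ℝ} (hL0 : 0 ≤ L)
    (hL : ∀ x ∈ Ω, ‖fderiv ℝ g x‖ ≤ L) {s t : ℝ} (hs : s ∈ Icc (0:ℝ) 1) (ht : t ∈ Icc (0:ℝ) 1) :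
    |∫ x, g x ∂(μ t) - ∫ x, g x ∂(μ s)| ≤ L * M * |t - s| := by
  have ib : ∀ t, Integrable g (μ t) := fun t => by
    have := h.pair.prob t
    exact integrable_of_supp hΩ (h.pair.supp t) hg.continuous
  have hc := h.weak g hg.continuous
  have cl : IsClosed {z : ℝ × ℝ | |∫ x, g x ∂(μ z.2) - ∫ x, g x ∂(μ z.1)| ≤ L * M * |z.2 - z.1|} := by
    refine isClosed_le ?_ (by fun_prop)
    exact ((hc.comp continuous_snd).sub (hc.comp continuous_fst)).abs
  have sub : Ioo (0:ℝ) 1 ×ˢ Ioo (0:ℝ) 1 ⊆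
      {z : ℝ × ℝ | |∫ x, g x ∂(μ z.2) - ∫ x, g x ∂(μ z.1)| ≤ L * M * |z.2 - z.1|} := by
    rintro ⟨s, t⟩ ⟨hs, ht⟩
    rcases le_total s t with hst | hst
    · have := h.lipschitz_aux hg hL0 hL ib hs ht hst
      simpa [abs_of_nonneg (sub_nonneg.2 hst)] using this
    · have := h.lipschitz_aux hg hL0 hL ib ht hs hst
      simpa [abs_sub_comm, abs_of_nonneg (sub_nonneg.2 hst)] using this
  have := closure_minimal sub cl
  rw [closure_prod_eq, closure_Ioo (by norm_num)] at this
  exact this (mk_mem_prod hs ht)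

/-! ### Compactness of bounded families of kernels -/

/-- Extension of a function on `E` by zero to the second copy of `E` in `E × Bool`. -/
def boolExt {E : Type*} (g : E → ℝ) (y : E × Bool) : ℝ := if y.2 then g y.1 else 0

lemma continuous_boolExt {E : Type*} [TopologicalSpace E] {T : Type*} [TopologicalSpace T]
    {φ : T × E → ℝ} (hφ : Continuous φ) :
    Continuous fun z : T × (E × Bool) => boolExt (fun x => φ (z.1, x)) z.2 := by
  have : Continuous fun b : Bool => if b then (1:ℝ) else 0 := by fun_prop
  have e : (fun z : T × (E × Bool) => boolExt (fun x => φ (z.1, x)) z.2) =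
      fun z => (if z.2.2 then (1:ℝ) else 0) * φ (z.1, z.2.1) := by
    funext z; unfold boolExt; split_ifs <;> simp
  rw [e]
  exact (this.comp (by fun_prop : Continuous fun z : T × (E × Bool) => z.2.2)).mul (by fun_prop)

/-- The part of `E × Bool` that carries the lifted kernels. -/
def boolSet {d : ℕ} (Ω : Set (Euc d)) : Set (Euc d × Bool) := Ω ×ˢ {true} ∪ {((0 : Euc d), false)}

lemma isCompact_boolSet {d : ℕ} {Ω : Set (Euc d)} (hΩ : IsCompact Ω) : IsCompact (boolSet Ω) :=
  (hΩ.prod isCompact_singleton).union isCompact_singleton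

/-- A kernel of mass at most `B` becomes a Markov kernel after division by `B`, the missing mass
being placed at a point of a second copy of the space. -/
lemma exists_markov_lift {d : ℕ} {Ω : Set (Euc d)} (hΩ : IsCompact Ω) {B : ℝ≥0∞} (hB0 : B ≠ 0)
    (hB : B ≠ ⊤) (κ : ProbabilityTheory.Kernel ℝ (Euc d)) (h1 : ∀ t, κ t univ ≤ B)
    (h2 : ∀ t, κ t Ωᶜ = 0) :
    ∃ L : ProbabilityTheory.Kernel ℝ (Euc d × Bool), ProbabilityTheory.IsMarkovKernel L ∧
      (∀ t, L t (boolSet Ω)ᶜ = 0) ∧ ∀ t, ∀ g : Euc d → ℝ, Continuous g →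
        ∫ y, boolExt g y ∂(L t) = B.toReal⁻¹ * ∫ x, g x ∂(κ t) := by
  have mm : Measurable fun x : Euc d => (x, true) := by fun_prop
  let f : ℝ → Measure (Euc d × Bool) := fun t => B⁻¹ • (κ t).map (fun x => (x, true)) +
    (1 - B⁻¹ * κ t univ) • Measure.dirac ((0 : Euc d), false)
  have fm : Measurable f := by
    refine Measure.measurable_of_measurable_coe _ fun s hs => ?_
    have e : ∀ t, f t s = B⁻¹ * κ t ((fun x => (x, true)) ⁻¹' s) +
        (1 - B⁻¹ * κ t univ) * Measure.dirac ((0 : Euc d), false) s := fun t => by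
      simp only [f, Measure.add_apply, Measure.smul_apply, smul_eq_mul, Measure.map_apply mm hs]
    simp_rw [e]
    exact ((κ.measurable_coe (mm hs)).const_mul _).add
      ((measurable_const.sub ((κ.measurable_coe MeasurableSet.univ).const_mul _)).mul_const _)
  have hle : ∀ t, B⁻¹ * κ t univ ≤ 1 := fun t => by
    calc B⁻¹ * κ t univ ≤ B⁻¹ * B := by gcongr; exact h1 t
      _ = 1 := ENNReal.inv_mul_cancel hB0 hB
  have Sm : MeasurableSet (boolSet Ω) := (isCompact_boolSet hΩ).measurableSet
  refine ⟨⟨f, fm⟩, ⟨fun t => ⟨?_⟩⟩, fun t => ?_, fun t g hg => ?_⟩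
  · show f t univ = 1
    simp only [f, Measure.add_apply, Measure.smul_apply, smul_eq_mul,
      Measure.map_apply mm MeasurableSet.univ, preimage_univ, measure_univ, mul_one]
    exact add_tsub_cancel_of_le (hle t)
  · show f t (boolSet Ω)ᶜ = 0
    simp only [f, Measure.add_apply, Measure.smul_apply, smul_eq_mul,
      Measure.map_apply mm Sm.compl, Measure.dirac_apply' _ Sm.compl]
    have : (fun x : Euc d => (x, true)) ⁻¹' (boolSet Ω)ᶜ = Ωᶜ := by
      ext x; simp [boolSet]
    rw [this, h2 t]
    simp [boolSet]
  · show ∫ y, boolExt g y ∂(f t) = _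
    have fin : IsFiniteMeasure (κ t) := ⟨(h1 t).trans_lt hB.lt_top⟩
    have gi : Integrable g (κ t) := integrable_of_supp hΩ (h2 t) hg
    have gm : Measurable (boolExt g) := by
      have := (continuous_boolExt (T := ℝ) (φ := fun z => g z.2) (by fun_prop)).comp
        (by fun_prop : Continuous fun y : Euc d × Bool => ((0:ℝ), y))
      exact this.measurable
    have i1 : Integrable (boolExt g) ((κ t).map (fun x => (x, true))) := by
      rw [integrable_map_measure gm.aestronglyMeasurable mm.aemeasurable]
      exact gi
    have i2 : Integrable (boolExt g) (Measure.dirac ((0 : Euc d), false)) :=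
      integrable_dirac (by simp)
    have hne : 1 - B⁻¹ * κ t univ ≠ ⊤ := (tsub_le_self.trans_lt ENNReal.one_lt_top).ne
    simp only [f]
    rw [integral_add_measure (i1.smul_measure (ENNReal.inv_ne_top.2 hB0)) (i2.smul_measure hne),
      integral_smul_measure, integral_smul_measure,
      integral_map mm.aemeasurable gm.aestronglyMeasurable, integral_dirac]
    simp [boolExt]

/-- Conversely, restricting a Markov kernel on the doubled space to the first copy of `Ω` gives back a
kernel of mass at most `B`. -/
lemma exists_markov_drop {d : ℕ} {Ω : Set (Euc d)} (hΩ : IsCompact Ω) {B : ℝ≥0∞}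
    (L : ProbabilityTheory.Kernel ℝ (Euc d × Bool)) [ProbabilityTheory.IsMarkovKernel L] :
    ∃ κ : ProbabilityTheory.Kernel ℝ (Euc d), (∀ t, κ t univ ≤ B) ∧ (∀ t, κ t Ωᶜ = 0) ∧
      ∀ t, L t (boolSet Ω)ᶜ = 0 → ∀ g : Euc d → ℝ, Continuous g →
        ∫ x, g x ∂(κ t) = B.toReal * ∫ y, boolExt g y ∂(L t) := by
  have Sm : MeasurableSet (Ω ×ˢ ({true} : Set Bool)) := hΩ.measurableSet.prod (measurableSet_singleton _)
  let f : ℝ → Measure (Euc d) := fun t => B • ((L t).restrict (Ω ×ˢ {true})).map Prod.fst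
  have fe : ∀ t s, MeasurableSet s → f t s = B * L t (Prod.fst ⁻¹' s ∩ Ω ×ˢ {true}) := fun t s hs => by
    simp only [f, Measure.smul_apply, smul_eq_mul, Measure.map_apply measurable_fst hs]
    rw [Measure.restrict_apply (measurable_fst hs)]
  have fm : Measurable f := by
    refine Measure.measurable_of_measurable_coe _ fun s hs => ?_
    simp_rw [fe _ s hs]
    exact (L.measurable_coe ((measurable_fst hs).inter Sm)).const_mul _
  refine ⟨⟨f, fm⟩, fun t => ?_, fun t => ?_, fun t ht g hg => ?_⟩
  · show f t univ ≤ B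
    rw [fe t _ MeasurableSet.univ]
    exact mul_le_of_le_one_right zero_le prob_le_one
  · show f t Ωᶜ = 0
    rw [fe t _ hΩ.measurableSet.compl]
    have : Prod.fst ⁻¹' Ωᶜ ∩ Ω ×ˢ {true} = (∅ : Set (Euc d × Bool)) := by
      ext y; simp only [mem_inter_iff, mem_preimage, mem_compl_iff, mem_prod]; tauto
    rw [this, measure_empty, mul_zero]
  · show ∫ x, g x ∂(f t) = _
    simp only [f]
    rw [integral_smul_measure, integral_map measurable_fst.aemeasurable hg.measurable.aestronglyMeasurable,
      smul_eq_mul, ← integral_indicator Sm]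
    congr 1
    refine integral_congr_ae ?_
    have hae : ∀ᵐ y ∂(L t), y ∈ boolSet Ω := by rw [ae_iff]; exact ht
    filter_upwards [hae] with y hy
    obtain ⟨x, b⟩ := y
    rcases hy with hy | hy
    · rw [indicator_of_mem hy]
      have : b = true := hy.2
      simp [boolExt, this]
    · simp only [mem_singleton_iff, Prod.mk.injEq] at hy
      rw [indicator_of_notMem (by simp [hy.2])]
      simp [boolExt, hy.2]

/-- Kernels of bounded mass on a compact set are weak* sequentially compact as measures on
`[0,1] × Ω`, and the limit measure disintegrates again over Lebesgue measure because the time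
marginal of the lifted Markov kernels is preserved. -/
lemma kernel_compact {d : ℕ} {Ω : Set (Euc d)} (hΩ : IsCompact Ω) {ι : Type*} [Finite ι]
    {B : ℝ≥0∞} (hB0 : B ≠ 0) (hB : B ≠ ⊤) (κ : ℕ → ι → ProbabilityTheory.Kernel ℝ (Euc d))
    (h1 : ∀ n i t, κ n i t univ ≤ B) (h2 : ∀ n i t, κ n i t Ωᶜ = 0) :
    ∃ k : ℕ → ℕ, StrictMono k ∧ ∃ K : ι → ProbabilityTheory.Kernel ℝ (Euc d),
      (∀ i t, K i t univ ≤ B) ∧ (∀ i t, K i t Ωᶜ = 0) ∧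
      ∀ i, ∀ φ : ℝ × Euc d → ℝ, Continuous φ →
        Tendsto (fun n => ∫ t in Icc (0:ℝ) 1, ∫ x, φ (t, x) ∂(κ (k n) i t)) atTop
          (𝓝 (∫ t in Icc (0:ℝ) 1, ∫ x, φ (t, x) ∂(K i t))) := by
  choose L LM LS LI using fun n i => exists_markov_lift hΩ hB0 hB (κ n i) (h1 n i) (h2 n i)
  set τ : Measure ℝ := volume.restrict (Icc (0:ℝ) 1) with hτ
  have τp : IsProbabilityMeasure τ := ⟨by simp [hτ]⟩
  let S : Set (ℝ × (Euc d × Bool)) := Icc (0:ℝ) 1 ×ˢ boolSet Ω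
  have hS : IsCompact S := isCompact_Icc.prod (isCompact_boolSet hΩ)
  let P : ℕ → ι → ProbabilityMeasure (ℝ × (Euc d × Bool)) := fun n i =>
    ⟨τ.compProd (L n i), inferInstance⟩
  have PS : ∀ n i, (P n i : Measure (ℝ × (Euc d × Bool))) Sᶜ = 0 := by
    intro n i
    show (τ.compProd (L n i)) Sᶜ = 0
    rw [Measure.compProd_apply hS.measurableSet.compl, lintegral_eq_zero_iff']
    · filter_upwards [ae_restrict_mem measurableSet_Icc] with t ht
      refine measure_mono_null ?_ (LS n i t)
      intro y hy hy'
      exact hy ⟨ht, hy'⟩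
    · exact (ProbabilityTheory.Kernel.measurable_kernel_prodMk_left hS.measurableSet.compl).aemeasurable
  obtain ⟨Q, hQ, k, hk, hkQ⟩ := (isCompact_univ_pi (ι := ι) (fun _ => isCompact_probSet hS)).tendsto_subseq
    (x := P) (fun n i _ => PS n i)
  have hlim : ∀ i, Tendsto (fun n => P (k n) i) atTop (𝓝 (Q i)) := fun i => (tendsto_pi_nhds.1 hkQ) i
  have hQS : ∀ i, (Q i : Measure (ℝ × (Euc d × Bool))) Sᶜ = 0 := fun i => hQ i (mem_univ _)
  have fst : ∀ i, (Q i : Measure (ℝ × (Euc d × Bool))).fst = τ := by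
    intro i
    have t1 := ProbabilityMeasure.tendsto_map_of_tendsto_of_continuous _ _ (hlim i)
      (continuous_fst : Continuous (Prod.fst : ℝ × (Euc d × Bool) → ℝ))
    have e : ∀ n, (P (k n) i).map (continuous_fst.measurable.aemeasurable :
        AEMeasurable (Prod.fst : ℝ × (Euc d × Bool) → ℝ) _) = ⟨τ, τp⟩ := by
      intro n
      apply Subtype.ext
      exact Measure.fst_compProd τ (L (k n) i)
    simp_rw [e] at t1
    have := tendsto_nhds_unique t1 tendsto_const_nhds
    exact congrArg Subtype.val this
  have dis : ∀ i, τ.compProd (Q i : Measure (ℝ × (Euc d × Bool))).condKernel = Q i := by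
    intro i
    have := Measure.disintegrate (Q i : Measure (ℝ × (Euc d × Bool)))
      (Q i : Measure (ℝ × (Euc d × Bool))).condKernel
    rwa [fst i] at this
  choose K K1 K2 K3 using fun i => exists_markov_drop hΩ (B := B)
    (Q i : Measure (ℝ × (Euc d × Bool))).condKernel
  refine ⟨k, hk, K, K1, K2, fun i φ hφ => ?_⟩
  have Br : 0 < B.toReal := ENNReal.toReal_pos hB0 hB
  have ψc := continuous_boolExt hφ
  have T := (tendsto_integral_of_supp hS (fun n => PS (k n) i) (hQS i) (hlim i) ψc).const_mul B.toReal
  have φt : ∀ t, Continuous fun x => φ (t, x) := fun t => by fun_prop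
  have ae : ∀ᵐ t ∂τ, ((Q i : Measure (ℝ × (Euc d × Bool))).condKernel t) (boolSet Ω)ᶜ = 0 := by
    have : ∀ᵐ z ∂(τ.compProd (Q i : Measure (ℝ × (Euc d × Bool))).condKernel), z ∈ S := by
      rw [dis i, ae_iff]; exact hQS i
    filter_upwards [Measure.ae_ae_of_ae_compProd this] with t ht
    rw [← mem_ae_iff]
    filter_upwards [ht] with y hy using hy.2
  have e1 : B.toReal * ∫ z, boolExt (fun x => φ (z.1, x)) z.2 ∂(Q i : Measure (ℝ × (Euc d × Bool))) =
      ∫ t in Icc (0:ℝ) 1, ∫ x, φ (t, x) ∂(K i t) := by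
    have ii := integrable_of_supp hS (hQS i) ψc
    have ii' := ii
    rw [← dis i] at ii'
    conv_lhs => rw [← dis i]
    rw [Measure.integral_compProd ii', ← integral_const_mul]
    refine integral_congr_ae ?_
    filter_upwards [ae] with t ht
    exact (K3 i t ht _ (φt t)).symm
  rw [e1] at T
  refine T.congr fun n => ?_
  have ii : Integrable _ (τ.compProd (L (k n) i)) := integrable_of_supp hS (PS (k n) i) ψc
  show B.toReal * ∫ z, boolExt (fun x => φ (z.1, x)) z.2 ∂(τ.compProd (L (k n) i)) = _
  rw [Measure.integral_compProd ii, ← integral_const_mul]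
  refine integral_congr_ae (ae_of_all _ fun t => ?_)
  simp only []
  rw [LI (k n) i t _ (φt t), ← mul_assoc, mul_inv_cancel₀ Br.ne', one_mul]

/-! ### Fluxes as differences of kernels -/

/-- The signed measures `κ (i, true) t - κ (i, false) t`, for `i : Fin d`. -/
noncomputable def kerDiff {d : ℕ} (κ : Fin d × Bool → ProbabilityTheory.Kernel ℝ (Euc d))
    [∀ j t, IsFiniteMeasure (κ j t)] (t : ℝ) (i : Fin d) : SignedMeasure (Euc d) :=
  (κ (i, true) t).toSignedMeasure - (κ (i, false) t).toSignedMeasure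

lemma kerDiff_apply {d : ℕ} (κ : Fin d × Bool → ProbabilityTheory.Kernel ℝ (Euc d))
    [∀ j t, IsFiniteMeasure (κ j t)] (t : ℝ) (i : Fin d) (s : Set (Euc d)) (hs : MeasurableSet s) :
    kerDiff κ t i s = (κ (i, true) t).real s - (κ (i, false) t).real s := by
  simp [kerDiff, Measure.toSignedMeasure_apply_measurable hs]

lemma tvVec_kerDiff_le {d : ℕ} {B : ℝ≥0∞} (κ : Fin d × Bool → ProbabilityTheory.Kernel ℝ (Euc d))
    [∀ j t, IsFiniteMeasure (κ j t)] (hκ : ∀ j t, κ j t univ ≤ B) (t : ℝ) :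
    tvVec (kerDiff κ t) ≤ d * (B + B) := by
  refine iSup_le fun n => iSup_le fun A => iSup_le fun hA => iSup_le fun hd => ?_
  have h1 : ∀ k, ENNReal.ofReal (Real.sqrt (∑ i, kerDiff κ t i (A k) ^ 2)) ≤
      ∑ i, (κ (i, true) t (A k) + κ (i, false) t (A k)) := by
    intro k
    have : Real.sqrt (∑ i, kerDiff κ t i (A k) ^ 2) ≤
        ∑ i, ((κ (i, true) t).real (A k) + (κ (i, false) t).real (A k)) := by
      have p : ∀ i, |kerDiff κ t i (A k)| ≤ (κ (i, true) t).real (A k) + (κ (i, false) t).real (A k) := by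
        intro i
        rw [kerDiff_apply κ t i _ (hA k), abs_le]
        have a : 0 ≤ (κ (i, true) t).real (A k) := measureReal_nonneg
        have b : 0 ≤ (κ (i, false) t).real (A k) := measureReal_nonneg
        constructor <;> linarith
      refine Real.sqrt_le_iff.2 ⟨Finset.sum_nonneg fun i _ => (abs_nonneg _).trans (p i), ?_⟩
      refine le_trans ?_ (Finset.sum_sq_le_sq_sum_of_nonneg fun i _ => (abs_nonneg _).trans (p i))
      refine Finset.sum_le_sum fun i _ => ?_
      rw [← sq_abs]
      exact pow_le_pow_left₀ (abs_nonneg _) (p i) 2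
    refine (ENNReal.ofReal_le_ofReal this).trans ?_
    rw [ENNReal.ofReal_sum_of_nonneg fun i _ => add_nonneg measureReal_nonneg measureReal_nonneg]
    refine Finset.sum_le_sum fun i _ => ?_
    rw [ENNReal.ofReal_add measureReal_nonneg measureReal_nonneg, ofReal_measureReal, ofReal_measureReal]
  have h2 : ∀ j, ∑ k, κ j t (A k) ≤ B := by
    intro j
    rw [← tsum_fintype (L := .unconditional _), ← measure_iUnion hd hA]
    exact (measure_mono (subset_univ _)).trans (hκ j t)
  calc ∑ k, ENNReal.ofReal (Real.sqrt (∑ i, kerDiff κ t i (A k) ^ 2))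
      ≤ ∑ k, ∑ i, (κ (i, true) t (A k) + κ (i, false) t (A k)) := Finset.sum_le_sum fun k _ => h1 k
    _ = ∑ i, (∑ k, κ (i, true) t (A k) + ∑ k, κ (i, false) t (A k)) := by
        rw [Finset.sum_comm]; simp_rw [Finset.sum_add_distrib]
    _ ≤ ∑ i : Fin d, (B + B) := Finset.sum_le_sum fun i _ => add_le_add (h2 _) (h2 _)
    _ = d * (B + B) := by simp [mul_add]

lemma kernel_integrable {d : ℕ} {Ω : Set (Euc d)} (hΩ : IsCompact Ω) {B : ℝ≥0∞} (hB : B ≠ ⊤)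
    (κ : ProbabilityTheory.Kernel ℝ (Euc d)) (h1 : ∀ t, κ t univ ≤ B) (h2 : ∀ t, κ t Ωᶜ = 0)
    {φ : ℝ × Euc d → ℝ} (hφ : Continuous φ) :
    IntegrableOn (fun t => ∫ x, φ (t, x) ∂(κ t)) (Icc 0 1) := by
  have : ProbabilityTheory.IsFiniteKernel κ := ⟨B, hB.lt_top, h1⟩
  obtain ⟨C, hC⟩ := ((isCompact_Icc (a := (0:ℝ)) (b := 1)).prod hΩ |>.image hφ).isBounded.exists_norm_le
  refine Measure.integrableOn_of_bounded (M := |C| * B.toReal) (by simp)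
    (hφ.measurable.stronglyMeasurable.integral_kernel_prod_right' (κ := κ)).aestronglyMeasurable ?_
  filter_upwards [ae_restrict_mem measurableSet_Icc] with t ht
  have hae : ∀ᵐ x ∂(κ t), x ∈ Ω := by rw [ae_iff]; exact h2 t
  refine (norm_integral_le_of_norm_le_const (C := |C|) ?_).trans ?_
  · filter_upwards [hae] with x hx
    exact (hC _ ⟨(t, x), ⟨ht, hx⟩, rfl⟩).trans (le_abs_self C)
  · exact mul_le_mul_of_nonneg_left (ENNReal.toReal_mono hB (h1 t)) (abs_nonneg _)

lemma sInt_kerDiff {d : ℕ} {Ω : Set (Euc d)} (hΩ : IsCompact Ω)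
    (κ : Fin d × Bool → ProbabilityTheory.Kernel ℝ (Euc d))
    [∀ j t, IsFiniteMeasure (κ j t)] (h2 : ∀ j t, κ j t Ωᶜ = 0) (t : ℝ) (i : Fin d) {g : Euc d → ℝ}
    (hg : Continuous g) :
    sInt g (kerDiff κ t i) = ∫ x, g x ∂(κ (i, true) t) - ∫ x, g x ∂(κ (i, false) t) :=
  sInt_eq_sub (kerDiff_apply κ t i) (integrable_of_supp hΩ (h2 _ t) hg)
    (integrable_of_supp hΩ (h2 _ t) hg)

/-- The positive and negative parts of the flux of a bounded-velocity curve, as kernels. -/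
lemma BCurve.exists_kernel {d : ℕ} {Ω : Set (Euc d)} (hΩ : IsCompact Ω) {M : ℝ}
    {μ : ℝ → Measure (Euc d)} {w : ℝ → Euc d → Euc d} (h : BCurve Ω M μ w) :
    ∃ κ : Fin d × Bool → ProbabilityTheory.Kernel ℝ (Euc d),
      (∀ j t, κ j t univ ≤ ENNReal.ofReal M) ∧ (∀ j t, κ j t Ωᶜ = 0) ∧
      ∀ i, ∀ t ∈ Icc (0:ℝ) 1, ∀ g : Euc d → ℝ, Continuous g →
        Integrable (fun x => w t x i * g x) (μ t) ∧
        ∫ x, w t x i * g x ∂(μ t) = ∫ x, g x ∂(κ (i, true) t) - ∫ x, g x ∂(κ (i, false) t) := by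
  have := h.pair.prob
  let R : ProbabilityTheory.Kernel ℝ (Euc d) := ⟨μ, h.pair.meas⟩
  have Rf : ProbabilityTheory.IsFiniteKernel R := ⟨1, by simp, fun t => by
    show μ t univ ≤ 1; simp⟩
  have coordm : ∀ i, Measurable fun z : ℝ × Euc d => w z.1 z.2 i := by
    intro i
    have a : Measurable fun y : Euc d => y i := by fun_prop
    exact a.comp (f := Function.uncurry w) h.pair.vmeas
  let sg : Bool → ℝ := fun b => if b then 1 else -1
  let f : Fin d × Bool → ℝ → Euc d → ℝ≥0∞ := fun j t x =>
    (Icc (0:ℝ) 1).indicator (fun t => ENNReal.ofReal (sg j.2 * w t x j.1)) t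
  have fm : ∀ j, Measurable (Function.uncurry (f j)) := by
    intro j
    have m : Measurable fun z : ℝ × Euc d => ENNReal.ofReal (sg j.2 * w z.1 z.2 j.1) := by
      exact ((coordm j.1).const_mul _).ennreal_ofReal
    have e : Function.uncurry (f j) = (Prod.fst ⁻¹' Icc (0:ℝ) 1).indicator
        fun z : ℝ × Euc d => ENNReal.ofReal (sg j.2 * w z.1 z.2 j.1) := by
      funext z; simp [f, Function.uncurry, indicator]
    rw [e]
    exact m.indicator (measurable_fst measurableSet_Icc)
  have fb : ∀ j t x, f j t x ≤ (Icc (0:ℝ) 1).indicator (fun t => ‖w t x‖ₑ) t := by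
    intro j t x
    refine indicator_le_indicator ?_
    rw [← ofReal_norm]
    refine ENNReal.ofReal_le_ofReal ?_
    have h1 : |w t x j.1| ≤ ‖w t x‖ := PiLp.norm_apply_le (w t x) j.1
    refine le_trans ?_ h1
    simp only [sg]
    split_ifs
    · simpa using le_abs_self _
    · simpa using neg_le_abs _
  refine ⟨fun j => R.withDensity (f j), fun j t => ?_, fun j t => ?_, fun i t ht g hg => ?_⟩
  · rw [ProbabilityTheory.Kernel.withDensity_apply _ (fm j), withDensity_apply _ MeasurableSet.univ,
      Measure.restrict_univ]
    show ∫⁻ x, f j t x ∂(μ t) ≤ _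
    refine (lintegral_mono (fb j t)).trans ?_
    by_cases ht : t ∈ Icc (0:ℝ) 1
    · simpa [indicator_of_mem ht] using h.bound_all t ht
    · simp [indicator_of_notMem ht]
  · rw [ProbabilityTheory.Kernel.withDensity_apply _ (fm j)]
    exact withDensity_absolutelyContinuous _ _ (h.pair.supp t)
  · obtain ⟨i1, -⟩ := h.pair.integrable_norm (h.bound_all t ht)
    have hwm : Measurable fun x => w t x i := (coordm i).comp measurable_prodMk_left
    have i2 : Integrable (fun x => w t x i) (μ t) :=
      i1.mono hwm.aestronglyMeasurable (ae_of_all _ fun x => PiLp.norm_apply_le (w t x) i)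
    obtain ⟨C, hC⟩ := (hΩ.image hg).isBounded.exists_norm_le
    have hae : ∀ᵐ x ∂(μ t), ‖g x‖ ≤ C := by
      have : ∀ᵐ x ∂(μ t), x ∈ Ω := by rw [ae_iff]; exact h.pair.supp t
      filter_upwards [this] with x hx using hC _ ⟨x, hx, rfl⟩
    have gm := hg.measurable.aestronglyMeasurable (μ := μ t)
    refine ⟨i2.mul_bdd gm hae, ?_⟩
    have e : ∀ b : Bool, ∫ x, g x ∂((R.withDensity (f (i, b))) t) =
        ∫ x, max (sg b * w t x i) 0 * g x ∂(μ t) := by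
      intro b
      rw [ProbabilityTheory.Kernel.withDensity_apply _ (fm _),
        integral_withDensity_eq_integral_toReal_smul (fm (i, b)).of_uncurry_left]
      · refine integral_congr_ae (ae_of_all _ fun x => ?_)
        simp [f, indicator_of_mem ht, ENNReal.toReal_ofReal']
      · exact ae_of_all _ fun x => by simp [f, indicator_of_mem ht]
    have ib : ∀ b : Bool, Integrable (fun x => max (sg b * w t x i) 0 * g x) (μ t) := fun b =>
      (i2.const_mul (sg b)).pos_part.mul_bdd gm hae
    rw [e, e, ← integral_sub (ib true) (ib false)]
    refine integral_congr_ae (ae_of_all _ fun x => ?_)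
    simp only [sg]
    rcases le_total 0 (w t x i) with hx | hx <;> simp [hx]

/-! ### Passage to the limit -/

lemma curve_integrable {d : ℕ} {Ω : Set (Euc d)} (hΩ : IsCompact Ω) {μ : ℝ → Measure (Euc d)}
    (hm : Measurable μ) [∀ t, IsProbabilityMeasure (μ t)] (hs : ∀ t, μ t Ωᶜ = 0)
    {φ : ℝ × Euc d → ℝ} (hφ : Continuous φ) :
    IntegrableOn (fun t => ∫ x, φ (t, x) ∂(μ t)) (Icc 0 1) :=
  kernel_integrable hΩ (B := 1) (by simp) ⟨μ, hm⟩ (fun t => by show μ t univ ≤ 1; simp) hs hφ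

/-- The continuity equation of a bounded-velocity curve, with the time and space terms separated. -/
lemma BCurve.cont_split {d : ℕ} {Ω : Set (Euc d)} (hΩ : IsCompact Ω) {M : ℝ}
    {μ : ℝ → Measure (Euc d)} {w : ℝ → Euc d → Euc d} (h : BCurve Ω M μ w)
    {φ : ℝ × Euc d → ℝ} (hφ : ContDiff ℝ 1 φ) (h0 : ∀ x, φ (0, x) = 0) (h1 : ∀ x, φ (1, x) = 0) :
    (∫ t in Icc (0:ℝ) 1, ∫ x, fderiv ℝ φ (t, x) ((1:ℝ), (0 : Euc d)) ∂(μ t)) +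
      ∑ i, ∫ t in Icc (0:ℝ) 1, ∫ x, w t x i *
        fderiv ℝ φ (t, x) ((0:ℝ), EuclideanSpace.single i 1) ∂(μ t) = 0 := by
  have := h.pair.prob
  obtain ⟨κ, κ1, κ2, κ3⟩ := h.exists_kernel hΩ
  have dc : Continuous fun z : ℝ × Euc d => fderiv ℝ φ z := hφ.continuous_fderiv one_ne_zero
  have c0 : Continuous fun z : ℝ × Euc d => fderiv ℝ φ z ((1:ℝ), (0 : Euc d)) := by fun_prop
  have ci : ∀ i, Continuous fun z : ℝ × Euc d => fderiv ℝ φ z ((0:ℝ), EuclideanSpace.single i (1:ℝ)) :=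
    fun i => by fun_prop
  have ci' : ∀ i t, Continuous fun x : Euc d => fderiv ℝ φ (t, x) ((0:ℝ), EuclideanSpace.single i (1:ℝ)) :=
    fun i t => by fun_prop
  have i0 := curve_integrable hΩ h.pair.meas h.pair.supp c0
  have ii : ∀ i, IntegrableOn (fun t => ∫ x, w t x i *
        fderiv ℝ φ (t, x) ((0:ℝ), EuclideanSpace.single i 1) ∂(μ t)) (Icc 0 1) := by
    intro i
    have a := (kernel_integrable hΩ ENNReal.ofReal_ne_top (κ (i, true)) (κ1 _) (κ2 _) (ci i)).sub
      (kernel_integrable hΩ ENNReal.ofReal_ne_top (κ (i, false)) (κ1 _) (κ2 _) (ci i))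
    refine a.congr_fun (fun t ht => ?_) measurableSet_Icc
    exact ((κ3 i t ht _ (ci' i t)).2).symm
  refine Eq.trans ?_ (h.cont φ hφ h0 h1)
  rw [← integral_finsetSum _ fun i _ => ii i, ← integral_add i0 (integrable_finsetSum _ fun i _ => ii i)]
  refine setIntegral_congr_fun measurableSet_Icc fun t ht => ?_
  have c0' : Continuous fun x : Euc d => fderiv ℝ φ (t, x) ((1:ℝ), (0 : Euc d)) := by fun_prop
  have j0 := integrable_of_supp hΩ (h.pair.supp t) c0'
  have ji : ∀ i, Integrable (fun x => w t x i *
      fderiv ℝ φ (t, x) ((0:ℝ), EuclideanSpace.single i 1)) (μ t) := fun i => (κ3 i t ht _ (ci' i t)).1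
  simp only
  rw [← integral_finsetSum _ fun i _ => ji i, ← integral_add j0 (integrable_finsetSum _ fun i _ => ji i)]
  refine integral_congr_ae (ae_of_all _ fun x => ?_)
  have hv : ((1:ℝ), w t x) = ((1:ℝ), (0:Euc d)) + ∑ i, w t x i • ((0:ℝ), (EuclideanSpace.single i (1:ℝ) : Euc d)) := by
    have : w t x = ∑ i, w t x i • (EuclideanSpace.single i (1:ℝ) : Euc d) := by
      ext j
      simp [Finset.sum_apply, Pi.single_apply]
    refine Prod.ext ?_ ?_
    · simp [Prod.fst_sum]
    · simpa [Prod.snd_sum] using this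
  simp only
  rw [hv, map_add, map_sum]
  simp only [map_smul, smul_eq_mul]

/-- Sequential compactness of the curves without their fluxes, from `ascoli`. -/
lemma exists_curve_limit {d : ℕ} {Ω : Set (Euc d)} (hΩ : IsCompact Ω) {M : ℝ} (hM : 0 ≤ M)
    {μ : ℕ → ℝ → Measure (Euc d)} {w : ℕ → ℝ → Euc d → Euc d} (h : ∀ n, BCurve Ω M (μ n) (w n)) :
    ∃ k : ℕ → ℕ, StrictMono k ∧ ∃ ρ : ℝ → Measure (Euc d),
      (∀ t, IsProbabilityMeasure (ρ t)) ∧ (∀ t, ρ t Ωᶜ = 0) ∧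
      (∀ g : Euc d → ℝ, Continuous g → Continuous fun t => ∫ x, g x ∂(ρ t)) ∧
      ∀ φ : ℝ × Euc d → ℝ, Continuous φ →
        Tendsto (fun n => ∫ t in Icc (0:ℝ) 1, ∫ x, φ (t, x) ∂(μ (k n) t)) atTop
          (𝓝 (∫ t in Icc (0:ℝ) 1, ∫ x, φ (t, x) ∂(ρ t))) := by
  have pr := fun n => (h n).pair.prob
  let p : ℝ → ℝ := fun t => projIcc (0:ℝ) 1 zero_le_one t
  have hp : ∀ t, p t ∈ Icc (0:ℝ) 1 := fun t => (projIcc (0:ℝ) 1 zero_le_one t).2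
  have hpe : ∀ t ∈ Icc (0:ℝ) 1, p t = t := fun t ht => by simp [p, projIcc_of_mem _ ht]
  let P : ℕ → ℝ → ProbabilityMeasure (Euc d) := fun n t => ⟨μ n (p t), pr n _⟩
  obtain ⟨k, hk, R, R1, R2, R3⟩ := ascoli hΩ P (fun n t => (h n).pair.supp _) (by
    intro g hg
    have hc : Continuous fun x : Euc d => fderiv ℝ g x := hg.continuous_fderiv one_ne_zero
    obtain ⟨K, hK⟩ := (hΩ.image hc).isBounded.exists_norm_le
    refine ⟨|K| * M, by positivity, fun n s t => ?_⟩
    refine ((h n).lipschitz hΩ hg (abs_nonneg K) (fun x hx => (hK _ ⟨x, hx, rfl⟩).trans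
      (le_abs_self K)) (hp s) (hp t)).trans ?_
    exact mul_le_mul_of_nonneg_left (abs_projIcc_sub_projIcc _) (by positivity))
  refine ⟨k, hk, fun t => R t, fun t => inferInstance, R1, R3, fun φ hφ => ?_⟩
  obtain ⟨C, hC⟩ := ((isCompact_Icc (a := (0:ℝ)) (b := 1)).prod hΩ |>.image hφ).isBounded.exists_norm_le
  refine tendsto_integral_of_dominated_convergence (fun _ => |C|) (fun n => ?_) (integrable_const _)
    (fun n => ?_) ?_
  · have := pr (k n)
    exact (sm_integral (h (k n)).pair.meas hφ.measurable).aestronglyMeasurable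
  · filter_upwards [ae_restrict_mem measurableSet_Icc] with t ht
    have hae : ∀ᵐ x ∂(μ (k n) t), x ∈ Ω := by rw [ae_iff]; exact (h (k n)).pair.supp t
    have := pr (k n) t
    refine (norm_integral_le_of_norm_le_const (C := |C|) ?_).trans (by simp)
    filter_upwards [hae] with x hx
    exact (hC _ ⟨(t, x), ⟨ht, hx⟩, rfl⟩).trans (le_abs_self C)
  · filter_upwards [ae_restrict_mem measurableSet_Icc] with t ht
    have := R2 (fun x => φ (t, x)) (by fun_prop) t
    simpa [P, hpe t ht] using this

/-- Sequential compactness of bounded-velocity curves together with their fluxes; the limit pair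
belongs to `𝒟`. -/
lemma exists_limit {d : ℕ} {Ω : Set (Euc d)} (hΩ : IsCompact Ω) {M : ℝ} (hM : 0 < M)
    {μ : ℕ → ℝ → Measure (Euc d)} {w : ℕ → ℝ → Euc d → Euc d} (h : ∀ n, BCurve Ω M (μ n) (w n)) :
    ∃ k : ℕ → ℕ, StrictMono k ∧ ∃ (ρ : ℝ → Measure (Euc d)) (q : ℝ → Fin d → SignedMeasure (Euc d)),
      MemD Ω ρ q ∧
      (∀ φ : ℝ × Euc d → ℝ, Continuous φ →
        Tendsto (fun n => ∫ t in Icc (0:ℝ) 1, ∫ x, φ (t, x) ∂(μ (k n) t)) atTop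
          (𝓝 (∫ t in Icc (0:ℝ) 1, ∫ x, φ (t, x) ∂(ρ t)))) ∧
      ∀ i, ∀ φ : ℝ × Euc d → ℝ, Continuous φ →
        Tendsto (fun n => ∫ t in Icc (0:ℝ) 1, ∫ x, w (k n) t x i * φ (t, x) ∂(μ (k n) t)) atTop
          (𝓝 (∫ t in Icc (0:ℝ) 1, sInt (fun x => φ (t, x)) (q t i))) := by
  obtain ⟨k₁, hk₁, ρ, ρp, ρs, ρc, ρl⟩ := exists_curve_limit hΩ hM.le h
  choose κ κ1 κ2 κ3 using fun n => (h (k₁ n)).exists_kernel hΩ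
  have B0 : ENNReal.ofReal M ≠ 0 := (ENNReal.ofReal_pos.2 hM).ne'
  have BT : ENNReal.ofReal M ≠ ⊤ := ENNReal.ofReal_ne_top
  obtain ⟨k₂, hk₂, K, K1, K2, K3⟩ := kernel_compact hΩ B0 BT κ κ1 κ2
  have Kf : ∀ j t, IsFiniteMeasure (K j t) := fun j t => ⟨(K1 j t).trans_lt BT.lt_top⟩
  have lim1 : ∀ φ : ℝ × Euc d → ℝ, Continuous φ →
        Tendsto (fun n => ∫ t in Icc (0:ℝ) 1, ∫ x, φ (t, x) ∂(μ (k₁ (k₂ n)) t)) atTop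
          (𝓝 (∫ t in Icc (0:ℝ) 1, ∫ x, φ (t, x) ∂(ρ t))) := fun φ hφ =>
    (ρl φ hφ).comp hk₂.tendsto_atTop
  have qi : ∀ i, ∀ φ : ℝ × Euc d → ℝ, Continuous φ →
      IntegrableOn (fun t => sInt (fun x => φ (t, x)) (kerDiff K t i)) (Icc 0 1) ∧
      ∫ t in Icc (0:ℝ) 1, sInt (fun x => φ (t, x)) (kerDiff K t i) =
        (∫ t in Icc (0:ℝ) 1, ∫ x, φ (t, x) ∂(K (i, true) t)) -
          ∫ t in Icc (0:ℝ) 1, ∫ x, φ (t, x) ∂(K (i, false) t) := by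
    intro i φ hφ
    have φt : ∀ t, Continuous fun x => φ (t, x) := fun t => by fun_prop
    simp_rw [fun t => sInt_kerDiff hΩ K K2 t i (φt t)]
    have a := kernel_integrable hΩ BT (K (i, true)) (K1 _) (K2 _) hφ
    have b := kernel_integrable hΩ BT (K (i, false)) (K1 _) (K2 _) hφ
    exact ⟨a.sub b, integral_sub a b⟩
  have lim2 : ∀ i, ∀ φ : ℝ × Euc d → ℝ, Continuous φ →
        Tendsto (fun n => ∫ t in Icc (0:ℝ) 1, ∫ x, w (k₁ (k₂ n)) t x i * φ (t, x) ∂(μ (k₁ (k₂ n)) t)) atTop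
          (𝓝 (∫ t in Icc (0:ℝ) 1, sInt (fun x => φ (t, x)) (kerDiff K t i))) := by
    intro i φ hφ
    have φt : ∀ t, Continuous fun x => φ (t, x) := fun t => by fun_prop
    rw [(qi i φ hφ).2]
    refine ((K3 (i, true) φ hφ).sub (K3 (i, false) φ hφ)).congr fun n => ?_
    rw [← integral_sub (kernel_integrable hΩ BT (κ (k₂ n) (i, true)) (κ1 _ _) (κ2 _ _) hφ)
      (kernel_integrable hΩ BT (κ (k₂ n) (i, false)) (κ1 _ _) (κ2 _ _) hφ)]
    exact setIntegral_congr_fun measurableSet_Icc fun t ht => ((κ3 (k₂ n) i t ht _ (φt t)).2).symm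
  refine ⟨fun n => k₁ (k₂ n), hk₁.comp hk₂, ρ, kerDiff K, ⟨fun t _ => ⟨ρp t, ρs t⟩,
    fun f hf => (ρc f hf).continuousOn, fun t _ i => ?_, fun i s hs => ?_, ?_, ?_⟩, lim1, lim2⟩
  · obtain ⟨l1, l2⟩ := jordan_le (kerDiff_apply K t i)
    exact ⟨le_antisymm ((l1 _).trans (K2 _ t).le) zero_le, le_antisymm ((l2 _).trans (K2 _ t).le) zero_le⟩
  · simp_rw [fun t => kerDiff_apply K t i s hs]
    exact ((K _).measurable_coe hs).ennreal_toReal.sub ((K _).measurable_coe hs).ennreal_toReal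
  · refine (lintegral_mono fun t => tvVec_kerDiff_le K K1 t).trans_lt ?_
    rw [lintegral_const]
    simp only [MeasurableSet.univ, Measure.restrict_apply, univ_inter, Real.volume_Icc]
    exact ENNReal.mul_lt_top (ENNReal.mul_lt_top (ENNReal.natCast_lt_top d)
      (ENNReal.add_lt_top.2 ⟨BT.lt_top, BT.lt_top⟩)) ENNReal.ofReal_lt_top
  · intro φ hφ h0 h1
    have dc : Continuous fun z : ℝ × Euc d => fderiv ℝ φ z := hφ.continuous_fderiv one_ne_zero
    have c0 : Continuous fun z : ℝ × Euc d => fderiv ℝ φ z ((1:ℝ), (0 : Euc d)) := by fun_prop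
    have ci : ∀ i, Continuous fun z : ℝ × Euc d => fderiv ℝ φ z ((0:ℝ), EuclideanSpace.single i (1:ℝ)) :=
      fun i => by fun_prop
    have L := (lim1 _ c0).add (tendsto_finsetSum Finset.univ fun i _ => lim2 i _ (ci i))
    have L' := L.congr fun n => (h (k₁ (k₂ n))).cont_split hΩ hφ h0 h1
    have e := tendsto_nhds_unique L' tendsto_const_nhds
    rw [intervalIntegral.integral_of_le zero_le_one, ← integral_Icc_eq_integral_Ioc]
    rw [integral_add (curve_integrable hΩ (measurable_of_weak ρc) ρs c0)
      (integrable_finsetSum _ fun i _ => (qi i _ (ci i)).1), integral_finsetSum _ fun i _ => (qi i _ (ci i)).1]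
    exact e

/-- for `Ω ⊂ ℝ^d` compact and `0 < α < 1`, a sequence `(ρⁿ,qⁿ)` in `𝒟` with
`ℱ(ρⁿ,qⁿ) ≤ C` is, up to a time reparametrization `(ρ_{φₙ(t)}, φₙ'(t) q_{φₙ(t)})` of each
pair, `τ`-compact: a subsequence of the reparametrized pairs `τ`-converges to some
`(ρ,q) ∈ 𝒟`. -/
theorem stmt_17 {d : ℕ} (hd : 0 < d) (α : ℝ) (hα : 0 < α) (hα' : α < 1)
    (Ω : Set (Euc d)) (hΩ : IsCompact Ω)
    (C : ℝ≥0∞) (hC : C < ⊤)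
    (ρn : ℕ → ℝ → Measure (Euc d)) (qn : ℕ → ℝ → Fin d → SignedMeasure (Euc d))
    (hn : ∀ n, MemD Ω (ρn n) (qn n))
    (hbd : ∀ n, BigF α (ρn n) (qn n) ≤ C) :
    ∃ (φ : ℕ → ℝ → ℝ) (ψ : ℕ → ℝ → ℝ),
      (∀ n, MonotoneOn (φ n) (Icc 0 1) ∧ φ n 0 = 0 ∧ φ n 1 = 1 ∧
        MapsTo (φ n) (Icc 0 1) (Icc 0 1) ∧
        ∀ t ∈ Icc (0:ℝ) 1, HasDerivAt (φ n) (ψ n t) t ∧ 0 ≤ ψ n t) ∧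
      ∃ k : ℕ → ℕ, StrictMono k ∧
      ∃ (ρ : ℝ → Measure (Euc d)) (q : ℝ → Fin d → SignedMeasure (Euc d)),
        MemD Ω ρ q ∧
        TauConv α (fun j t => ρn (k j) (φ (k j) t))
          (fun j t i => ψ (k j) t • qn (k j) (φ (k j) t) i) ρ q := by
  choose φ μ w φm φ0 φ1 φI φd hB hμ hR using fun n => exists_reparam hα hα' hΩ hC (hn n) (hbd n)
  have hM : 0 < C.toReal + 2 := by positivity
  obtain ⟨k, hk, ρ, q, hD, l1, l2⟩ := exists_limit hΩ hM hB
  refine ⟨φ, fun n => deriv (φ n), fun n => ⟨(φm n).monotoneOn _, φ0 n, φ1 n, fun t _ => φI n t, φd n⟩,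
    k, hk, ρ, q, hD, fun f hf => ?_, fun i f hf => ?_, ENNReal.ofReal (C.toReal + 2),
    ENNReal.ofReal_lt_top, fun n t ht => (hR (k n) t ht).2⟩
  · have := l1 f hf
    simp only [intervalIntegral.integral_of_le zero_le_one, ← integral_Icc_eq_integral_Ioc, ← hμ]
    exact this
  · simp only [intervalIntegral.integral_of_le zero_le_one, ← integral_Icc_eq_integral_Ioc]
    refine (l2 i f hf).congr fun n => setIntegral_congr_fun measurableSet_Icc fun t ht => ?_
    obtain ⟨κ, -, -, κ3⟩ := (hB (k n)).exists_kernel hΩ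
    have ft : Continuous fun x => f (t, x) := by fun_prop
    have wm : Measurable fun x => w (k n) t x i := by
      have a : Measurable fun y : Euc d => y i := by fun_prop
      exact a.comp (hB (k n)).pair.vmeas.of_uncurry_left
    exact (sInt_eq_integral wm ((hR (k n) t ht).1.1 i) ((hR (k n) t ht).1.2 i)
      (κ3 i t ht _ ft).1).symm
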